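/- There exist an integer q₁ ≥ 2 and a C^∞ diffeomorphism T of the torus 𝕋² preserving the Haar–Lebesgue probability measure λ such that T is weakly mixing with respect to λ and the upper topological slow entropy of T with respect to the intermediate scaling family a^{int2,8}_m(t) (with base q₁) equals 1. -/

import Mathlib

open MeasureTheory Filter Set
open scoped Topology ENNReal NNReal

noncomputable section

/-- The Bowen metric `d_n^T(x,y) = max_{0 ≤ i ≤ n-1} d(T^i x, T^i y)`. -/
def bowenDist {X : Type*} [PseudoMetricSpace X] (T : X → X) (n : ℕ) (x y : X) : ℝ :=
  (((Finset.range n).sup fun i => nndist (T^[i] x) (T^[i] y)) : ℝ≥0)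

/-- `N_{d_n^T}(ε)`: the minimal number of `(ε,n)`-Bowen balls of `T` needed to cover the
whole space. -/
def bowenCoverNum {X : Type*} [PseudoMetricSpace X] (T : X → X) (n : ℕ) (ε : ℝ) : ℕ :=
  sInf {N : ℕ | ∃ F : Finset X, F.card = N ∧ ∀ y : X, ∃ x ∈ F, bowenDist T n x y < ε}

/-- `N(ε)`: the supremum (`0` if the set is empty, by the `Real.sSup` convention) of all
`t > 0` such that `limsup_n N_{d_n^T}(ε) / a_n(t) > 0`. -/
def topSlowEntFun {X : Type*} [PseudoMetricSpace X] (T : X → X) (a : ℕ → ℝ → ℝ) (ε : ℝ) : ℝ :=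
  sSup {t : ℝ | 0 < t ∧
    0 < Filter.atTop.limsup fun n => (bowenCoverNum T n ε : ℝ≥0∞) / ENNReal.ofReal (a n t)}

/-- The upper topological slow entropy of `T` with respect to the scaling family `a`
equals `E`, i.e. `N(ε) → E` as `ε → 0⁺`. -/
def HasUpperTopSlowEntropy {X : Type*} [PseudoMetricSpace X] (T : X → X)
    (a : ℕ → ℝ → ℝ) (E : ℝ) : Prop :=
  Filter.Tendsto (topSlowEntFun T a) (𝓝[>] (0 : ℝ)) (𝓝 E)

/-- The circle `𝕋¹ = ℝ/ℤ` with its quotient metric and Haar–Lebesgue probability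
measure `volume`. -/
abbrev Torus1 : Type := AddCircle (1 : ℝ)

/-- The 2-torus `𝕋² = ℝ²/ℤ²`, with its quotient (flat) metric, its Borel σ-algebra and
its Haar–Lebesgue probability measure `volume`. -/
abbrev Torus2 : Type := AddCircle (1 : ℝ) × AddCircle (1 : ℝ)

/-- Canonical projection `ℝ² → 𝕋²`. -/
def torusProj : ℝ × ℝ → Torus2 := fun p => ((p.1 : Torus1), (p.2 : Torus1))

/-- `F : ℝ² → ℝ²` is a lift of `T : 𝕋² → 𝕋²`. -/
def IsLiftOf (F : ℝ × ℝ → ℝ × ℝ) (T : Torus2 → Torus2) : Prop :=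
  ∀ p, torusProj (F p) = T (torusProj p)

/-- `T` is a `C^k` diffeomorphism of the torus: it is a bijection and both `T` and `T⁻¹`
admit `C^k` lifts to the universal cover `ℝ²`. -/
def IsCkTorusDiffeo (k : ℕ∞) (T : Torus2 → Torus2) : Prop :=
  Function.Bijective T ∧
  (∃ F : ℝ × ℝ → ℝ × ℝ, ContDiff ℝ k F ∧ IsLiftOf F T) ∧
  (∃ G : ℝ × ℝ → ℝ × ℝ, ContDiff ℝ k G ∧ IsLiftOf G (Function.invFun T))

/-- `T` is weakly mixing w.r.t. the measure `μ`: `T × T` is ergodic for `μ × μ`. -/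
def WeaklyMixing {X : Type*} [MeasurableSpace X] (T : X → X) (μ : Measure X) : Prop :=
  Ergodic (fun p : X × X => (T p.1, T p.2)) (μ.prod μ)

/-- `T` is uniquely ergodic with the Haar–Lebesgue measure `volume` as its unique
invariant Borel probability measure. -/
def UniquelyErgodicWithVolume (T : Torus2 → Torus2) : Prop :=
  MeasurePreserving T volume volume ∧
  ∀ μ : Measure Torus2, IsProbabilityMeasure μ → MeasurePreserving T μ μ → μ = volume

/-- `T` (preserving the Haar measure `volume` on `𝕋²`) is measure-theoretically isomorphic
to the rotation of the circle `𝕋¹ = ℝ/ℤ` by some irrational number `α`. -/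
def IsoToIrrationalRotation (T : Torus2 → Torus2) : Prop :=
  ∃ α : ℝ, Irrational α ∧
    ∃ (A : Set Torus2) (B : Set Torus1) (ψ : Torus2 → Torus1) (φ : Torus1 → Torus2),
      MeasurableSet A ∧ MeasurableSet B ∧
      volume Aᶜ = 0 ∧ volume Bᶜ = 0 ∧
      Set.MapsTo T A A ∧ Set.MapsTo (fun y : Torus1 => y + (α : Torus1)) B B ∧
      Measurable ψ ∧ Measurable φ ∧
      Set.MapsTo ψ A B ∧ Set.MapsTo φ B A ∧
      (∀ x ∈ A, φ (ψ x) = x) ∧ (∀ y ∈ B, ψ (φ y) = y) ∧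
      Measure.map ψ volume = volume ∧
      (∀ x ∈ A, ψ (T x) = ψ x + (α : Torus1))

/-- A finite measurable partition of `X`. -/
structure FinMeasPartition (X : Type*) [MeasurableSpace X] where
  card : ℕ
  piece : Fin card → Set X
  measurable : ∀ i, MeasurableSet (piece i)
  disjoint : Pairwise fun i j => Disjoint (piece i) (piece j)
  cover : (⋃ i, piece i) = Set.univ

open Classical in
/-- The normalized Hamming distance between the length-`n` `P`-codings of the `T`-orbits
of `x` and `y` (the codings differ at time `k` iff `T^k x` and `T^k y` lie in different
pieces of `P`). -/
def codeHammingDist {X : Type*} [MeasurableSpace X] (T : X → X) (P : FinMeasPartition X)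
    (n : ℕ) (x y : X) : ℝ :=
  (((Finset.range n).filter fun k =>
      ¬ ∃ i, T^[k] x ∈ P.piece i ∧ T^[k] y ∈ P.piece i).card : ℝ) / n

/-- `S^H_P(T,n,ε)`: the minimal number of `(ε,n)`-Hamming balls whose union has
`μ`-measure greater than `1 - ε`. -/
def hammingCoverNum {X : Type*} [MeasurableSpace X] (μ : Measure X) (T : X → X)
    (P : FinMeasPartition X) (n : ℕ) (ε : ℝ) : ℕ :=
  sInf {N : ℕ | ∃ F : Finset X, F.card = N ∧
    ENNReal.ofReal (1 - ε) < μ (⋃ x ∈ F, {y | codeHammingDist T P n x y < ε})}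

/-- For a fixed partition `P` and `ε > 0`: the supremum (with the `Real.sSup` convention,
`0` if the set is empty) of all `t > 0` with `limsup_n S^H_P(T,n,ε)/a_n(t) > 0`. -/
def measSlowEntFun {X : Type*} [MeasurableSpace X] (μ : Measure X) (T : X → X)
    (a : ℕ → ℝ → ℝ) (P : FinMeasPartition X) (ε : ℝ) : ℝ :=
  sSup {t : ℝ | 0 < t ∧
    0 < Filter.atTop.limsup fun n =>
      (hammingCoverNum μ T P n ε : ℝ≥0∞) / ENNReal.ofReal (a n t)}

/-- The upper measure-theoretic slow entropy of `(T,μ)` w.r.t. the scaling family `a`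
equals `E`: for every finite measurable partition the limit as `ε → 0⁺` exists, and the
least upper bound over all partitions of these limits is `E`. -/
def HasUpperMeasSlowEntropy {X : Type*} [MeasurableSpace X] (μ : Measure X) (T : X → X)
    (a : ℕ → ℝ → ℝ) (E : ℝ) : Prop :=
  (∀ P : FinMeasPartition X, ∃ e : ℝ,
      Filter.Tendsto (measSlowEntFun μ T a P) (𝓝[>] (0 : ℝ)) (𝓝 e)) ∧
  IsLUB {e : ℝ | ∃ P : FinMeasPartition X,
      Filter.Tendsto (measSlowEntFun μ T a P) (𝓝[>] (0 : ℝ)) (𝓝 e)} E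

/-- `Γ_r(x) = (Γ(x^{1/r} + 1))^r`, where `Γ` is the Euler Gamma function. -/
def GammaR (r : ℕ) (x : ℝ) : ℝ := (Real.Gamma (x ^ ((r : ℝ)⁻¹) + 1)) ^ r

/-- The inverse of `Γ_r` on `[1,∞)` (where `Γ_r` is strictly increasing with `Γ_r 1 = 1`). -/
def GammaRInv (r : ℕ) (y : ℝ) : ℝ := sSup {x : ℝ | 1 ≤ x ∧ GammaR r x ≤ y}

/-- The intermediate scaling family `a^{int1,r}_m(t) = m^(t / Γ_r⁻¹(ln m / ln q₁))`. -/
def intScale1 (r q₁ : ℕ) (m : ℕ) (t : ℝ) : ℝ :=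
  (m : ℝ) ^ (t / GammaRInv r (Real.log m / Real.log q₁))

/-- The intermediate scaling family
`a^{int2,r}_m(t) = m^(t / (Γ_r⁻¹(ln m / ln q₁))^((r-2)/r))`. -/
def intScale2 (r q₁ : ℕ) (m : ℕ) (t : ℝ) : ℝ :=
  (m : ℝ) ^ (t / GammaRInv r (Real.log m / Real.log q₁) ^ (((r : ℝ) - 2) / (r : ℝ)))

/-- The logarithmic scaling family `a^{ln}_m(t) = (ln m)^t`. -/
def logScale (m : ℕ) (t : ℝ) : ℝ := Real.log m ^ t

/-- The polynomial scaling family `a^{pol}_m(t) = m^t`. -/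
def polScale (m : ℕ) (t : ℝ) : ℝ := (m : ℝ) ^ t

end

/-!
Choose a Liouville number `α` with approximations `q j * α - p j = δ j` and let `T` be the time-one
map of the linear flow on the torus in the direction `(α, 1)`, reparametrised to preserve the
density `1 + ∑ j, a j * cos (2π (q j * x - p j * y))`, whose terms are almost invariant under the
linear flow; a shear conjugates the invariant measure to Lebesgue measure. At the half-turn time
`N ≈ 1 / (2 δ j)` the resonant character `j` has gone through half a period, and the flow has
displaced the point `(x, y)` along its orbit by
`N + (a j / (π δ j)) * sin (2π (q j * x - p j * y))`, up to an error which is small compared to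
`a j / δ j`.

*Mixing.* Since `a j / δ j → ∞`, this displacement spreads horizontal circles evenly along the
flow direction, so correlations tend to `0` along the half-turn times.

*Entropy.* Over time `n`, horizontal circles are stretched by at most a constant times
`1 + ∑ i, q i * a i * min (2 * n + 4) (1 / δ i)`, which bounds the Bowen covering numbers from
above. At the half-turn times the oscillation `a j / δ j` of the displacement bounds them from
below, because orbits whose displacements differ by an integer must separate. For the scale
`exp (t * G n)`, the choices `δ j ≈ q j / q (j + 1)` and
`a j = exp (G (q (j + 1))) / q (j + 1)` with `q (j + 1)` huge compared to `q j` make both bounds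
`exp ((1 + o(1)) * G n)`.
-/

noncomputable section

section IntermediateScale

variable {r b m : ℕ} {s y : ℝ}

lemma GammaR_pow (hr : r ≠ 0) (hs : 0 ≤ s) : GammaR r (s ^ r) = Real.Gamma (s + 1) ^ r := by
  rw [GammaR, Real.pow_rpow_inv_natCast hs hr]

lemma strictMonoOn_Gamma_add_one_pow (hr : r ≠ 0) :
    StrictMonoOn (fun s : ℝ => Real.Gamma (s + 1) ^ r) (Ici 1) := by
  intro s hs t ht hst
  rw [mem_Ici] at hs ht
  refine pow_lt_pow_left₀ ?_ (Real.Gamma_pos_of_pos (by linarith)).le hr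
  exact Real.Gamma_strictMonoOn_Ici (mem_Ici.2 (by linarith)) (mem_Ici.2 (by linarith))
    (by linarith)

lemma one_le_Gamma (hs : 2 ≤ s) : 1 ≤ Real.Gamma s := by
  have h := Real.Gamma_strictMonoOn_Ici.monotoneOn self_mem_Ici (mem_Ici.2 hs) hs
  rwa [Real.Gamma_two] at h

lemma le_Gamma_add_one (hs : 2 ≤ s) : s ≤ Real.Gamma (s + 1) := by
  rw [Real.Gamma_add_one (by linarith)]
  exact le_mul_of_one_le_right (by linarith) (one_le_Gamma hs)

lemma exists_Gamma_add_one_pow_eq (hr : r ≠ 0) (hy : 1 ≤ y) :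
    ∃ s : ℝ, 1 ≤ s ∧ Real.Gamma (s + 1) ^ r = y := by
  have hcont : ContinuousOn (fun s : ℝ => Real.Gamma (s + 1) ^ r) (Icc 1 (y + 2)) := by
    intro s hs
    have hΓ : ContinuousAt Real.Gamma (s + 1) :=
      (Real.differentiableAt_Gamma fun k => by
        have := hs.1; have := k.cast_nonneg (α := ℝ); linarith).continuousAt
    exact ((hΓ.comp (f := fun s : ℝ => s + 1) (by fun_prop)).pow r).continuousWithinAt
  have hmem : y ∈ Icc (Real.Gamma (1 + 1) ^ r) (Real.Gamma (y + 2 + 1) ^ r) := by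
    refine ⟨by rwa [one_add_one_eq_two, Real.Gamma_two, one_pow], ?_⟩
    have h : y + 2 ≤ Real.Gamma (y + 2 + 1) := le_Gamma_add_one (by linarith)
    calc y ≤ Real.Gamma (y + 2 + 1) := by linarith
      _ ≤ Real.Gamma (y + 2 + 1) ^ r := le_self_pow₀ (by linarith) hr
  obtain ⟨s, hs, hsy⟩ := intermediate_value_Icc (by linarith : (1 : ℝ) ≤ y + 2) hcont hmem
  exact ⟨s, hs.1, hsy⟩

lemma GammaRInv_Gamma_add_one_pow (hr : r ≠ 0) (hs : 1 ≤ s) :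
    GammaRInv r (Real.Gamma (s + 1) ^ r) = s ^ r := by
  have hset : {x : ℝ | 1 ≤ x ∧ GammaR r x ≤ Real.Gamma (s + 1) ^ r} = Icc 1 (s ^ r) := by
    ext x
    refine and_congr_right fun hx => ?_
    obtain ⟨w, hw, rfl⟩ : ∃ w : ℝ, 1 ≤ w ∧ w ^ r = x :=
      ⟨x ^ (r : ℝ)⁻¹, Real.one_le_rpow hx (by positivity),
        Real.rpow_inv_natCast_pow (by linarith) hr⟩
    rw [GammaR_pow hr (by linarith),
      pow_le_pow_iff_left₀ (a := w) (by linarith) (by linarith) hr]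
    exact (strictMonoOn_Gamma_add_one_pow hr).le_iff_le hw hs
  rw [GammaRInv, hset, csSup_Icc (one_le_pow₀ hs)]

lemma GammaRInv_nonneg (r : ℕ) (y : ℝ) : 0 ≤ GammaRInv r y :=
  Real.sSup_nonneg fun _ hx => zero_le_one.trans hx.1

/-- The solution `s ≥ 1` of `Γ(s + 1) ^ r = y`, for `y ≥ 1`; it is the `r`-th root of
`Γ_r⁻¹(y)`. -/
def gammaRoot (r : ℕ) (y : ℝ) : ℝ := GammaRInv r y ^ (r : ℝ)⁻¹

lemma gammaRoot_Gamma_add_one_pow (hr : r ≠ 0) (hs : 1 ≤ s) :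
    gammaRoot r (Real.Gamma (s + 1) ^ r) = s := by
  rw [gammaRoot, GammaRInv_Gamma_add_one_pow hr hs, Real.pow_rpow_inv_natCast (by linarith) hr]

lemma one_le_gammaRoot (hr : r ≠ 0) (hy : 1 ≤ y) : 1 ≤ gammaRoot r y := by
  obtain ⟨s, hs, rfl⟩ := exists_Gamma_add_one_pow_eq hr hy
  rwa [gammaRoot_Gamma_add_one_pow hr hs]

lemma Gamma_gammaRoot_add_one_pow (hr : r ≠ 0) (hy : 1 ≤ y) :
    Real.Gamma (gammaRoot r y + 1) ^ r = y := by
  obtain ⟨s, hs, rfl⟩ := exists_Gamma_add_one_pow_eq hr hy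
  rw [gammaRoot_Gamma_add_one_pow hr hs]

lemma GammaRInv_rpow_sub_two_div (hr : 2 ≤ r) (y : ℝ) :
    GammaRInv r y ^ (((r : ℝ) - 2) / r) = gammaRoot r y ^ (r - 2) := by
  rw [gammaRoot, ← Real.rpow_natCast, ← Real.rpow_mul (GammaRInv_nonneg r y), Nat.cast_sub hr]
  congr 1
  push_cast
  ring

lemma monotoneOn_gammaRoot (hr : r ≠ 0) : MonotoneOn (gammaRoot r) (Ici 1) := by
  intro y hy z hz hyz
  rw [← Gamma_gammaRoot_add_one_pow hr hy, ← Gamma_gammaRoot_add_one_pow hr hz] at hyz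
  exact ((strictMonoOn_Gamma_add_one_pow hr).le_iff_le (one_le_gammaRoot hr hy)
    (one_le_gammaRoot hr hz)).1 hyz

lemma tendsto_gammaRoot_atTop (hr : r ≠ 0) : Tendsto (gammaRoot r) atTop atTop := by
  rw [tendsto_atTop]
  intro c
  filter_upwards [eventually_ge_atTop (max 1 (Real.Gamma (max c 1 + 1) ^ r))] with y hy
  have hy1 : 1 ≤ y := (le_max_left _ _).trans hy
  have hle := (le_max_right _ _).trans hy
  rw [← Gamma_gammaRoot_add_one_pow hr hy1] at hle
  exact (le_max_left c 1).trans (((strictMonoOn_Gamma_add_one_pow hr).le_iff_le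
    (mem_Ici.2 (le_max_right c 1)) (one_le_gammaRoot hr hy1)).1 hle)

/-- The rate `G` for which the scaling family `a^{int2,r}` (with base `b`) is
`a_m(t) = exp (t * G m)`. -/
def intermediateRate (r b m : ℕ) : ℝ :=
  Real.log m / GammaRInv r (Real.log m / Real.log b) ^ (((r : ℝ) - 2) / r)

lemma intScale2_eq_exp (r b : ℕ) (hm : m ≠ 0) (t : ℝ) :
    intScale2 r b m t = Real.exp (t * intermediateRate r b m) := by
  rw [intScale2, intermediateRate, Real.rpow_def_of_pos (by positivity)]
  congr 1
  ring

lemma intermediateRate_eq_div (hr : 2 ≤ r) (b m : ℕ) : intermediateRate r b m =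
    Real.log m / gammaRoot r (Real.log m / Real.log b) ^ (r - 2) := by
  rw [intermediateRate, GammaRInv_rpow_sub_two_div hr]

lemma intermediateRate_nonneg (r b m : ℕ) : 0 ≤ intermediateRate r b m :=
  div_nonneg (Real.log_natCast_nonneg m) (Real.rpow_nonneg (GammaRInv_nonneg _ _) _)

lemma one_le_log_div_log (hb : 2 ≤ b) (hm : b ≤ m) : 1 ≤ Real.log m / Real.log b := by
  rw [one_le_div (Real.log_pos (by exact_mod_cast hb))]
  exact Real.log_le_log (by exact_mod_cast (by omega : 0 < b)) (by exact_mod_cast hm)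

-- Here `log m = log b * Γ(s + 1) ^ r = log b * (s * Γ(s)) ^ r` for the root `s`.
lemma intermediateRate_eq_mul (hr : 2 ≤ r) (hb : 2 ≤ b) (hm : b ≤ m) :
    intermediateRate r b m = Real.log b * (gammaRoot r (Real.log m / Real.log b) ^ 2 *
      Real.Gamma (gammaRoot r (Real.log m / Real.log b)) ^ r) := by
  have hlog : 0 < Real.log b := Real.log_pos (by exact_mod_cast hb)
  have hy := one_le_log_div_log hb hm
  rw [intermediateRate_eq_div hr]
  have hlogm := (Gamma_gammaRoot_add_one_pow (r := r) (by omega) hy).symm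
  set s := gammaRoot r (Real.log m / Real.log b)
  have hs : 0 < s := zero_lt_one.trans_le (one_le_gammaRoot (by omega) hy)
  rw [div_eq_iff hlog.ne', Real.Gamma_add_one hs.ne', mul_pow] at hlogm
  rw [hlogm, ← Nat.sub_add_cancel hr]
  simp only [Nat.add_sub_cancel, pow_add]
  field_simp

lemma log_sub_intermediateRate (hr : 2 ≤ r) (b m : ℕ) : Real.log m - intermediateRate r b m =
    Real.log m * (1 - (gammaRoot r (Real.log m / Real.log b) ^ (r - 2))⁻¹) := by
  rw [intermediateRate_eq_div hr]
  ring

lemma tendsto_gammaRoot_log_div_log (hr : r ≠ 0) (hb : 2 ≤ b) :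
    Tendsto (fun m : ℕ => gammaRoot r (Real.log m / Real.log b)) atTop atTop :=
  (tendsto_gammaRoot_atTop hr).comp <| Tendsto.atTop_div_const
    (Real.log_pos (by exact_mod_cast hb)) (Real.tendsto_log_atTop.comp tendsto_natCast_atTop_atTop)

/-- A rate `G` of subexponential growth: `exp ∘ G` tends to infinity and is eventually monotone,
and so is `m ↦ m / exp (G m)`. -/
structure IsIntermediateRate (G : ℕ → ℝ) (n₀ : ℕ) : Prop where
  two_le : 2 ≤ n₀
  nonneg : ∀ m, 0 ≤ G m
  monotoneOn : MonotoneOn G (Ici n₀)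
  monotoneOn_log_sub : MonotoneOn (fun m : ℕ => Real.log m - G m) (Ici n₀)
  tendsto_atTop : Tendsto G atTop atTop
  tendsto_log_sub_atTop : Tendsto (fun m : ℕ => Real.log m - G m) atTop atTop

lemma gammaRoot_log_div_log_mono (hr : r ≠ 0) (hb : 2 ≤ b) (hm : b ≤ m) {n : ℕ} (hmn : m ≤ n) :
    gammaRoot r (Real.log m / Real.log b) ≤ gammaRoot r (Real.log n / Real.log b) := by
  refine monotoneOn_gammaRoot hr (one_le_log_div_log hb hm)
    (one_le_log_div_log hb (hm.trans hmn)) ?_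
  have : 0 < (m : ℝ) := by exact_mod_cast (by omega : 0 < m)
  gcongr

lemma tendsto_intermediateRate (hr : 2 ≤ r) (hb : 2 ≤ b) :
    Tendsto (intermediateRate r b) atTop atTop := by
  have hlog : 0 < Real.log b := Real.log_pos (by exact_mod_cast hb)
  have hroot := tendsto_gammaRoot_log_div_log (r := r) (by omega) hb
  refine tendsto_atTop_mono' _ ?_ (hroot.const_mul_atTop hlog)
  filter_upwards [eventually_ge_atTop b, hroot.eventually_ge_atTop 2] with m hm hs
  rw [intermediateRate_eq_mul hr hb hm]
  have hΓ := one_le_pow₀ (one_le_Gamma hs) (n := r)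
  gcongr
  nlinarith

lemma tendsto_log_sub_intermediateRate (hr : 3 ≤ r) (hb : 2 ≤ b) :
    Tendsto (fun m : ℕ => Real.log m - intermediateRate r b m) atTop atTop := by
  have hhalf : Tendsto (fun m : ℕ => Real.log m * (1 - 2⁻¹)) atTop atTop :=
    (Real.tendsto_log_atTop.comp tendsto_natCast_atTop_atTop).atTop_mul_const (by norm_num)
  refine tendsto_atTop_mono' _ ?_ hhalf
  filter_upwards [(tendsto_gammaRoot_log_div_log (r := r) (by omega) hb).eventually_ge_atTop 2]
    with m hs
  rw [log_sub_intermediateRate (by omega)]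
  have hpow := hs.trans (le_self_pow₀ (by linarith) (by omega : r - 2 ≠ 0))
  have := Real.log_natCast_nonneg m
  gcongr

lemma monotoneOn_log_sub_intermediateRate (hr : 2 ≤ r) (hb : 2 ≤ b) :
    MonotoneOn (fun m : ℕ => Real.log m - intermediateRate r b m) (Ici b) := by
  intro m (hm : b ≤ m) n _ hmn
  have hr0 : r ≠ 0 := by omega
  have hm' : (0 : ℝ) < m := by exact_mod_cast (by omega : 0 < b).trans_le hm
  simp only [log_sub_intermediateRate hr]
  have hs := one_le_gammaRoot hr0 (one_le_log_div_log hb hm)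
  have hmono := gammaRoot_log_div_log_mono hr0 hb hm hmn
  have := Real.log_natCast_nonneg n
  have := sub_nonneg.2 (inv_le_one_of_one_le₀ (one_le_pow₀ hs (n := r - 2)))
  gcongr

theorem exists_isIntermediateRate_intermediateRate (hr : 3 ≤ r) (hb : 2 ≤ b) :
    ∃ n₀, IsIntermediateRate (intermediateRate r b) n₀ := by
  have hr2 : 2 ≤ r := by omega
  obtain ⟨N, hN⟩ := eventually_atTop.1
    ((tendsto_gammaRoot_log_div_log (r := r) (by omega) hb).eventually_ge_atTop 2)
  refine ⟨max b N, hb.trans (le_max_left _ _), intermediateRate_nonneg r b, ?_,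
    (monotoneOn_log_sub_intermediateRate hr2 hb).mono (Ici_subset_Ici.2 (le_max_left _ _)),
    tendsto_intermediateRate hr2 hb, tendsto_log_sub_intermediateRate hr hb⟩
  intro m hm n _ hmn
  have hbm : b ≤ m := (le_max_left _ _).trans hm
  have hs : 2 ≤ gammaRoot r (Real.log m / Real.log b) := hN m ((le_max_right _ _).trans hm)
  have hmono := gammaRoot_log_div_log_mono (by omega : r ≠ 0) hb hbm hmn
  rw [intermediateRate_eq_mul hr2 hb hbm, intermediateRate_eq_mul hr2 hb (hbm.trans hmn)]
  have hΓ := Real.Gamma_strictMonoOn_Ici.monotoneOn (mem_Ici.2 hs) (mem_Ici.2 (hs.trans hmono))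
    hmono
  have := one_le_Gamma hs
  have := Real.log_natCast_nonneg b
  gcongr

end IntermediateScale

section Denominators

variable {G : ℕ → ℝ} {n₀ : ℕ}

lemma summable_of_le_half_mul {u : ℕ → ℝ} (h0 : ∀ k, 0 ≤ u k)
    (h : ∀ k, u (k + 1) ≤ 1 / 2 * u k) : Summable u :=
  .of_nonneg_of_le h0 (fun k => le_geom (by norm_num) k fun i _ => h i)
    (summable_geometric_two.mul_right _)

lemma tsum_le_of_le_half_mul {u : ℕ → ℝ} (h0 : ∀ k, 0 ≤ u k)
    (h : ∀ k, u (k + 1) ≤ 1 / 2 * u k) : ∑' k, u k ≤ 2 * u 0 := by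
  refine ((summable_of_le_half_mul h0 h).tsum_le_tsum
    (fun k => le_geom (by norm_num) k fun i _ => h i)
    (summable_geometric_two.mul_right _)).trans_eq ?_
  rw [tsum_mul_right, tsum_geometric_two]

lemma IsIntermediateRate.exp_div_eq {m : ℕ} (hm : m ≠ 0) :
    Real.exp (G m) / m = Real.exp (-(Real.log m - G m)) := by
  rw [neg_sub, Real.exp_sub, Real.exp_log (by positivity)]

namespace IsIntermediateRate

variable (hG : IsIntermediateRate G n₀)
include hG

lemma tendsto_exp_div : Tendsto (fun m : ℕ => Real.exp (G m) / m) atTop (𝓝 0) := by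
  refine (Real.tendsto_exp_neg_atTop_nhds_zero.comp hG.tendsto_log_sub_atTop).congr' ?_
  filter_upwards [eventually_ne_atTop 0] with m hm
  exact (exp_div_eq hm).symm

lemma tendsto_exp_mul {c : ℝ} (hc : 0 < c) :
    Tendsto (fun m : ℕ => Real.exp (c * G m)) atTop atTop :=
  Real.tendsto_exp_atTop.comp (hG.tendsto_atTop.const_mul_atTop hc)

lemma mul_exp_div_mul_min_le {q : ℝ} (hq : 1 ≤ q) {m n : ℕ} (hm : n₀ ≤ m) (hn : n₀ ≤ n) :
    q * (Real.exp (G m) / m) * min (2 * (n : ℝ) + 4) (m / q) ≤ 6 * q * Real.exp (G n) := by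
  have hm0 : m ≠ 0 := by have := hG.two_le; omega
  have hn0 : n ≠ 0 := by have := hG.two_le; omega
  have hn2 : (2 : ℝ) ≤ n := by exact_mod_cast hG.two_le.trans hn
  rcases le_total n m with hnm | hmn
  · have hdecr : Real.exp (G m) / m ≤ Real.exp (G n) / n := by
      rw [exp_div_eq hm0, exp_div_eq hn0]
      exact Real.exp_le_exp.2 (neg_le_neg (hG.monotoneOn_log_sub hn hm hnm))
    calc q * (Real.exp (G m) / m) * min (2 * (n : ℝ) + 4) (m / q)
        ≤ q * (Real.exp (G n) / n) * (6 * n) := by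
          gcongr
          exact (min_le_left _ _).trans (by linarith)
      _ = 6 * q * Real.exp (G n) := by field_simp
  · calc q * (Real.exp (G m) / m) * min (2 * (n : ℝ) + 4) (m / q)
        ≤ q * (Real.exp (G m) / m) * (m / q) := by gcongr; exact min_le_right _ _
      _ = Real.exp (G m) := by field_simp
      _ ≤ Real.exp (G n) := Real.exp_le_exp.2 (hG.monotoneOn hm hn hmn)
      _ ≤ 6 * q * Real.exp (G n) :=
          le_mul_of_one_le_left (Real.exp_pos _).le (by linarith)

lemma eventually_mul_exp_div_mul_min_le {q c ε : ℝ} (hq : 1 ≤ q) (hc : 0 < c) (hε : 0 < ε) :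
    ∀ᶠ m : ℕ in atTop, ∀ n ≥ n₀, q * (Real.exp (G m) / m) * min (2 * (n : ℝ) + 4) (m / q) ≤
      ε * Real.exp ((1 + c) * G n) := by
  obtain ⟨M, hM⟩ := eventually_atTop.1
    ((hG.tendsto_exp_mul hc).eventually_ge_atTop (6 * q / ε))
  filter_upwards [hG.tendsto_exp_div.eventually_le_const
    (show 0 < ε / (q * (2 * M + 4)) by positivity), eventually_ge_atTop n₀] with m hmM hm n hn
  rcases lt_or_ge n M with hnM | hnM
  · have hexp : 1 ≤ Real.exp ((1 + c) * G n) :=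
      Real.one_le_exp (mul_nonneg (by positivity) (hG.nonneg n))
    calc q * (Real.exp (G m) / m) * min (2 * (n : ℝ) + 4) (m / q)
        ≤ q * (ε / (q * (2 * M + 4))) * (2 * M + 4) := by
          gcongr
          exact (min_le_left _ _).trans (by gcongr)
      _ = ε := by field_simp
      _ ≤ ε * Real.exp ((1 + c) * G n) := le_mul_of_one_le_right hε.le hexp
  · calc q * (Real.exp (G m) / m) * min (2 * (n : ℝ) + 4) (m / q)
        ≤ 6 * q * Real.exp (G n) := hG.mul_exp_div_mul_min_le hq hm hn
      _ = ε * (Real.exp (G n) * (6 * q / ε)) := by field_simp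
      _ ≤ ε * (Real.exp (G n) * Real.exp (c * G n)) := by gcongr; exact hM n hnM
      _ = ε * Real.exp ((1 + c) * G n) := by rw [← Real.exp_add, add_mul, one_mul]

end IsIntermediateRate

/-- `m` is an admissible denominator to follow the `j`-th denominator `q`: it is a multiple of `q`,
and so large that the weight `exp (G m) / m` is tiny, the amplitude `exp (G m) / q` dominates the
previous ones, and the shear created at this stage is below `exp ((1 + o(1)) * G n)` at every
time `n`. -/
structure IsNextDenom (G : ℕ → ℝ) (n₀ j q m : ℕ) : Prop where
  dvd : q ∣ m
  two_mul_le : 2 * q ≤ m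
  exp_div_le : Real.exp (G m) / m ≤ (1 / 2) ^ j / (8 * (q : ℝ) ^ (j + 3))
  sq_mul_exp_le : ((j : ℝ) + 1) ^ 2 * Real.exp (G q) * (2 * q) ≤ Real.exp (G m)
  mul_min_le : ∀ n ≥ n₀, (q : ℝ) * (Real.exp (G m) / m) * min (2 * (n : ℝ) + 4) ((m : ℝ) / q) ≤
    (1 / 2) ^ j * Real.exp ((1 + 1 / ((j : ℝ) + 1)) * G n)
  eight_mul_le : (8 * q : ℝ) ≤ Real.exp (1 / ((j : ℝ) + 1) * G m)

lemma IsIntermediateRate.exists_isNextDenom (hG : IsIntermediateRate G n₀) (j : ℕ) {q : ℕ}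
    (hq : 0 < q) : ∃ m, IsNextDenom G n₀ j q m := by
  have hq1 : (1 : ℝ) ≤ q := by exact_mod_cast hq
  have hj : 0 < 1 / ((j : ℝ) + 1) := by positivity
  have hlarge := (((hG.tendsto_exp_div.eventually_le_const
      (show 0 < (1 / 2) ^ j / (8 * (q : ℝ) ^ (j + 3)) by positivity)).and
    ((Real.tendsto_exp_atTop.comp hG.tendsto_atTop).eventually_ge_atTop
      (((j : ℝ) + 1) ^ 2 * Real.exp (G q) * (2 * q)))).and
    (hG.eventually_mul_exp_div_mul_min_le hq1 hj (show 0 < ((1 : ℝ) / 2) ^ j by positivity))).and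
    ((hG.tendsto_exp_mul hj).eventually_ge_atTop (8 * q))
  have hmult : Tendsto (fun k => q * k) atTop atTop := tendsto_id.const_mul_atTop' hq
  obtain ⟨k, ⟨⟨⟨h1, h2⟩, h3⟩, h4⟩, hk⟩ :=
    ((hmult.eventually hlarge).and (eventually_ge_atTop 2)).exists
  exact ⟨q * k, ⟨dvd_mul_right q k, by nlinarith, h1, h2, h3, h4⟩⟩

/-- A Liouville slope `α` with approximants `p j / q j` from below and gaps `δ j = q j * α - p j`,
together with the weights `a j` of the resonant characters `exp (2πi (q j x - p j y))`. The weights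
decay faster than any power of `q j`, while the amplitudes `a j / δ j` of the Birkhoff integrals of
the characters blow up so fast that at stage `j` the other characters are negligible. -/
structure LiouvilleData where
  q : ℕ → ℕ
  p : ℕ → ℕ
  a : ℕ → ℝ
  δ : ℕ → ℝ
  α : ℝ
  q_pos : ∀ j, 0 < q j
  p_pos : ∀ j, 0 < p j
  q_mul_α_sub_p : ∀ j, (q j : ℝ) * α - p j = δ j
  δ_pos : ∀ j, 0 < δ j
  tendsto_δ : Tendsto δ atTop (𝓝 0)
  α_pos : 0 < α
  α_le_one : α ≤ 1
  a_pos : ∀ j, 0 < a j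
  summable_a_mul_pow : ∀ r : ℕ, Summable fun j => a j * (q j : ℝ) ^ r
  tsum_a_le : ∑' j, a j ≤ 1 / 2
  tendsto_amp : Tendsto (fun j => a j / δ j) atTop atTop
  tendsto_lowError :
    Tendsto (fun j => (∑ i ∈ Finset.range j, q i * (a i / δ i)) / (a j / δ j)) atTop (𝓝 0)
  tendsto_highError :
    Tendsto (fun j => (∑' i, a (i + (j + 1)) * q (i + (j + 1))) / δ j) atTop (𝓝 0)

namespace LiouvilleData

/-- The amplitude `a j / δ j` of the Birkhoff integrals of the `j`-th resonant character. -/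
def amp (P : LiouvilleData) (j : ℕ) : ℝ := P.a j / P.δ j

/-- The time after which the phase of the `j`-th resonant character has made half a turn. -/
def halfTurn (P : LiouvilleData) (j : ℕ) : ℕ := ⌊1 / (2 * P.δ j)⌋₊

/-- The bound, up to a constant, for the horizontal derivative of the flow up to time `n`. -/
def stretch (P : LiouvilleData) (n : ℕ) : ℝ :=
  1 + ∑' i, P.q i * P.a i * min (2 * (n : ℝ) + 4) (1 / P.δ i)

lemma min_one_div_δ_nonneg (P : LiouvilleData) (n i : ℕ) :
    0 ≤ min (2 * (n : ℝ) + 4) (1 / P.δ i) := by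
  have := P.δ_pos i
  positivity

lemma summable_q_mul_a (P : LiouvilleData) : Summable fun i => (P.q i : ℝ) * P.a i := by
  simpa only [pow_one, mul_comm] using P.summable_a_mul_pow 1

lemma summable_stretch (P : LiouvilleData) (n : ℕ) :
    Summable fun i => P.q i * P.a i * min (2 * (n : ℝ) + 4) (1 / P.δ i) := by
  have h0 : ∀ i, 0 ≤ P.q i * P.a i := fun i => mul_nonneg (Nat.cast_nonneg _) (P.a_pos i).le
  exact Summable.of_nonneg_of_le (fun i => mul_nonneg (h0 i) (P.min_one_div_δ_nonneg n i))
    (fun i => mul_le_mul_of_nonneg_left (min_le_left _ _) (h0 i)) (P.summable_q_mul_a.mul_right _)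

lemma one_le_stretch (P : LiouvilleData) (n : ℕ) : 1 ≤ P.stretch n :=
  le_add_of_nonneg_right <| tsum_nonneg fun i => mul_nonneg
    (mul_nonneg (Nat.cast_nonneg _) (P.a_pos i).le) (P.min_one_div_δ_nonneg n i)

end LiouvilleData

/-- A sequence of successively admissible denominators. -/
structure DenomSeq (G : ℕ → ℝ) (n₀ : ℕ) where
  q : ℕ → ℕ
  two_le_q : ∀ j, 2 ≤ q j
  le_q : ∀ j, n₀ ≤ q j
  isNextDenom : ∀ j, IsNextDenom G n₀ j (q j) (q (j + 1))

lemma IsIntermediateRate.nonempty_denomSeq (hG : IsIntermediateRate G n₀) :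
    Nonempty (DenomSeq G n₀) := by
  choose! next hnext using fun (j q : ℕ) (hq : 0 < q) => hG.exists_isNextDenom j hq
  let q : ℕ → ℕ := fun j => Nat.rec n₀ next j
  have hn₀ := hG.two_le
  have hq : ∀ j, n₀ ≤ q j := by
    intro j
    induction j with
    | zero => exact le_rfl
    | succ j ih =>
      have := (hnext j (q j) (by omega)).two_mul_le
      change n₀ ≤ next j (q j)
      omega
  exact ⟨⟨q, fun j => hn₀.trans (hq j), hq,
    fun j => hnext j (q j) (by have := hq j; omega)⟩⟩

namespace DenomSeq

variable (D : DenomSeq G n₀)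

lemma q_pos (j : ℕ) : 0 < D.q j := zero_lt_two.trans_le (D.two_le_q j)

lemma cast_q_pos (j : ℕ) : (0 : ℝ) < D.q j := by exact_mod_cast D.q_pos j

lemma one_le_cast_q (j : ℕ) : (1 : ℝ) ≤ D.q j := by exact_mod_cast D.q_pos j

lemma monotone_q : Monotone D.q :=
  monotone_nat_of_le_succ fun j => by have := (D.isNextDenom j).two_mul_le; omega

lemma q_dvd {i j : ℕ} (h : i ≤ j) : D.q i ∣ D.q j :=
  Nat.le_induction dvd_rfl (fun k _ ih => ih.trans (D.isNextDenom k).dvd) j h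

lemma one_div_q_succ_le (j : ℕ) : (1 : ℝ) / D.q (j + 1) ≤ 1 / 2 * (1 / D.q j) := by
  have h : (2 : ℝ) * D.q j ≤ D.q (j + 1) := by exact_mod_cast (D.isNextDenom j).two_mul_le
  have := D.cast_q_pos j
  exact (one_div_le_one_div_of_le (by positivity) h).trans_eq (one_div_mul_one_div _ _).symm

/-- The Liouville number `∑ 1 / q i`. -/
def slope : ℝ := ∑' i, (1 : ℝ) / D.q i

/-- The numerator of the `j`-th partial sum of the slope, over the denominator `q j`. -/
def numer (j : ℕ) : ℕ := ∑ i ∈ Finset.range (j + 1), D.q j / D.q i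

/-- The remainder of the `j`-th partial sum of the slope, multiplied by `q j`. -/
def gap (j : ℕ) : ℝ := D.q j * ∑' i, (1 : ℝ) / D.q (i + (j + 1))

/-- The weight of the `j`-th resonance. -/
def weight (j : ℕ) : ℝ := Real.exp (G (D.q (j + 1))) / D.q (j + 1)

lemma summable_one_div_q (j : ℕ) : Summable fun i => (1 : ℝ) / D.q (i + j) :=
  summable_of_le_half_mul (fun _ => by positivity) fun i => by
    simpa only [add_right_comm] using D.one_div_q_succ_le (i + j)

lemma tsum_one_div_q_le (j : ℕ) : ∑' i, (1 : ℝ) / D.q (i + j) ≤ 2 / D.q j := by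
  refine (tsum_le_of_le_half_mul (u := fun i => (1 : ℝ) / D.q (i + j)) (fun _ => by positivity)
    fun i => ?_).trans_eq (by rw [zero_add, mul_one_div])
  simpa only [add_right_comm] using D.one_div_q_succ_le (i + j)

lemma numer_pos (j : ℕ) : 0 < D.numer j :=
  Finset.sum_pos (fun i hi => Nat.div_pos (D.monotone_q (Finset.mem_range_succ_iff.1 hi))
    (D.q_pos i)) ⟨0, by simp⟩

lemma cast_numer (j : ℕ) :
    (D.numer j : ℝ) = D.q j * ∑ i ∈ Finset.range (j + 1), (1 : ℝ) / D.q i := by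
  rw [numer, Nat.cast_sum, Finset.mul_sum]
  refine Finset.sum_congr rfl fun i hi => ?_
  rw [Nat.cast_div (D.q_dvd (Finset.mem_range_succ_iff.1 hi)) (D.cast_q_pos i).ne', mul_one_div]

lemma q_mul_slope_sub_numer (j : ℕ) : (D.q j : ℝ) * D.slope - D.numer j = D.gap j := by
  have hs : Summable fun i => (1 : ℝ) / D.q i := D.summable_one_div_q 0
  rw [slope, gap, cast_numer, ← hs.sum_add_tsum_nat_add (j + 1), mul_add, add_sub_cancel_left]

lemma slope_pos : 0 < D.slope :=
  (D.summable_one_div_q 0).tsum_pos (fun _ => by positivity) 0 (one_div_pos.2 (D.cast_q_pos 0))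

lemma slope_le_one : D.slope ≤ 1 := by
  refine (D.tsum_one_div_q_le 0).trans ((div_le_one (D.cast_q_pos 0)).2 ?_)
  exact_mod_cast D.two_le_q 0

lemma div_le_gap (j : ℕ) : (D.q j : ℝ) / D.q (j + 1) ≤ D.gap j := by
  rw [gap, ← mul_one_div]
  gcongr
  simpa only [zero_add] using (D.summable_one_div_q (j + 1)).le_tsum 0 fun _ _ => by positivity

lemma gap_le (j : ℕ) : D.gap j ≤ 2 * D.q j / D.q (j + 1) :=
  (mul_le_mul_of_nonneg_left (D.tsum_one_div_q_le (j + 1)) (D.cast_q_pos j).le).trans_eq (by ring)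

lemma gap_pos (j : ℕ) : 0 < D.gap j :=
  (div_pos (D.cast_q_pos j) (D.cast_q_pos (j + 1))).trans_le (D.div_le_gap j)

lemma weight_pos (j : ℕ) : 0 < D.weight j := div_pos (Real.exp_pos _) (D.cast_q_pos _)

lemma weight_mul_pow_le {k j : ℕ} (hk : k ≤ j + 3) :
    D.weight j * (D.q j : ℝ) ^ k ≤ 1 / 8 * (1 / 2) ^ j := by
  have hpow : (D.q j : ℝ) ^ k ≤ (D.q j : ℝ) ^ (j + 3) := pow_le_pow_right₀ (D.one_le_cast_q j) hk
  have hq := D.cast_q_pos j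
  have hw := (D.isNextDenom j).exp_div_le
  rw [le_div_iff₀ (by positivity)] at hw
  have := mul_le_mul_of_nonneg_left hpow (D.weight_pos j).le
  simp only [weight] at *
  linarith

lemma exp_div_le_weight_div_gap (j : ℕ) :
    Real.exp (G (D.q (j + 1))) / (2 * D.q j) ≤ D.weight j / D.gap j := by
  have hq := D.cast_q_pos j
  have hq' := D.cast_q_pos (j + 1)
  rw [le_div_iff₀ (D.gap_pos j)]
  calc Real.exp (G (D.q (j + 1))) / (2 * D.q j) * D.gap j
      ≤ Real.exp (G (D.q (j + 1))) / (2 * D.q j) * (2 * D.q j / D.q (j + 1)) := by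
        gcongr; exact D.gap_le j
    _ = D.weight j := by rw [weight]; field_simp

lemma q_mul_weight_div_gap_le (j : ℕ) :
    D.q j * (D.weight j / D.gap j) ≤ Real.exp (G (D.q (j + 1))) := by
  rw [← mul_div_assoc, div_le_iff₀ (D.gap_pos j)]
  calc D.q j * D.weight j = Real.exp (G (D.q (j + 1))) * (D.q j / D.q (j + 1)) := by
        rw [weight]; ring
    _ ≤ Real.exp (G (D.q (j + 1))) * D.gap j := by gcongr; exact D.div_le_gap j

lemma one_div_gap_le (j : ℕ) : 1 / D.gap j ≤ D.q (j + 1) / D.q j := by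
  have h := one_div_le_one_div_of_le (div_pos (D.cast_q_pos j) (D.cast_q_pos (j + 1)))
    (D.div_le_gap j)
  rwa [one_div_div] at h

lemma sq_mul_exp_le_weight_div_gap (j : ℕ) :
    ((j : ℝ) + 1) ^ 2 * Real.exp (G (D.q j)) ≤ D.weight j / D.gap j := by
  refine le_trans ?_ (D.exp_div_le_weight_div_gap j)
  rw [le_div_iff₀ (mul_pos two_pos (D.cast_q_pos j))]
  exact (D.isNextDenom j).sq_mul_exp_le

lemma summable_weight_mul_pow (r : ℕ) : Summable fun j => D.weight j * (D.q j : ℝ) ^ r := by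
  refine Summable.of_norm_bounded_eventually_nat (summable_geometric_two.mul_left (1 / 8)) ?_
  filter_upwards [eventually_ge_atTop r] with j hj
  rw [Real.norm_of_nonneg (mul_nonneg (D.weight_pos j).le (by positivity))]
  exact D.weight_mul_pow_le (by omega)

lemma tsum_weight_le : ∑' j, D.weight j ≤ 1 / 2 := by
  have hsum : Summable D.weight := by simpa using D.summable_weight_mul_pow 0
  calc ∑' j, D.weight j ≤ ∑' j : ℕ, (1 / 8 : ℝ) * (1 / 2) ^ j :=
        hsum.tsum_le_tsum (fun j => by simpa using D.weight_mul_pow_le (Nat.zero_le _))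
          (summable_geometric_two.mul_left _)
    _ ≤ 1 / 2 := by rw [tsum_mul_left, tsum_geometric_two]; norm_num

end DenomSeq

end Denominators

section LiouvilleExistence

variable {G : ℕ → ℝ} {n₀ : ℕ}

namespace DenomSeq

variable (D : DenomSeq G n₀)

lemma weight_mul_q_le (j : ℕ) : D.weight j * D.q j ≤ (1 / 2) ^ j / D.q j := by
  rw [le_div_iff₀ (D.cast_q_pos j), mul_assoc, ← sq]
  refine (D.weight_mul_pow_le (by omega)).trans ?_
  linarith [pow_pos (one_half_pos (α := ℝ)) j]

lemma tsum_weight_mul_q_le (j : ℕ) :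
    ∑' i, D.weight (i + (j + 1)) * D.q (i + (j + 1)) ≤ (1 / 2) ^ j * D.gap j := by
  have hsum : Summable fun i => D.weight (i + (j + 1)) * (D.q (i + (j + 1)) : ℝ) :=
    (summable_nat_add_iff (f := fun i => D.weight i * (D.q i : ℝ)) (j + 1)).2
      (by simpa only [pow_one] using D.summable_weight_mul_pow 1)
  have hterm (i : ℕ) : D.weight (i + (j + 1)) * (D.q (i + (j + 1)) : ℝ) ≤
      (1 / 2) ^ (j + 1) / D.q (j + 1) * (1 / 2) ^ i := by
    have hmono : (D.q (j + 1) : ℝ) ≤ D.q (i + (j + 1)) := by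
      exact_mod_cast D.monotone_q (Nat.le_add_left _ _)
    have := D.cast_q_pos (j + 1)
    calc _ ≤ (1 / 2 : ℝ) ^ (i + (j + 1)) / D.q (i + (j + 1)) := D.weight_mul_q_le _
      _ ≤ (1 / 2) ^ (i + (j + 1)) / D.q (j + 1) := by gcongr
      _ = (1 / 2) ^ (j + 1) / D.q (j + 1) * (1 / 2) ^ i := by rw [pow_add]; ring
  calc _ ≤ ∑' i : ℕ, (1 / 2 : ℝ) ^ (j + 1) / D.q (j + 1) * (1 / 2) ^ i :=
        hsum.tsum_le_tsum hterm (summable_geometric_two.mul_left _)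
    _ = (1 / 2) ^ j * (1 / D.q (j + 1)) := by
        rw [tsum_mul_left, tsum_geometric_two, pow_succ]; ring
    _ ≤ (1 / 2) ^ j * (D.q j / D.q (j + 1)) := by gcongr; exact D.one_le_cast_q j
    _ ≤ (1 / 2) ^ j * D.gap j := by gcongr; exact D.div_le_gap j

lemma tendsto_highError :
    Tendsto (fun j => (∑' i, D.weight (i + (j + 1)) * D.q (i + (j + 1))) / D.gap j)
      atTop (𝓝 0) := by
  refine squeeze_zero (fun j => div_nonneg (tsum_nonneg fun i => ?_) (D.gap_pos j).le)
    (fun j => (div_le_iff₀ (D.gap_pos j)).2 (D.tsum_weight_mul_q_le j))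
    (tendsto_pow_atTop_nhds_zero_of_lt_one (by norm_num) (by norm_num))
  exact mul_nonneg (D.weight_pos _).le (D.cast_q_pos _).le

variable (hG : IsIntermediateRate G n₀)
include hG

lemma sq_le_weight_div_gap (j : ℕ) : ((j : ℝ) + 1) ^ 2 ≤ D.weight j / D.gap j :=
  (le_mul_of_one_le_right (by positivity) (Real.one_le_exp (hG.nonneg _))).trans
    (D.sq_mul_exp_le_weight_div_gap j)

lemma tendsto_weight_div_gap : Tendsto (fun j => D.weight j / D.gap j) atTop atTop := by
  refine tendsto_atTop_mono (fun j => ?_) (tendsto_natCast_atTop_atTop (R := ℝ))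
  exact (by nlinarith : (j : ℝ) ≤ ((j : ℝ) + 1) ^ 2).trans (D.sq_le_weight_div_gap hG j)

lemma tendsto_gap : Tendsto D.gap atTop (𝓝 0) := by
  refine squeeze_zero (fun j => (D.gap_pos j).le) (fun j => ?_)
    (D.tendsto_weight_div_gap hG).inv_tendsto_atTop
  have hw : D.weight j ≤ 1 := by
    have h := D.weight_mul_pow_le (Nat.zero_le (j + 3))
    have := pow_le_one₀ (n := j) (by norm_num : (0 : ℝ) ≤ 1 / 2) (by norm_num)
    rw [pow_zero, mul_one] at h
    linarith
  rw [Pi.inv_apply, inv_div, le_div_iff₀ (D.weight_pos j)]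
  exact mul_le_of_le_one_right (D.gap_pos j).le hw

lemma sum_q_mul_weight_div_gap_le (j : ℕ) :
    ∑ i ∈ Finset.range j, D.q i * (D.weight i / D.gap i) ≤ j * Real.exp (G (D.q j)) := by
  refine (Finset.sum_le_card_nsmul _ _ (Real.exp (G (D.q j))) fun i hi => ?_).trans_eq (by simp)
  have hij : i + 1 ≤ j := Finset.mem_range.1 hi
  exact (D.q_mul_weight_div_gap_le i).trans
    (Real.exp_le_exp.2 (hG.monotoneOn (D.le_q _) (D.le_q _) (D.monotone_q hij)))

lemma tendsto_lowError :
    Tendsto (fun j => (∑ i ∈ Finset.range j, D.q i * (D.weight i / D.gap i)) /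
      (D.weight j / D.gap j)) atTop (𝓝 0) := by
  have hpos (j : ℕ) : 0 < D.weight j / D.gap j := div_pos (D.weight_pos j) (D.gap_pos j)
  refine squeeze_zero (fun j => div_nonneg (Finset.sum_nonneg fun i _ =>
    mul_nonneg (D.cast_q_pos i).le (hpos i).le) (hpos j).le) (fun j => ?_)
    tendsto_one_div_add_atTop_nhds_zero_nat
  rw [div_le_iff₀ (hpos j)]
  calc _ ≤ j * Real.exp (G (D.q j)) := D.sum_q_mul_weight_div_gap_le hG j
    _ ≤ ((j : ℝ) + 1) * Real.exp (G (D.q j)) := by gcongr; linarith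
    _ = 1 / ((j : ℝ) + 1) * (((j : ℝ) + 1) ^ 2 * Real.exp (G (D.q j))) := by field_simp
    _ ≤ 1 / ((j : ℝ) + 1) * (D.weight j / D.gap j) := by
        gcongr; exact D.sq_mul_exp_le_weight_div_gap j

/-- The Liouville data with the given denominators. -/
def toLiouvilleData : LiouvilleData where
  q := D.q
  p := D.numer
  a := D.weight
  δ := D.gap
  α := D.slope
  q_pos := D.q_pos
  p_pos := D.numer_pos
  q_mul_α_sub_p := D.q_mul_slope_sub_numer
  δ_pos := D.gap_pos
  tendsto_δ := D.tendsto_gap hG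
  α_pos := D.slope_pos
  α_le_one := D.slope_le_one
  a_pos := D.weight_pos
  summable_a_mul_pow := D.summable_weight_mul_pow
  tsum_a_le := D.tsum_weight_le
  tendsto_amp := D.tendsto_weight_div_gap hG
  tendsto_lowError := D.tendsto_lowError hG
  tendsto_highError := D.tendsto_highError

lemma mul_weight_mul_min_le (J i : ℕ) {n : ℕ} (hn : n₀ ≤ n) :
    D.q (i + J) * D.weight (i + J) * min (2 * (n : ℝ) + 4) (1 / D.gap (i + J)) ≤
      Real.exp ((1 + 1 / ((J : ℝ) + 1)) * G n) * (1 / 2) ^ i := by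
  calc D.q (i + J) * D.weight (i + J) * min (2 * (n : ℝ) + 4) (1 / D.gap (i + J))
      ≤ D.q (i + J) * D.weight (i + J) *
          min (2 * (n : ℝ) + 4) ((D.q (i + J + 1) : ℝ) / D.q (i + J)) :=
        mul_le_mul_of_nonneg_left (min_le_min_left _ (D.one_div_gap_le (i + J)))
          (mul_pos (D.cast_q_pos _) (D.weight_pos _)).le
    _ ≤ (1 / 2) ^ (i + J) * Real.exp ((1 + 1 / (((i + J : ℕ) : ℝ) + 1)) * G n) :=
        (D.isNextDenom (i + J)).mul_min_le n hn
    _ ≤ (1 / 2) ^ i * Real.exp ((1 + 1 / ((J : ℝ) + 1)) * G n) := by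
        have := hG.nonneg n
        gcongr ?_ * Real.exp ((1 + 1 / (?_ + 1)) * _)
        · exact pow_le_pow_of_le_one (by norm_num) (by norm_num) (Nat.le_add_right _ _)
        · exact_mod_cast Nat.le_add_left J i
    _ = Real.exp ((1 + 1 / ((J : ℝ) + 1)) * G n) * (1 / 2) ^ i := mul_comm _ _

lemma exists_stretch_le (J : ℕ) : ∃ C, ∀ n ≥ n₀, (D.toLiouvilleData hG).stretch n ≤
    C + 2 * Real.exp ((1 + 1 / ((J : ℝ) + 1)) * G n) := by
  refine ⟨1 + ∑ i ∈ Finset.range J, D.q i * D.weight i * (1 / D.gap i), fun n hn => ?_⟩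
  have hsum := (D.toLiouvilleData hG).summable_stretch n
  rw [LiouvilleData.stretch, ← hsum.sum_add_tsum_nat_add J, ← add_assoc]
  refine add_le_add (add_le_add le_rfl (Finset.sum_le_sum fun i _ => ?_)) ?_
  · exact mul_le_mul_of_nonneg_left (min_le_right _ _)
      (mul_nonneg (D.cast_q_pos i).le (D.weight_pos i).le)
  · refine (((summable_nat_add_iff J).2 hsum).tsum_le_tsum
      (fun i => D.mul_weight_mul_min_le hG J i hn)
      (summable_geometric_two.mul_left _)).trans_eq ?_
    rw [tsum_mul_left, tsum_geometric_two, mul_comm]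

lemma tendsto_stretch_div_exp {t : ℝ} (ht : 1 < t) :
    Tendsto (fun n : ℕ => (D.toLiouvilleData hG).stretch n / Real.exp (t * G n)) atTop (𝓝 0) := by
  obtain ⟨J, hJ⟩ := exists_nat_one_div_lt (sub_pos.2 ht)
  obtain ⟨C, hC⟩ := D.exists_stretch_le hG J
  have hexp {c : ℝ} (hc : 0 < c) : Tendsto (fun n : ℕ => Real.exp (-(c * G n))) atTop (𝓝 0) :=
    Real.tendsto_exp_neg_atTop_nhds_zero.comp (hG.tendsto_atTop.const_mul_atTop hc)
  have hlim := ((hexp (by linarith : 0 < t)).const_mul C).add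
    ((hexp (by linarith : 0 < t - (1 + 1 / ((J : ℝ) + 1)))).const_mul 2)
  rw [mul_zero, mul_zero, add_zero] at hlim
  refine squeeze_zero' (.of_forall fun n => ?_) ?_ hlim
  · exact div_nonneg (zero_le_one.trans (LiouvilleData.one_le_stretch _ n)) (Real.exp_pos _).le
  · filter_upwards [eventually_ge_atTop n₀] with n hn
    rw [sub_mul, neg_sub, Real.exp_sub, Real.exp_neg, ← div_eq_mul_inv, ← mul_div_assoc,
      ← add_div]
    gcongr
    exact hC n hn

lemma halfTurn_add_one_le (j : ℕ) :
    (D.toLiouvilleData hG).halfTurn j + 1 ≤ D.q (j + 1) := by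
  have hle : (1 : ℝ) / (2 * D.gap j) ≤ D.q (j + 1) / 2 := by
    calc (1 : ℝ) / (2 * D.gap j) = 1 / D.gap j / 2 := by rw [div_div, mul_comm]
      _ ≤ D.q (j + 1) / D.q j / 2 := div_le_div_of_nonneg_right (D.one_div_gap_le j) zero_le_two
      _ ≤ D.q (j + 1) / 2 := by
          gcongr; exact div_le_self (D.cast_q_pos _).le (D.one_le_cast_q j)
  have hfloor : ((D.toLiouvilleData hG).halfTurn j : ℝ) ≤ 1 / (2 * D.gap j) :=
    Nat.floor_le (one_div_nonneg.2 (mul_pos two_pos (D.gap_pos j)).le)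
  have htwo : (2 : ℝ) ≤ D.q (j + 1) := by exact_mod_cast D.two_le_q (j + 1)
  have : ((D.toLiouvilleData hG).halfTurn j : ℝ) + 1 ≤ D.q (j + 1) := by linarith
  exact_mod_cast this

lemma eventually_exp_mul_le_amp {t : ℝ} (ht0 : 0 < t) (ht : t < 1) :
    ∀ᶠ j in atTop, Real.exp (t * G ((D.toLiouvilleData hG).halfTurn j + 1)) ≤
      (D.toLiouvilleData hG).amp j / 4 := by
  have hhalf : Tendsto (D.toLiouvilleData hG).halfTurn atTop atTop :=
    tendsto_nat_floor_atTop.comp <| by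
      simp_rw [one_div, mul_inv]
      exact (tendsto_inv_nhdsGT_zero.comp (tendsto_nhdsWithin_iff.2
        ⟨D.tendsto_gap hG, .of_forall D.gap_pos⟩)).const_mul_atTop (by norm_num)
  filter_upwards [hhalf.eventually_ge_atTop n₀,
    tendsto_one_div_add_atTop_nhds_zero_nat.eventually_le_const (sub_pos.2 ht)] with j hn hj
  have hq := D.cast_q_pos j
  have hmono := hG.monotoneOn (hn.trans (Nat.le_succ _)) (D.le_q (j + 1))
    (D.halfTurn_add_one_le hG j)
  calc _ ≤ Real.exp ((1 - 1 / ((j : ℝ) + 1)) * G (D.q (j + 1))) :=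
        Real.exp_le_exp.2 (mul_le_mul (by linarith) hmono (hG.nonneg _) (by linarith))
    _ = Real.exp (G (D.q (j + 1))) / Real.exp (1 / ((j : ℝ) + 1) * G (D.q (j + 1))) := by
        rw [← Real.exp_sub, sub_mul, one_mul]
    _ ≤ Real.exp (G (D.q (j + 1))) / (8 * D.q j) := by
        gcongr; exact (D.isNextDenom j).eight_mul_le
    _ = Real.exp (G (D.q (j + 1))) / (2 * D.q j) / 4 := by rw [div_div]; ring_nf
    _ ≤ (D.toLiouvilleData hG).amp j / 4 := by
        gcongr; exact D.exp_div_le_weight_div_gap j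

end DenomSeq

theorem IsIntermediateRate.exists_liouvilleData (hG : IsIntermediateRate G n₀) :
    ∃ P : LiouvilleData,
      (∀ t > 1, Tendsto (fun n : ℕ => P.stretch n / Real.exp (t * G n)) atTop (𝓝 0)) ∧
      ∀ t, 0 < t → t < 1 → ∀ᶠ j in atTop, Real.exp (t * G (P.halfTurn j + 1)) ≤ P.amp j / 4 := by
  obtain ⟨D⟩ := hG.nonempty_denomSeq
  exact ⟨D.toLiouvilleData hG, fun t ht => D.tendsto_stretch_div_exp hG ht,
    fun t ht0 ht => D.eventually_exp_mul_le_amp hG ht0 ht⟩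

end LiouvilleExistence

section ExpandingInverse

lemma mul_abs_sub_le_of_hasDerivAt {g g' : ℝ → ℝ} {c : ℝ} (hd : ∀ s, HasDerivAt g (g' s) s)
    (hc : ∀ s, c ≤ g' s) (s t : ℝ) : c * |s - t| ≤ |g s - g t| := by
  wlog hst : t ≤ s generalizing s t
  · rw [abs_sub_comm s, abs_sub_comm (g s)]
    exact this t s (le_of_not_ge hst)
  rw [abs_of_nonneg (sub_nonneg.2 hst)]
  exact (mul_sub_le_image_sub_of_le_deriv (fun s => (hd s).differentiableAt)
    (fun s => (hd s).deriv.symm ▸ hc s) hst).trans (le_abs_self _)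

lemma bijective_of_hasDerivAt_of_le {g g' : ℝ → ℝ} {c : ℝ} (hc0 : 0 < c)
    (hd : ∀ s, HasDerivAt g (g' s) s) (hc : ∀ s, c ≤ g' s) : Function.Bijective g := by
  have hmono {s t : ℝ} (hst : t ≤ s) : c * (s - t) ≤ g s - g t :=
    mul_sub_le_image_sub_of_le_deriv (fun s => (hd s).differentiableAt)
      (fun s => (hd s).deriv.symm ▸ hc s) hst
  refine ⟨fun s t hst => ?_, Continuous.surjective
    (continuous_iff_continuousAt.2 fun s => (hd s).continuousAt) ?_ ?_⟩
  · have h := mul_abs_sub_le_of_hasDerivAt hd hc s t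
    rw [hst, sub_self, abs_zero] at h
    exact sub_eq_zero.1 (abs_nonpos_iff.1 (nonpos_of_mul_nonpos_right h hc0))
  · refine tendsto_atTop_mono' _ ?_
      (tendsto_atTop_add_const_right atTop (g 0) (tendsto_id.const_mul_atTop hc0))
    filter_upwards [eventually_ge_atTop 0] with s hs
    simpa only [id, sub_zero, le_sub_iff_add_le] using hmono hs
  · refine tendsto_atBot_mono' _ ?_
      (tendsto_atBot_add_const_right atBot (g 0) (tendsto_id.const_mul_atBot hc0))
    filter_upwards [eventually_le_atBot 0] with s hs
    have := hmono hs
    simp only [id]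
    linarith

lemma continuous_invFun_of_hasDerivAt {Y : Type*} [TopologicalSpace Y] {g g' : Y → ℝ → ℝ} {c : ℝ}
    (hg : Continuous fun x : Y × ℝ => g x.1 x.2) (hc0 : 0 < c)
    (hd : ∀ p s, HasDerivAt (g p) (g' p s) s) (hc : ∀ p s, c ≤ g' p s) :
    Continuous fun x : Y × ℝ => Function.invFun (g x.1) x.2 := by
  have hr (p : Y) (t : ℝ) : g p (Function.invFun (g p) t) = t :=
    Function.rightInverse_invFun (bijective_of_hasDerivAt_of_le hc0 (hd p) (hc p)).2 t
  refine continuous_iff_continuousAt.2 fun ⟨p, t⟩ => ?_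
  set s := Function.invFun (g p) t with hs
  have hlim : Tendsto (fun x : Y × ℝ => |x.2 - g x.1 s| / c) (𝓝 (p, t)) (𝓝 0) := by
    have hgs := continuous_snd.sub (hg.comp (continuous_fst.prodMk (continuous_const (y := s))))
    refine (hgs.abs.div_const c).tendsto' _ _ ?_
    change |t - g p s| / c = 0
    rw [hs, hr, sub_self, abs_zero, zero_div]
  refine tendsto_iff_dist_tendsto_zero.2 (squeeze_zero (fun _ => dist_nonneg) (fun x => ?_) hlim)
  rw [le_div_iff₀' hc0, Real.dist_eq]
  simpa only [hr] using
    mul_abs_sub_le_of_hasDerivAt (hd x.1) (hc x.1) (Function.invFun (g x.1) x.2) s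

lemma contDiff_invFun_of_hasDerivAt {E : Type*} [NormedAddCommGroup E] [NormedSpace ℝ E]
    [CompleteSpace E] {n : WithTop ℕ∞} (hn : n ≠ 0) {g g' : E → ℝ → ℝ} {c : ℝ}
    (hg : ContDiff ℝ n fun x : E × ℝ => g x.1 x.2) (hc0 : 0 < c)
    (hd : ∀ p s, HasDerivAt (g p) (g' p s) s) (hc : ∀ p s, c ≤ g' p s) :
    ContDiff ℝ n fun x : E × ℝ => Function.invFun (g x.1) x.2 := by
  have hb := fun p => bijective_of_hasDerivAt_of_le hc0 (hd p) (hc p)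
  let Φ : E × ℝ ≃ₜ E × ℝ :=
    { toFun := fun x => (x.1, g x.1 x.2)
      invFun := fun x => (x.1, Function.invFun (g x.1) x.2)
      left_inv := fun x => Prod.ext rfl (Function.leftInverse_invFun (hb x.1).1 x.2)
      right_inv := fun x => Prod.ext rfl (Function.rightInverse_invFun (hb x.1).2 x.2)
      continuous_toFun := continuous_fst.prodMk hg.continuous
      continuous_invFun := continuous_fst.prodMk
        (continuous_invFun_of_hasDerivAt hg.continuous hc0 hd hc) }
  let D : E × ℝ → (E × ℝ →L[ℝ] ℝ) := fderiv ℝ fun x : E × ℝ => g x.1 x.2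
  have hD (x : E × ℝ) : HasFDerivAt (fun x : E × ℝ => g x.1 x.2) (D x) x :=
    (hg.differentiable hn x).hasFDerivAt
  have hD_snd (x : E × ℝ) : D x (0, 1) = g' x.1 x.2 :=
    (HasFDerivAt.comp_hasDerivAt (l := fun x : E × ℝ => g x.1 x.2) x.2 (hD x)
      ((hasDerivAt_const x.2 x.1).prodMk (hasDerivAt_id x.2))).unique (hd x.1 x.2)
  have hne (x : E × ℝ) : g' x.1 x.2 ≠ 0 := (hc0.trans_le (hc x.1 x.2)).ne'
  let Φ' (x : E × ℝ) : (E × ℝ) ≃L[ℝ] (E × ℝ) :=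
    (ContinuousLinearEquiv.refl ℝ E).skewProd
      (ContinuousLinearEquiv.unitsEquivAut ℝ (Units.mk0 _ (hne x)))
      ((D x).comp (ContinuousLinearMap.inl ℝ E ℝ))
  have hΦ' (x : E × ℝ) : HasFDerivAt Φ (Φ' x : E × ℝ →L[ℝ] E × ℝ) x := by
    refine (hasFDerivAt_fst.prodMk (hD x)).congr_fderiv
      (ContinuousLinearMap.ext fun v => Prod.ext rfl ?_)
    have hv : v = v.2 • ((0 : E), (1 : ℝ)) + (v.1, 0) := by ext <;> simp
    change D x v = v.2 * g' x.1 x.2 + D x (v.1, 0)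
    conv_lhs => rw [hv, map_add, map_smul, hD_snd, smul_eq_mul]
  exact contDiff_snd.comp (Φ.contDiff_symm hΦ' (contDiff_fst.prodMk hg))

end ExpandingInverse

section TorusCharacters

lemma torusProj_add (v w : ℝ × ℝ) : torusProj (v + w) = torusProj v + torusProj w := rfl

lemma torusProj_zero : torusProj 0 = 0 := rfl

lemma isOpenQuotientMap_torusProj : IsOpenQuotientMap torusProj :=
  QuotientAddGroup.isOpenQuotientMap_mk.prodMap QuotientAddGroup.isOpenQuotientMap_mk

lemma torus1_coe_eq_coe_iff (x y : ℝ) : (x : Torus1) = y ↔ ∃ n : ℤ, x = y + n := by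
  rw [eq_comm, QuotientAddGroup.eq, AddSubgroup.mem_zmultiples_iff]
  simp only [zsmul_one, neg_add_eq_sub]
  exact exists_congr fun n => by rw [eq_comm, sub_eq_iff_eq_add']

lemma torusProj_eq_torusProj_iff (v w : ℝ × ℝ) :
    torusProj v = torusProj w ↔ ∃ m n : ℤ, v = w + ((m : ℝ), (n : ℝ)) := by
  simp only [torusProj, Prod.ext_iff, torus1_coe_eq_coe_iff, Prod.fst_add, Prod.snd_add,
    exists_and_left, exists_and_right]

/-- The character `(x, y) ↦ exp (2πi (m x + n y))` of the torus. -/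
def torusChar (m n : ℤ) : C(Torus2, ℂ) :=
  ⟨fun z => fourier m z.1 * fourier n z.2, by fun_prop⟩

lemma torusChar_add (m n : ℤ) (z w : Torus2) :
    torusChar m n (z + w) = torusChar m n z * torusChar m n w := by
  simp only [torusChar, ContinuousMap.coe_mk, Prod.fst_add, Prod.snd_add, fourier_apply,
    smul_add, AddCircle.toCircle_add, Circle.coe_mul]
  ring

lemma torusChar_torusProj (m n : ℤ) (w : ℝ × ℝ) : torusChar m n (torusProj w) =
    Complex.exp (((2 * Real.pi * (m * w.1 + n * w.2) : ℝ) : ℂ) * Complex.I) := by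
  simp only [torusChar, ContinuousMap.coe_mk, torusProj, fourier_coe_apply, ← Complex.exp_add]
  congr 1
  push_cast
  ring

lemma norm_torusChar (m n : ℤ) (z : Torus2) : ‖torusChar m n z‖ = 1 := by
  obtain ⟨w, rfl⟩ := isOpenQuotientMap_torusProj.surjective z
  rw [torusChar_torusProj, Complex.norm_exp_ofReal_mul_I]

end TorusCharacters

namespace LiouvilleData

section ResonantCharacters

variable (P : LiouvilleData)

/-- The resonant character `(x, y) ↦ exp (2πi (q i x - p i y))`, which is almost constant along the
lines in the direction `(α, 1)`. -/
def χ (i : ℕ) : C(Torus2, ℂ) := torusChar (P.q i) (-(P.p i))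

/-- The one-parameter subgroup of the torus in the direction `(α, 1)`. -/
def line (v : ℝ) : Torus2 := torusProj (P.α * v, v)

/-- The phase `exp (2πi δ i u)` which the `i`-th resonant character gains along `line u`. -/
def phase (i : ℕ) (u : ℝ) : ℂ := Complex.exp (2 * Real.pi * P.δ i * Complex.I * u)

/-- The integral of `phase i` from `0` to `u`. -/
def phaseInt (i : ℕ) (u : ℝ) : ℂ := (P.phase i u - 1) / (2 * Real.pi * P.δ i * Complex.I)

lemma cast_q_pos (i : ℕ) : (0 : ℝ) < P.q i := by exact_mod_cast P.q_pos i

lemma one_le_cast_q (i : ℕ) : (1 : ℝ) ≤ P.q i := by exact_mod_cast P.q_pos i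

lemma one_le_cast_p (i : ℕ) : (1 : ℝ) ≤ P.p i := by exact_mod_cast P.p_pos i

lemma cast_p_le_cast_q (i : ℕ) : (P.p i : ℝ) ≤ P.q i := by
  have hgap := P.q_mul_α_sub_p i
  have := P.δ_pos i
  have := mul_le_of_le_one_right (P.cast_q_pos i).le P.α_le_one
  linarith

lemma line_add (u v : ℝ) : P.line (u + v) = P.line u + P.line v := by
  rw [line, line, line, ← torusProj_add, mul_add]
  rfl

lemma line_zero : P.line 0 = 0 := by
  rw [line, mul_zero]
  rfl

lemma continuous_line : Continuous P.line :=
  isOpenQuotientMap_torusProj.continuous.comp (by fun_prop)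

lemma norm_mul_χ (c : ℂ) (i : ℕ) (z : Torus2) : ‖c * P.χ i z‖ = ‖c‖ := by
  rw [norm_mul, χ, norm_torusChar, mul_one]

lemma χ_add (i : ℕ) (z w : Torus2) : P.χ i (z + w) = P.χ i z * P.χ i w := torusChar_add _ _ _ _

lemma χ_line (i : ℕ) (v : ℝ) : P.χ i (P.line v) = P.phase i v := by
  rw [χ, line, torusChar_torusProj, phase, ← P.q_mul_α_sub_p]
  congr 1
  push_cast
  ring

lemma two_pi_δ_mul_I_ne_zero (i : ℕ) : 2 * Real.pi * P.δ i * Complex.I ≠ 0 :=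
  mul_ne_zero (by exact_mod_cast (mul_pos Real.two_pi_pos (P.δ_pos i)).ne') Complex.I_ne_zero

lemma norm_phase (i : ℕ) (u : ℝ) : ‖P.phase i u‖ = 1 := by
  rw [← P.χ_line, ← one_mul (P.χ i _), norm_mul_χ, norm_one]

lemma phaseInt_zero (i : ℕ) : P.phaseInt i 0 = 0 := by
  rw [phaseInt, phase, Complex.ofReal_zero, mul_zero, Complex.exp_zero, sub_self, zero_div]

lemma phaseInt_add (i : ℕ) (u v : ℝ) :
    P.phaseInt i (u + v) = P.phaseInt i u + P.phase i u * P.phaseInt i v := by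
  rw [phaseInt, phaseInt, phaseInt, ← χ_line, line_add, χ_add, χ_line, χ_line]
  ring

lemma hasDerivAt_phaseInt (i : ℕ) (u : ℝ) : HasDerivAt (P.phaseInt i) (P.phase i u) u := by
  have hlin := (hasDerivAt_id u).ofReal_comp.const_mul (2 * Real.pi * P.δ i * Complex.I)
  refine ((hlin.cexp.sub_const 1).div_const (2 * Real.pi * P.δ i * Complex.I)).congr_deriv ?_
  rw [Complex.ofReal_one, mul_one, mul_div_cancel_right₀ _ (P.two_pi_δ_mul_I_ne_zero i)]
  rfl

lemma norm_phaseInt_le_abs (i : ℕ) (u : ℝ) : ‖P.phaseInt i u‖ ≤ |u| := by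
  simpa only [phaseInt_zero, sub_zero, one_mul, Real.norm_eq_abs] using
    convex_univ.norm_image_sub_le_of_norm_hasDerivWithin_le
      (fun v _ => (P.hasDerivAt_phaseInt i v).hasDerivWithinAt)
      (fun v _ => (P.norm_phase i v).le) (mem_univ 0) (mem_univ u)

lemma norm_phaseInt_le_inv (i : ℕ) (u : ℝ) : ‖P.phaseInt i u‖ ≤ 1 / (Real.pi * P.δ i) := by
  have hδ := P.δ_pos i
  have hnum : ‖P.phase i u - 1‖ ≤ 2 :=
    (norm_sub_le _ _).trans_eq (by rw [norm_phase, norm_one, one_add_one_eq_two])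
  have hden : ‖2 * Real.pi * P.δ i * Complex.I‖ = 2 * (Real.pi * P.δ i) := by
    rw [norm_mul, Complex.norm_I, mul_one, ← mul_assoc, ← Complex.norm_of_nonneg
      (show 0 ≤ 2 * Real.pi * P.δ i by positivity)]
    push_cast
    rfl
  rw [phaseInt, norm_div, hden]
  calc ‖P.phase i u - 1‖ / (2 * (Real.pi * P.δ i)) ≤ 2 / (2 * (Real.pi * P.δ i)) := by gcongr
    _ = 1 / (Real.pi * P.δ i) := by field_simp

lemma norm_phaseInt_le_one_div_δ (i : ℕ) (u : ℝ) : ‖P.phaseInt i u‖ ≤ 1 / P.δ i :=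
  (P.norm_phaseInt_le_inv i u).trans <| one_div_le_one_div_of_le (P.δ_pos i) <|
    le_mul_of_one_le_left (P.δ_pos i).le (by linarith [Real.pi_gt_three])

end ResonantCharacters

section RapidDecay

variable (P : LiouvilleData)

/-- The sequence `c` decays faster than every power of `q`. -/
def RapidDecay (c : ℕ → ℂ) : Prop := ∀ r : ℕ, Summable fun i => ‖c i‖ * (P.q i : ℝ) ^ r

/-- The coefficients of the `x`-derivative of `∑ i, c i * χ i`. -/
def coeffDx (c : ℕ → ℂ) (i : ℕ) : ℂ := 2 * Real.pi * P.q i * Complex.I * c i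

/-- The coefficients of the `y`-derivative of `∑ i, c i * χ i`. -/
def coeffDy (c : ℕ → ℂ) (i : ℕ) : ℂ := -(2 * Real.pi * P.p i * Complex.I) * c i

/-- The weights `a` as complex coefficients. -/
def coeff (i : ℕ) : ℂ := P.a i

lemma norm_coeff (i : ℕ) : ‖P.coeff i‖ = P.a i := Complex.norm_of_nonneg (P.a_pos i).le

lemma norm_coeffDx (c : ℕ → ℂ) (i : ℕ) : ‖P.coeffDx c i‖ = 2 * Real.pi * P.q i * ‖c i‖ := by
  simp only [coeffDx, norm_mul, Complex.norm_ofNat, Complex.norm_real, Complex.norm_natCast,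
    Complex.norm_I, mul_one, Real.norm_of_nonneg Real.pi_pos.le]

lemma norm_coeffDy (c : ℕ → ℂ) (i : ℕ) : ‖P.coeffDy c i‖ = 2 * Real.pi * P.p i * ‖c i‖ := by
  simp only [coeffDy, norm_neg, norm_mul, Complex.norm_ofNat, Complex.norm_real,
    Complex.norm_natCast, Complex.norm_I, mul_one, Real.norm_of_nonneg Real.pi_pos.le]

lemma rapidDecay_coeff : P.RapidDecay P.coeff := by
  simpa only [RapidDecay, norm_coeff] using P.summable_a_mul_pow

variable {P} {c d : ℕ → ℂ}

namespace RapidDecay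

lemma summable_norm (hc : P.RapidDecay c) : Summable fun i => ‖c i‖ := by
  simpa only [pow_zero, mul_one] using hc 0

lemma of_norm_le (hc : P.RapidDecay c) {C : ℝ} (k : ℕ)
    (hd : ∀ i, ‖d i‖ ≤ C * (P.q i : ℝ) ^ k * ‖c i‖) : P.RapidDecay d := by
  refine fun r => Summable.of_nonneg_of_le (fun i => by positivity) (fun i => ?_)
    ((hc (k + r)).mul_left C)
  calc ‖d i‖ * (P.q i : ℝ) ^ r ≤ C * (P.q i : ℝ) ^ k * ‖c i‖ * (P.q i : ℝ) ^ r := by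
        gcongr
        exact hd i
    _ = C * (‖c i‖ * (P.q i : ℝ) ^ (k + r)) := by ring

lemma coeffDx (hc : P.RapidDecay c) : P.RapidDecay (P.coeffDx c) :=
  hc.of_norm_le 1 fun i => by rw [norm_coeffDx, pow_one]

lemma coeffDy (hc : P.RapidDecay c) : P.RapidDecay (P.coeffDy c) := by
  refine hc.of_norm_le (C := 2 * Real.pi) 1 fun i => ?_
  rw [norm_coeffDy, pow_one]
  have := P.cast_p_le_cast_q i
  gcongr

end RapidDecay

end RapidDecay

section ModulatedSeries

variable (P : LiouvilleData)

/-- The series `∑ i, c i * χ i * h i` of resonant characters whose coefficients are modulated by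
functions of time. It covers both the functions on the torus (`h = 1`) and their integrals along
the lines (`h = phaseInt`). -/
def modSeries (c : ℕ → ℂ) (h : ℕ → ℝ → ℂ) (u : ℝ) (z : Torus2) : ℂ :=
  ∑' i, c i * P.χ i z * h i u

/-- The function `∑ i, c i * χ i` on the torus. -/
def charSeries (c : ℕ → ℂ) (z : Torus2) : ℂ := ∑' i, c i * P.χ i z

/-- The first coordinate of `ℝ × (ℝ × ℝ)`, which is the time. -/
def coordU : ℝ × (ℝ × ℝ) →L[ℝ] ℂ := Complex.ofRealCLM.comp (.fst ℝ ℝ (ℝ × ℝ))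

/-- The second coordinate of `ℝ × (ℝ × ℝ)`, which is the horizontal one. -/
def coordX : ℝ × (ℝ × ℝ) →L[ℝ] ℂ :=
  Complex.ofRealCLM.comp ((ContinuousLinearMap.fst ℝ ℝ ℝ).comp (.snd ℝ ℝ (ℝ × ℝ)))

/-- The third coordinate of `ℝ × (ℝ × ℝ)`, which is the vertical one. -/
def coordY : ℝ × (ℝ × ℝ) →L[ℝ] ℂ :=
  Complex.ofRealCLM.comp ((ContinuousLinearMap.snd ℝ ℝ ℝ).comp (.snd ℝ ℝ (ℝ × ℝ)))

lemma coordU_apply (v : ℝ × (ℝ × ℝ)) : coordU v = v.1 := rfl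

lemma coordX_apply (v : ℝ × (ℝ × ℝ)) : coordX v = v.2.1 := rfl

lemma coordY_apply (v : ℝ × (ℝ × ℝ)) : coordY v = v.2.2 := rfl

/-- The functions `h i` are bounded uniformly in `i` on bounded intervals. -/
def IsUniformlyLocallyBounded (h : ℕ → ℝ → ℂ) : Prop := ∀ R, ∃ H, ∀ i u, |u| < R → ‖h i u‖ ≤ H

lemma isUniformlyLocallyBounded_const (a : ℂ) : IsUniformlyLocallyBounded fun _ _ => a :=
  fun _ => ⟨‖a‖, fun _ _ _ => le_rfl⟩

lemma isUniformlyLocallyBounded_phase : IsUniformlyLocallyBounded P.phase :=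
  fun _ => ⟨1, fun i u _ => (P.norm_phase i u).le⟩

lemma isUniformlyLocallyBounded_phaseInt : IsUniformlyLocallyBounded P.phaseInt :=
  fun R => ⟨R, fun i u hu => (P.norm_phaseInt_le_abs i u).trans hu.le⟩

variable {P} {c : ℕ → ℂ} {h h' : ℕ → ℝ → ℂ}

lemma summable_modSeries (hc : P.RapidDecay c) (hh : IsUniformlyLocallyBounded h) (u : ℝ)
    (z : Torus2) : Summable fun i => c i * P.χ i z * h i u := by
  obtain ⟨H, hH⟩ := hh (|u| + 1)
  refine Summable.of_norm_bounded (hc.summable_norm.mul_right H) fun i => ?_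
  rw [norm_mul, norm_mul_χ]
  gcongr
  exact hH i u (lt_add_one _)

lemma modSeries_one (c : ℕ → ℂ) (u : ℝ) (z : Torus2) :
    P.modSeries c (fun _ _ => 1) u z = P.charSeries c z := by
  simp only [modSeries, charSeries, mul_one]

lemma modSeries_zero (c : ℕ → ℂ) (u : ℝ) (z : Torus2) :
    P.modSeries c (fun _ _ => 0) u z = 0 := by
  simp only [modSeries, mul_zero, tsum_zero]

lemma modSeries_phase (c : ℕ → ℂ) (u : ℝ) (z : Torus2) :
    P.modSeries c P.phase u z = P.charSeries c (z + P.line u) := by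
  simp only [modSeries, charSeries, χ_add, χ_line, mul_assoc]

lemma hasFDerivAt_χ_torusProj (i : ℕ) (x : ℝ × (ℝ × ℝ)) :
    HasFDerivAt (fun x : ℝ × (ℝ × ℝ) => P.χ i (torusProj x.2))
      ((2 * Real.pi * P.q i * Complex.I * P.χ i (torusProj x.2)) • coordX +
        (-(2 * Real.pi * P.p i * Complex.I) * P.χ i (torusProj x.2)) • coordY) x := by
  set D : ℝ × (ℝ × ℝ) →L[ℝ] ℂ :=
    (2 * Real.pi * P.q i * Complex.I) • coordX + (-(2 * Real.pi * P.p i * Complex.I)) • coordY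
  have hχ : (fun x : ℝ × (ℝ × ℝ) => P.χ i (torusProj x.2)) = fun x => Complex.exp (D x) := by
    funext x
    rw [χ, torusChar_torusProj]
    congr 1
    simp only [D, add_apply, smul_apply, coordX_apply,
      coordY_apply, smul_eq_mul]
    push_cast
    ring
  have hχx : P.χ i (torusProj x.2) = Complex.exp (D x) := congrFun hχ x
  rw [hχ, hχx]
  refine D.hasFDerivAt.cexp.congr_fderiv ?_
  simp only [D, smul_add, smul_smul, mul_comm]

lemma hasFDerivAt_mul_χ_mul (c : ℕ → ℂ) (i : ℕ) (x : ℝ × (ℝ × ℝ))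
    (hd : HasDerivAt (h i) (h' i x.1) x.1) :
    HasFDerivAt (fun x : ℝ × (ℝ × ℝ) => c i * P.χ i (torusProj x.2) * h i x.1)
      ((c i * P.χ i (torusProj x.2) * h' i x.1) • coordU +
        (P.coeffDx c i * P.χ i (torusProj x.2) * h i x.1) • coordX +
        (P.coeffDy c i * P.χ i (torusProj x.2) * h i x.1) • coordY) x := by
  have hU : HasFDerivAt (fun x : ℝ × (ℝ × ℝ) => h i x.1) (h' i x.1 • coordU) x := by
    refine (hd.hasFDerivAt.comp x hasFDerivAt_fst).congr_fderiv
      (ContinuousLinearMap.ext fun v => ?_)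
    change (v.1 : ℝ) • h' i x.1 = h' i x.1 * v.1
    rw [Complex.real_smul, mul_comm]
  refine (((hasFDerivAt_χ_torusProj i x).const_mul (c i)).mul hU).congr_fderiv ?_
  simp only [coeffDx, coeffDy, smul_add, smul_smul]
  rw [← add_assoc]
  ring_nf

lemma hasFDerivAt_modSeries (hc : P.RapidDecay c) (hd : ∀ i u, HasDerivAt (h i) (h' i u) u)
    (hh : IsUniformlyLocallyBounded h) (hh' : IsUniformlyLocallyBounded h') (x : ℝ × (ℝ × ℝ)) :
    HasFDerivAt (fun x : ℝ × (ℝ × ℝ) => P.modSeries c h x.1 (torusProj x.2))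
      (P.modSeries c h' x.1 (torusProj x.2) • coordU +
        P.modSeries (P.coeffDx c) h x.1 (torusProj x.2) • coordX +
        P.modSeries (P.coeffDy c) h x.1 (torusProj x.2) • coordY) x := by
  obtain ⟨H, hH⟩ := hh (|x.1| + 1)
  obtain ⟨H', hH'⟩ := hh' (|x.1| + 1)
  set s : Set (ℝ × (ℝ × ℝ)) := Ioo (-(|x.1| + 1)) (|x.1| + 1) ×ˢ univ
  have hxs : x ∈ s := ⟨abs_lt.1 (lt_add_one _), mem_univ _⟩
  have hsU := summable_modSeries hc hh' x.1 (torusProj x.2)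
  have hsX := summable_modSeries hc.coeffDx hh x.1 (torusProj x.2)
  have hsY := summable_modSeries hc.coeffDy hh x.1 (torusProj x.2)
  have hsum := hasFDerivAt_tsum_of_isPreconnected
    ((((hc.summable_norm.mul_right H').mul_right ‖coordU‖).add
      ((hc.coeffDx.summable_norm.mul_right H).mul_right ‖coordX‖)).add
      ((hc.coeffDy.summable_norm.mul_right H).mul_right ‖coordY‖))
    (isOpen_Ioo.prod isOpen_univ) (isPreconnected_Ioo.prod isPreconnected_univ)
    (fun i y _ => hasFDerivAt_mul_χ_mul (P := P) c i y (hd i y.1))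
    (fun i y hy => ?_) hxs (summable_modSeries hc hh x.1 (torusProj x.2)) hxs
  · refine hsum.congr_fderiv ?_
    rw [((hsU.smul_const coordU).add (hsX.smul_const coordX)).tsum_add (hsY.smul_const coordY),
      (hsU.smul_const coordU).tsum_add (hsX.smul_const coordX), hsU.tsum_smul_const,
      hsX.tsum_smul_const, hsY.tsum_smul_const]
    rfl
  · have hy1 : |y.1| < |x.1| + 1 := abs_lt.2 hy.1
    have hHi := hH i y.1 hy1
    have hHi' := hH' i y.1 hy1
    refine norm_add₃_le.trans (add_le_add (add_le_add ?_ ?_) ?_) <;>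
    · rw [norm_smul, norm_mul, norm_mul_χ]
      gcongr

lemma contDiff_modSeries_of_deriv (hd : ∀ i u, HasDerivAt (h i) (h' i u) u)
    (hh : IsUniformlyLocallyBounded h) (hh' : IsUniformlyLocallyBounded h')
    (hsmooth : ∀ c, P.RapidDecay c →
      ContDiff ℝ (⊤ : ℕ∞) fun x : ℝ × (ℝ × ℝ) => P.modSeries c h' x.1 (torusProj x.2))
    (hc : P.RapidDecay c) :
    ContDiff ℝ (⊤ : ℕ∞) fun x : ℝ × (ℝ × ℝ) => P.modSeries c h x.1 (torusProj x.2) := by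
  refine contDiff_infty.2 fun n => ?_
  induction n generalizing c with
  | zero =>
    exact contDiff_zero.2 (continuous_iff_continuousAt.2 fun x =>
      (hasFDerivAt_modSeries hc hd hh hh' x).continuousAt)
  | succ n ih =>
    refine contDiff_succ_iff_hasFDerivAt.2 ⟨_, ?_, hasFDerivAt_modSeries hc hd hh hh'⟩
    have hU := (hsmooth c hc).of_le (show ((n : ℕ∞) : WithTop ℕ∞) ≤ (⊤ : ℕ∞) from
      mod_cast le_top)
    exact ((hU.smul contDiff_const).add ((ih hc.coeffDx).smul contDiff_const)).add
      ((ih hc.coeffDy).smul contDiff_const)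

lemma contDiff_charSeries_torusProj (hc : P.RapidDecay c) :
    ContDiff ℝ (⊤ : ℕ∞) fun w => P.charSeries c (torusProj w) := by
  have hone := contDiff_modSeries_of_deriv (P := P) (h := fun _ _ => 1) (h' := fun _ _ => 0)
    (fun _ u => hasDerivAt_const u _) (isUniformlyLocallyBounded_const 1)
    (isUniformlyLocallyBounded_const 0)
    (fun c _ => by simp only [modSeries_zero, contDiff_const]) hc
  simp only [modSeries_one] at hone
  have hinr : ContDiff ℝ (⊤ : ℕ∞) fun w : ℝ × ℝ => ((0 : ℝ), w) := by fun_prop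
  simpa only [Function.comp_def] using hone.comp hinr

lemma contDiff_modSeries_phaseInt (hc : P.RapidDecay c) :
    ContDiff ℝ (⊤ : ℕ∞) fun x : ℝ × (ℝ × ℝ) => P.modSeries c P.phaseInt x.1 (torusProj x.2) := by
  refine contDiff_modSeries_of_deriv P.hasDerivAt_phaseInt P.isUniformlyLocallyBounded_phaseInt
    P.isUniformlyLocallyBounded_phase (fun c hc => ?_) hc
  simp only [modSeries_phase, line, ← torusProj_add]
  exact (contDiff_charSeries_torusProj hc).comp
    (show ContDiff ℝ _ fun x : ℝ × (ℝ × ℝ) => x.2 + (P.α * x.1, x.1) by fun_prop)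

end ModulatedSeries

section ErgodicIntegral

/-- The integral of the real part of `charSeries c` along `z + line v`, `0 ≤ v ≤ u`, given
by its series expansion. -/
def ergodicInt (P : LiouvilleData) (c : ℕ → ℂ) (u : ℝ) (z : Torus2) : ℝ :=
  (P.modSeries c P.phaseInt u z).re

variable {P : LiouvilleData} {c : ℕ → ℂ}

lemma hasDerivAt_modSeries_comp {h h' : ℕ → ℝ → ℂ} (hc : P.RapidDecay c)
    (hd : ∀ i u, HasDerivAt (h i) (h' i u) u) (hh : IsUniformlyLocallyBounded h)
    (hh' : IsUniformlyLocallyBounded h') {u : ℝ → ℝ} {w : ℝ → ℝ × ℝ} {u' s : ℝ} {w' : ℝ × ℝ}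
    (hu : HasDerivAt u u' s) (hw : HasDerivAt w w' s) :
    HasDerivAt (fun s => P.modSeries c h (u s) (torusProj (w s)))
      (P.modSeries c h' (u s) (torusProj (w s)) * u' +
        P.modSeries (P.coeffDx c) h (u s) (torusProj (w s)) * w'.1 +
        P.modSeries (P.coeffDy c) h (u s) (torusProj (w s)) * w'.2) s := by
  have hcomp := (hasFDerivAt_modSeries hc hd hh hh' (u s, w s)).comp_hasDerivAt s (hu.prodMk hw)
  simpa only [Function.comp_def, add_apply, smul_apply, coordU_apply, coordX_apply, coordY_apply,
    smul_eq_mul] using hcomp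

lemma hasDerivAt_ergodicInt_comp (hc : P.RapidDecay c) {u : ℝ → ℝ} {w : ℝ → ℝ × ℝ} {u' s : ℝ}
    {w' : ℝ × ℝ} (hu : HasDerivAt u u' s) (hw : HasDerivAt w w' s) :
    HasDerivAt (fun s => P.ergodicInt c (u s) (torusProj (w s)))
      ((P.charSeries c (torusProj (w s) + P.line (u s))).re * u' +
        P.ergodicInt (P.coeffDx c) (u s) (torusProj (w s)) * w'.1 +
        P.ergodicInt (P.coeffDy c) (u s) (torusProj (w s)) * w'.2) s := by
  have hseries := hasDerivAt_modSeries_comp hc P.hasDerivAt_phaseInt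
    P.isUniformlyLocallyBounded_phaseInt P.isUniformlyLocallyBounded_phase hu hw
  refine (Complex.reCLM.hasFDerivAt.comp_hasDerivAt s hseries).congr_deriv ?_
  simp only [modSeries_phase, ergodicInt, Complex.reCLM_apply, Complex.add_re,
    Complex.re_mul_ofReal]

lemma hasDerivAt_ergodicInt (hc : P.RapidDecay c) (u : ℝ) (z : Torus2) :
    HasDerivAt (fun u => P.ergodicInt c u z) (P.charSeries c (z + P.line u)).re u := by
  obtain ⟨w, rfl⟩ := isOpenQuotientMap_torusProj.surjective z
  simpa only [mul_one, Prod.fst_zero, Prod.snd_zero, mul_zero, add_zero] using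
    hasDerivAt_ergodicInt_comp hc (hasDerivAt_id' u) (hasDerivAt_const u w)

lemma hasDerivAt_charSeries_comp (hc : P.RapidDecay c) {w : ℝ → ℝ × ℝ} {s : ℝ} {w' : ℝ × ℝ}
    (hw : HasDerivAt w w' s) :
    HasDerivAt (fun s => P.charSeries c (torusProj (w s)))
      (P.charSeries (P.coeffDx c) (torusProj (w s)) * w'.1 +
        P.charSeries (P.coeffDy c) (torusProj (w s)) * w'.2) s := by
  simpa only [modSeries_one, modSeries_zero, zero_mul, zero_add] using
    hasDerivAt_modSeries_comp hc (h := fun _ _ => 1) (h' := fun _ _ => 0)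
      (fun _ u => hasDerivAt_const u _) (isUniformlyLocallyBounded_const 1)
      (isUniformlyLocallyBounded_const 0) (hasDerivAt_const s (0 : ℝ)) hw

lemma norm_charSeries_le (hc : P.RapidDecay c) (z : Torus2) :
    ‖P.charSeries c z‖ ≤ ∑' i, ‖c i‖ :=
  tsum_of_norm_bounded hc.summable_norm.hasSum fun i => (P.norm_mul_χ (c i) i z).le

lemma abs_ergodicInt_le (hc : P.RapidDecay c) {u r : ℝ} (hu : |u| ≤ r) (z : Torus2) :
    |P.ergodicInt c u z| ≤ ∑' i, ‖c i‖ * min r (1 / P.δ i) := by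
  have hmin (i : ℕ) : 0 ≤ min r (1 / P.δ i) :=
    le_min ((abs_nonneg u).trans hu) (one_div_nonneg.2 (P.δ_pos i).le)
  have hsum : Summable fun i => ‖c i‖ * min r (1 / P.δ i) :=
    Summable.of_nonneg_of_le (fun i => mul_nonneg (norm_nonneg _) (hmin i))
      (fun i => mul_le_mul_of_nonneg_left (min_le_left _ _) (norm_nonneg _))
      (hc.summable_norm.mul_right r)
  refine (Complex.abs_re_le_norm _).trans (tsum_of_norm_bounded hsum.hasSum fun i => ?_)
  rw [norm_mul, norm_mul_χ]
  gcongr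
  exact le_min ((P.norm_phaseInt_le_abs i u).trans hu) (P.norm_phaseInt_le_one_div_δ i u)

lemma ergodicInt_zero (c : ℕ → ℂ) (z : Torus2) : P.ergodicInt c 0 z = 0 := by
  simp only [ergodicInt, modSeries, phaseInt_zero, mul_zero, tsum_zero, Complex.zero_re]

lemma ergodicInt_add (hc : P.RapidDecay c) (u v : ℝ) (z : Torus2) :
    P.ergodicInt c (u + v) z = P.ergodicInt c u z + P.ergodicInt c v (z + P.line u) := by
  have hsum := summable_modSeries hc P.isUniformlyLocallyBounded_phaseInt
  rw [ergodicInt, ergodicInt, ergodicInt, ← Complex.add_re, modSeries, modSeries, modSeries,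
    ← (hsum u z).tsum_add (hsum v (z + P.line u))]
  congr 2
  funext i
  rw [phaseInt_add, χ_add, χ_line]
  ring

lemma continuous_ergodicInt (hc : P.RapidDecay c) :
    Continuous fun x : ℝ × Torus2 => P.ergodicInt c x.1 x.2 :=
  (IsOpenQuotientMap.id.prodMap isOpenQuotientMap_torusProj).isQuotientMap.continuous_iff.2
    (Complex.continuous_re.comp (contDiff_modSeries_phaseInt hc).continuous)

lemma continuous_charSeries (hc : P.RapidDecay c) : Continuous (P.charSeries c) :=
  isOpenQuotientMap_torusProj.isQuotientMap.continuous_iff.2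
    (contDiff_charSeries_torusProj hc).continuous

end ErgodicIntegral

section TimeChange

variable (P : LiouvilleData)

/-- The density of the invariant measure of `flow`. -/
def density (z : Torus2) : ℝ := 1 + (P.charSeries P.coeff z).re

/-- The time that the flow with speed `1 / density` in the direction `(α, 1)` takes to get from `z`
to `z + line u`. -/
def clock (u : ℝ) (z : Torus2) : ℝ := u + P.ergodicInt P.coeff u z

/-- The parameter `u` for which the time-changed flow takes time `t` from `z` to `z + line u`. -/
def clockInv (t : ℝ) (z : Torus2) : ℝ := Function.invFun (fun u => P.clock u z) t

/-- The linear flow in the direction `(α, 1)`, reparametrised to have speed `1 / density`. -/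
def flow (t : ℝ) (z : Torus2) : Torus2 := z + P.line (P.clockInv t z)

lemma abs_density_sub_one_le (z : Torus2) : |P.density z - 1| ≤ 1 / 2 := by
  rw [density, add_sub_cancel_left]
  refine (Complex.abs_re_le_norm _).trans ((norm_charSeries_le P.rapidDecay_coeff z).trans ?_)
  simpa only [norm_coeff] using P.tsum_a_le

lemma half_le_density (z : Torus2) : 1 / 2 ≤ P.density z := by
  linarith [(abs_le.1 (P.abs_density_sub_one_le z)).1]

lemma density_pos (z : Torus2) : 0 < P.density z := one_half_pos.trans_le (P.half_le_density z)

lemma density_le (z : Torus2) : P.density z ≤ 3 / 2 := by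
  linarith [(abs_le.1 (P.abs_density_sub_one_le z)).2]

lemma continuous_density : Continuous P.density :=
  continuous_const.add (Complex.continuous_re.comp (continuous_charSeries P.rapidDecay_coeff))

lemma hasDerivAt_clock (u : ℝ) (z : Torus2) :
    HasDerivAt (fun u => P.clock u z) (P.density (z + P.line u)) u :=
  (hasDerivAt_id u).add (hasDerivAt_ergodicInt P.rapidDecay_coeff u z)

lemma continuous_clock : Continuous fun x : ℝ × Torus2 => P.clock x.1 x.2 :=
  continuous_fst.add (continuous_ergodicInt P.rapidDecay_coeff)

lemma clock_zero (z : Torus2) : P.clock 0 z = 0 := by rw [clock, ergodicInt_zero, add_zero]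

lemma clock_add (u v : ℝ) (z : Torus2) :
    P.clock (u + v) z = P.clock u z + P.clock v (z + P.line u) := by
  rw [clock, clock, clock, ergodicInt_add P.rapidDecay_coeff]
  ring

lemma bijective_clock (z : Torus2) : Function.Bijective fun u => P.clock u z :=
  bijective_of_hasDerivAt_of_le one_half_pos (fun u => P.hasDerivAt_clock u z)
    fun _ => P.half_le_density _

lemma clock_clockInv (t : ℝ) (z : Torus2) : P.clock (P.clockInv t z) z = t :=
  Function.rightInverse_invFun (P.bijective_clock z).2 t

lemma clockInv_clock (u : ℝ) (z : Torus2) : P.clockInv (P.clock u z) z = u :=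
  Function.leftInverse_invFun (P.bijective_clock z).1 u

lemma clockInv_zero (z : Torus2) : P.clockInv 0 z = 0 := by
  simpa only [clock_zero] using P.clockInv_clock 0 z

lemma abs_sub_le_two_mul_abs_clock_sub (u v : ℝ) (z : Torus2) :
    |u - v| ≤ 2 * |P.clock u z - P.clock v z| := by
  linarith [mul_abs_sub_le_of_hasDerivAt (fun u => P.hasDerivAt_clock u z)
    (fun _ => P.half_le_density _) u v]

lemma abs_clockInv_sub_le (t t' : ℝ) (z : Torus2) :
    |P.clockInv t z - P.clockInv t' z| ≤ 2 * |t - t'| := by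
  simpa only [clock_clockInv] using
    P.abs_sub_le_two_mul_abs_clock_sub (P.clockInv t z) (P.clockInv t' z) z

lemma abs_clockInv_le (t : ℝ) (z : Torus2) : |P.clockInv t z| ≤ 2 * |t| := by
  simpa only [clockInv_zero, sub_zero] using P.abs_clockInv_sub_le t 0 z

lemma continuous_clockInv : Continuous fun x : Torus2 × ℝ => P.clockInv x.2 x.1 :=
  continuous_invFun_of_hasDerivAt (P.continuous_clock.comp continuous_swap) one_half_pos
    (fun z u => P.hasDerivAt_clock u z) fun _ _ => P.half_le_density _

lemma contDiff_clockInv :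
    ContDiff ℝ (⊤ : ℕ∞) fun x : (ℝ × ℝ) × ℝ => P.clockInv x.2 (torusProj x.1) := by
  have hint := Complex.reCLM.contDiff.comp
    ((contDiff_modSeries_phaseInt P.rapidDecay_coeff).comp
      (contDiff_snd.prodMk (contDiff_fst (𝕜 := ℝ) (E := ℝ × ℝ) (F := ℝ))))
  exact contDiff_invFun_of_hasDerivAt (g := fun w u => P.clock u (torusProj w)) (by simp)
    (contDiff_snd.add hint) one_half_pos (fun w u => P.hasDerivAt_clock u (torusProj w))
    fun _ _ => P.half_le_density _

lemma flow_zero (z : Torus2) : P.flow 0 z = z := by rw [flow, clockInv_zero, line_zero, add_zero]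

lemma continuous_flow : Continuous fun x : Torus2 × ℝ => P.flow x.2 x.1 :=
  continuous_fst.add (P.continuous_line.comp P.continuous_clockInv)

lemma flow_clock (u : ℝ) (z : Torus2) : P.flow (P.clock u z) z = z + P.line u := by
  rw [flow, clockInv_clock]

lemma clockInv_add (s t : ℝ) (z : Torus2) :
    P.clockInv (s + t) z = P.clockInv s z + P.clockInv t (P.flow s z) := by
  refine (P.bijective_clock z).1 ?_
  change P.clock (P.clockInv (s + t) z) z = P.clock (P.clockInv s z + P.clockInv t (P.flow s z)) z
  rw [clock_add, clock_clockInv, clock_clockInv, ← flow, clock_clockInv]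

lemma flow_add (s t : ℝ) (z : Torus2) : P.flow (s + t) z = P.flow t (P.flow s z) := by
  rw [flow, clockInv_add, line_add, ← add_assoc, ← flow, ← flow]

lemma flow_flow_neg (t : ℝ) (z : Torus2) : P.flow t (P.flow (-t) z) = z := by
  rw [← flow_add, neg_add_cancel, flow_zero]

lemma differentiableAt_clockInv_horizontal (t : ℝ) (w : ℝ × ℝ) :
    DifferentiableAt ℝ (fun s : ℝ => P.clockInv t (torusProj (w + (s, 0)))) 0 := by
  have hcurve : ContDiff ℝ (⊤ : ℕ∞) fun s : ℝ => (w + (s, 0), t) := by fun_prop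
  have hcomp : ContDiff ℝ (⊤ : ℕ∞) fun s : ℝ => P.clockInv t (torusProj (w + (s, 0))) := by
    simpa only [Function.comp_def] using P.contDiff_clockInv.comp hcurve
  exact hcomp.differentiable (by simp) 0

lemma hasDerivAt_clockInv_horizontal (t : ℝ) (z : Torus2) :
    HasDerivAt (fun s : ℝ => P.clockInv t (z + torusProj (s, 0)))
      (-P.ergodicInt (P.coeffDx P.coeff) (P.clockInv t z) z / P.density (P.flow t z)) 0 := by
  obtain ⟨w, rfl⟩ := isOpenQuotientMap_torusProj.surjective z
  simp only [← torusProj_add]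
  have hu := (P.differentiableAt_clockInv_horizontal t w).hasDerivAt
  set u' := deriv (fun s : ℝ => P.clockInv t (torusProj (w + (s, 0)))) 0
  have hw : HasDerivAt (fun s : ℝ => w + (s, 0)) ((1 : ℝ), (0 : ℝ)) 0 :=
    ((hasDerivAt_id (0 : ℝ)).prodMk (hasDerivAt_const _ _)).const_add w
  have hclock := hu.add (hasDerivAt_ergodicInt_comp P.rapidDecay_coeff hu hw)
  have hw0 : w + ((0 : ℝ), (0 : ℝ)) = w := add_zero w
  have hconst := (hasDerivAt_const (0 : ℝ) t).unique (hclock.congr_of_eventuallyEq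
    (Eventually.of_forall fun s => (P.clock_clockInv t (torusProj (w + (s, 0)))).symm))
  rw [hw0, ← flow, mul_one, mul_zero, add_zero] at hconst
  refine hu.congr_deriv (eq_div_of_mul_eq (P.density_pos _).ne' ?_)
  rw [density]
  linarith

end TimeChange

section FiberShift

variable (P : LiouvilleData)

/-- The coefficients of the antiderivative of `charSeries coeff` in the vertical direction. -/
def shiftCoeff (i : ℕ) : ℂ := P.coeff i / -(2 * Real.pi * P.p i * Complex.I)

/-- The vertical displacement of `shear`. -/
def shift (z : Torus2) : ℝ := (P.charSeries P.shiftCoeff z).re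

/-- The shear `(x, y) ↦ (x, y + shift (x, y))`, with vertical derivative `density`, which maps the
measure of density `density` to Lebesgue measure. -/
def shear (z : Torus2) : Torus2 := (z.1, z.2 + (P.shift z : Torus1))

/-- The lift of `shear` to the plane. -/
def shearLift (w : ℝ × ℝ) : ℝ × ℝ := (w.1, w.2 + P.shift (torusProj w))

/-- The inverse of `shearLift`. -/
def shearLiftInv (w : ℝ × ℝ) : ℝ × ℝ :=
  (w.1, Function.invFun (fun s => s + P.shift (torusProj (w.1, s))) w.2)

lemma rapidDecay_shiftCoeff : P.RapidDecay P.shiftCoeff := by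
  refine P.rapidDecay_coeff.of_norm_le (C := 1) 0 fun i => ?_
  have hp := P.one_le_cast_p i
  have hden : ‖-(2 * Real.pi * P.p i * Complex.I)‖ = 2 * Real.pi * P.p i := by
    simp only [norm_neg, norm_mul, Complex.norm_ofNat, Complex.norm_real, Complex.norm_natCast,
      Complex.norm_I, mul_one, Real.norm_of_nonneg Real.pi_pos.le]
  rw [shiftCoeff, norm_div, hden, pow_zero, mul_one, one_mul]
  exact div_le_self (norm_nonneg _) (by nlinarith [Real.pi_gt_three])

lemma coeffDy_shiftCoeff : P.coeffDy P.shiftCoeff = P.coeff := by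
  funext i
  have hp : 2 * Real.pi * P.p i * Complex.I ≠ 0 := by
    have := (P.p_pos i).ne'
    have := Complex.ofReal_ne_zero.2 Real.pi_ne_zero
    simp only [ne_eq, mul_eq_zero, Nat.cast_eq_zero, Complex.I_ne_zero, OfNat.ofNat_ne_zero, *,
      or_self, not_false_eq_true]
  exact mul_div_cancel₀ _ (neg_ne_zero.2 hp)

lemma continuous_shift : Continuous P.shift :=
  Complex.continuous_re.comp (continuous_charSeries P.rapidDecay_shiftCoeff)

lemma contDiff_shift_torusProj : ContDiff ℝ (⊤ : ℕ∞) fun w => P.shift (torusProj w) :=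
  Complex.reCLM.contDiff.comp (contDiff_charSeries_torusProj P.rapidDecay_shiftCoeff)

lemma hasDerivAt_add_shift (x s : ℝ) :
    HasDerivAt (fun s => s + P.shift (torusProj (x, s))) (P.density (torusProj (x, s))) s := by
  have hcurve : HasDerivAt (fun s : ℝ => (x, s)) ((0 : ℝ), (1 : ℝ)) s :=
    (hasDerivAt_const _ _).prodMk (hasDerivAt_id _)
  have hseries := hasDerivAt_charSeries_comp P.rapidDecay_shiftCoeff hcurve
  refine (hasDerivAt_id s).add
    ((Complex.reCLM.hasFDerivAt.comp_hasDerivAt s hseries).congr_deriv ?_)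
  rw [coeffDy_shiftCoeff, Complex.ofReal_zero, mul_zero, zero_add, Complex.ofReal_one, mul_one]
  rfl

lemma bijective_add_shift (x : ℝ) : Function.Bijective fun s => s + P.shift (torusProj (x, s)) :=
  bijective_of_hasDerivAt_of_le one_half_pos (P.hasDerivAt_add_shift x)
    fun _ => P.half_le_density _

lemma torusProj_shearLift (w : ℝ × ℝ) : torusProj (P.shearLift w) = P.shear (torusProj w) := rfl

lemma shearLift_shearLiftInv (w : ℝ × ℝ) : P.shearLift (P.shearLiftInv w) = w :=
  Prod.ext rfl (Function.rightInverse_invFun (P.bijective_add_shift w.1).2 w.2)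

lemma shearLiftInv_shearLift (w : ℝ × ℝ) : P.shearLiftInv (P.shearLift w) = w :=
  Prod.ext rfl (Function.leftInverse_invFun (P.bijective_add_shift w.1).1 w.2)

lemma shearLift_add_intCast (w : ℝ × ℝ) (m n : ℤ) :
    P.shearLift (w + ((m : ℝ), (n : ℝ))) = P.shearLift w + ((m : ℝ), (n : ℝ)) := by
  rw [shearLift, shearLift, (torusProj_eq_torusProj_iff _ w).2 ⟨m, n, rfl⟩]
  exact Prod.ext rfl (add_right_comm _ _ _)

lemma contDiff_shearLift : ContDiff ℝ (⊤ : ℕ∞) P.shearLift :=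
  contDiff_fst.prodMk (contDiff_snd.add P.contDiff_shift_torusProj)

lemma contDiff_shearLiftInv : ContDiff ℝ (⊤ : ℕ∞) P.shearLiftInv :=
  contDiff_fst.prodMk (contDiff_invFun_of_hasDerivAt
    (g := fun x s => s + P.shift (torusProj (x, s))) (by simp)
    (contDiff_snd.add P.contDiff_shift_torusProj) one_half_pos P.hasDerivAt_add_shift
    fun _ _ => P.half_le_density _)

lemma bijective_shear : Function.Bijective P.shear := by
  refine ⟨fun z z' h => ?_, fun z => ?_⟩
  · obtain ⟨w, rfl⟩ := isOpenQuotientMap_torusProj.surjective z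
    obtain ⟨w', rfl⟩ := isOpenQuotientMap_torusProj.surjective z'
    rw [← torusProj_shearLift, ← torusProj_shearLift, torusProj_eq_torusProj_iff] at h
    obtain ⟨m, n, h⟩ := h
    rw [← shearLift_add_intCast] at h
    exact (torusProj_eq_torusProj_iff _ _).2
      ⟨m, n, Function.LeftInverse.injective P.shearLiftInv_shearLift h⟩
  · obtain ⟨w, rfl⟩ := isOpenQuotientMap_torusProj.surjective z
    exact ⟨torusProj (P.shearLiftInv w), by rw [← torusProj_shearLift, shearLift_shearLiftInv]⟩

lemma continuous_shear : Continuous P.shear :=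
  continuous_fst.prodMk
    (continuous_snd.add ((AddCircle.continuous_mk' 1).comp P.continuous_shift))

/-- The map `shear` as a homeomorphism of the torus. -/
def shearHomeo : Torus2 ≃ₜ Torus2 :=
  Continuous.homeoOfEquivCompactToT2 (f := Equiv.ofBijective P.shear P.bijective_shear)
    P.continuous_shear

lemma shearHomeo_apply (z : Torus2) : P.shearHomeo z = P.shear z := rfl

lemma shearHomeo_symm_torusProj (w : ℝ × ℝ) :
    P.shearHomeo.symm (torusProj w) = torusProj (P.shearLiftInv w) := by
  rw [Homeomorph.symm_apply_eq, shearHomeo_apply, ← torusProj_shearLift, shearLift_shearLiftInv]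

end FiberShift

section SmoothFlow

variable (P : LiouvilleData)

/-- The time-changed flow conjugated by `shear`, so that it preserves Lebesgue measure. -/
def conjFlow (t : ℝ) (z : Torus2) : Torus2 := P.shearHomeo (P.flow t (P.shearHomeo.symm z))

/-- The lift of `flow t` to the plane. -/
def flowLift (t : ℝ) (w : ℝ × ℝ) : ℝ × ℝ :=
  w + (P.α * P.clockInv t (torusProj w), P.clockInv t (torusProj w))

lemma continuous_clockInv_right (t : ℝ) : Continuous (P.clockInv t) := by
  simpa only [Function.comp_def] using P.continuous_clockInv.comp (Continuous.prodMk_left t)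

lemma continuous_flow_right (t : ℝ) : Continuous (P.flow t) := by
  simpa only [Function.comp_def] using P.continuous_flow.comp (Continuous.prodMk_left t)

lemma continuous_conjFlow (t : ℝ) : Continuous (P.conjFlow t) :=
  P.shearHomeo.continuous.comp ((P.continuous_flow_right t).comp P.shearHomeo.symm.continuous)

lemma conjFlow_conjFlow_neg (t : ℝ) (z : Torus2) : P.conjFlow t (P.conjFlow (-t) z) = z := by
  rw [conjFlow, conjFlow, Homeomorph.symm_apply_apply, flow_flow_neg, Homeomorph.apply_symm_apply]

lemma conjFlow_neg_conjFlow (t : ℝ) (z : Torus2) : P.conjFlow (-t) (P.conjFlow t z) = z := by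
  simpa only [neg_neg] using P.conjFlow_conjFlow_neg (-t) z

lemma bijective_conjFlow (t : ℝ) : Function.Bijective (P.conjFlow t) :=
  Function.bijective_iff_has_inverse.2
    ⟨P.conjFlow (-t), P.conjFlow_neg_conjFlow t, P.conjFlow_conjFlow_neg t⟩

lemma invFun_conjFlow (t : ℝ) : Function.invFun (P.conjFlow t) = P.conjFlow (-t) :=
  (Function.leftInverse_invFun (P.bijective_conjFlow t).1).eq_rightInverse
    (P.conjFlow_conjFlow_neg t)

lemma iterate_conjFlow_one (n : ℕ) : (P.conjFlow 1)^[n] = P.conjFlow n := by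
  induction n with
  | zero =>
    funext z
    rw [Function.iterate_zero_apply, conjFlow, Nat.cast_zero, flow_zero,
      Homeomorph.apply_symm_apply]
  | succ n ih =>
    funext z
    rw [Function.iterate_succ_apply', ih, conjFlow, conjFlow, Homeomorph.symm_apply_apply,
      ← flow_add, conjFlow, Nat.cast_succ]

lemma contDiff_flowLift (t : ℝ) : ContDiff ℝ (⊤ : ℕ∞) (P.flowLift t) := by
  have hpair : ContDiff ℝ (⊤ : ℕ∞) fun w : ℝ × ℝ => (w, t) := by fun_prop
  have hclock : ContDiff ℝ (⊤ : ℕ∞) fun w : ℝ × ℝ => P.clockInv t (torusProj w) := by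
    simpa only [Function.comp_def] using P.contDiff_clockInv.comp hpair
  exact contDiff_id.add ((contDiff_const.mul hclock).prodMk hclock)

lemma isLiftOf_conjFlow (t : ℝ) :
    IsLiftOf (P.shearLift ∘ P.flowLift t ∘ P.shearLiftInv) (P.conjFlow t) := by
  intro w
  rw [conjFlow, shearHomeo_symm_torusProj, shearHomeo_apply]
  rfl

lemma isCkTorusDiffeo_conjFlow (t : ℝ) : IsCkTorusDiffeo ⊤ (P.conjFlow t) := by
  have hsmooth (t : ℝ) : ContDiff ℝ (⊤ : ℕ∞) (P.shearLift ∘ P.flowLift t ∘ P.shearLiftInv) :=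
    P.contDiff_shearLift.comp ((P.contDiff_flowLift t).comp P.contDiff_shearLiftInv)
  refine ⟨P.bijective_conjFlow t, ⟨_, hsmooth t, P.isLiftOf_conjFlow t⟩, _, hsmooth (-t), ?_⟩
  rw [invFun_conjFlow]
  exact P.isLiftOf_conjFlow (-t)

end SmoothFlow

end LiouvilleData

instance isProbabilityMeasure_volume_torus1 : IsProbabilityMeasure (volume : Measure Torus1) :=
  ⟨UnitAddCircle.measure_univ⟩

instance isProbabilityMeasure_volume_torus2 : IsProbabilityMeasure (volume : Measure Torus2) :=
  inferInstanceAs (IsProbabilityMeasure ((volume : Measure Torus1).prod volume))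

instance isAddHaarMeasure_volume_torus2 : (volume : Measure Torus2).IsAddHaarMeasure :=
  inferInstanceAs (((volume : Measure Torus1).prod volume).IsAddHaarMeasure)

section AveragesAlongTranslates

lemma integrable_of_continuous {X E : Type*} [TopologicalSpace X] [CompactSpace X]
    [MeasurableSpace X] [OpensMeasurableSpace X] [NormedAddCommGroup E]
    (μ : Measure X) [IsFiniteMeasure μ] {f : X → E} (hf : Continuous f) : Integrable f μ :=
  hf.integrable_of_hasCompactSupport (HasCompactSupport.of_compactSpace f)

variable {G E : Type*} [TopologicalSpace G] [CompactSpace G] [MeasurableSpace G]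
  [BorelSpace G] [NormedAddCommGroup E] [NormedSpace ℝ E]

lemma intervalIntegral_integral_swap_of_continuous [SecondCountableTopology G] (μ : Measure G)
    [IsFiniteMeasure μ] {f : ℝ → G → E} (hf : Continuous (Function.uncurry f)) (a b : ℝ) :
    ∫ t in a..b, ∫ z, f t z ∂μ = ∫ z, (∫ t in a..b, f t z) ∂μ := by
  refine intervalIntegral_integral_swap ?_
  obtain ⟨C, hC⟩ := ((isCompact_uIcc (a := a) (b := b)).prod (isCompact_univ (X := G)))
    |>.exists_bound_of_continuousOn hf.continuousOn
  have : IsFiniteMeasure ((volume : Measure ℝ).restrict (uIoc a b)) :=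
    ⟨by simp only [uIoc, Measure.restrict_apply_univ, Real.volume_Ioc, ENNReal.ofReal_lt_top]⟩
  refine Integrable.of_bound (C := C) hf.aestronglyMeasurable ?_
  have hfst : ∀ᵐ x ∂((volume.restrict (uIoc a b)).prod μ), x.1 ∈ uIoc a b :=
    Measure.quasiMeasurePreserving_fst.ae (ae_restrict_mem measurableSet_uIoc)
  filter_upwards [hfst] with x hx
  exact hC x ⟨uIoc_subset_uIcc hx, trivial⟩

variable [AddGroup G] [IsTopologicalAddGroup G]

lemma integral_intervalIntegral_add_right [SecondCountableTopology G] [CompleteSpace E]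
    (μ : Measure G) [IsFiniteMeasure μ] [μ.IsAddRightInvariant] {f : G → E} (hf : Continuous f)
    {γ : ℝ → G} (hγ : Continuous γ) (a b : ℝ) :
    ∫ z, (∫ t in a..b, f (z + γ t)) ∂μ = (b - a) • ∫ z, f z ∂μ := by
  rw [← intervalIntegral_integral_swap_of_continuous μ (f := fun t z => f (z + γ t))
    (hf.comp (continuous_snd.add (hγ.comp continuous_fst)))]
  simp only [integral_add_right_eq_self, intervalIntegral.integral_const]

lemma integral_add_right_sub_self (μ : Measure G) [IsFiniteMeasure μ] [μ.IsAddRightInvariant]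
    {f : G → E} (hf : Continuous f) (w : G) : ∫ z, (f (z + w) - f z) ∂μ = 0 := by
  rw [integral_sub (integrable_of_continuous μ (f := fun z => f (z + w)) (by fun_prop))
    (integrable_of_continuous μ hf), integral_add_right_eq_self, sub_self]

end AveragesAlongTranslates

section DirectionalDerivatives

lemma continuous_torusProj_smul (w : ℝ × ℝ) : Continuous fun h : ℝ => torusProj (h • w) :=
  isOpenQuotientMap_torusProj.continuous.comp (continuous_id.smul continuous_const)

lemma hasDerivAt_add_torusProj_smul {f f' : Torus2 → ℂ} {w : ℝ × ℝ}
    (hd : ∀ z, HasDerivAt (fun h : ℝ => f (z + torusProj (h • w))) (f' z) 0) (z : Torus2)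
    (h : ℝ) :
    HasDerivAt (fun h : ℝ => f (z + torusProj (h • w))) (f' (z + torusProj (h • w))) h := by
  have hshift : HasDerivAt (fun k : ℝ => f (z + torusProj (h • w) + torusProj (k • w)))
      (f' (z + torusProj (h • w))) (h - h) := by
    rw [sub_self]
    exact hd _
  simpa only [add_assoc, ← torusProj_add, ← add_smul, add_sub_cancel] using
    hshift.comp_sub_const h h

lemma integral_eq_zero_of_hasDerivAt {f f' : Torus2 → ℂ} (hf : Continuous f) (hf' : Continuous f')
    {w : ℝ × ℝ} (hd : ∀ z, HasDerivAt (fun h : ℝ => f (z + torusProj (h • w))) (f' z) 0) :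
    ∫ z, f' z = 0 := by
  have hγ := continuous_torusProj_smul w
  have hftc : ∀ z, ∫ h in (0 : ℝ)..1, f' (z + torusProj (h • w)) = f (z + torusProj w) - f z := by
    intro z
    rw [intervalIntegral.integral_eq_sub_of_hasDerivAt
      (fun h _ => hasDerivAt_add_torusProj_smul hd z h)
      ((hf'.comp (continuous_const.add hγ)).intervalIntegrable _ _),
      one_smul, zero_smul, torusProj_zero, add_zero]
  have havg := integral_intervalIntegral_add_right volume hf' hγ 0 1
  rw [sub_zero, one_smul] at havg
  rw [← havg, integral_congr_ae (.of_forall hftc), integral_add_right_sub_self volume hf]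

lemma hasDerivAt_torusChar (m n : ℤ) (w : ℝ × ℝ) (z : Torus2) :
    HasDerivAt (fun h : ℝ => torusChar m n (z + torusProj (h • w)))
      (((2 * Real.pi * (m * w.1 + n * w.2) : ℝ) : ℂ) * Complex.I * torusChar m n z) 0 := by
  have hlin : HasDerivAt (fun h : ℝ =>
      ((2 * Real.pi * (m * (h • w).1 + n * (h • w).2) : ℝ) : ℂ) * Complex.I)
      (((2 * Real.pi * (m * w.1 + n * w.2) : ℝ) : ℂ) * Complex.I) 0 := by
    refine HasDerivAt.mul_const (HasDerivAt.ofReal_comp ?_) _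
    have hid := (hasDerivAt_id (0 : ℝ)).const_mul (2 * Real.pi * (m * w.1 + n * w.2))
    rw [mul_one] at hid
    refine hid.congr_of_eventuallyEq (.of_forall fun h => ?_)
    simp only [Prod.smul_fst, Prod.smul_snd, smul_eq_mul, id]
    ring
  simp only [torusChar_add, torusChar_torusProj]
  refine (hlin.cexp.const_mul (torusChar m n z)).congr_deriv ?_
  simp only [zero_smul, Prod.fst_zero, Prod.snd_zero, mul_zero, add_zero, Complex.ofReal_zero,
    zero_mul, Complex.exp_zero, one_mul]
  ring

lemma integral_torusChar_of_ne {m n : ℤ} {w : ℝ × ℝ} (hw : (m * w.1 + n * w.2 : ℝ) ≠ 0) :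
    ∫ z, torusChar m n z = 0 := by
  have hzero := integral_eq_zero_of_hasDerivAt (torusChar m n).continuous (by fun_prop)
    (hasDerivAt_torusChar m n w)
  rw [integral_const_mul] at hzero
  refine (mul_eq_zero.1 hzero).resolve_left (mul_ne_zero ?_ Complex.I_ne_zero)
  exact Complex.ofReal_ne_zero.2 (mul_ne_zero (mul_ne_zero two_ne_zero Real.pi_ne_zero) hw)

lemma integral_torusChar {m n : ℤ} (h : (m, n) ≠ 0) : ∫ z, torusChar m n z = 0 := by
  by_cases hm : m = 0
  · have hn : n ≠ 0 := fun hn => h (Prod.ext hm hn)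
    exact integral_torusChar_of_ne (w := (0, 1)) (by simpa using hn)
  · exact integral_torusChar_of_ne (w := (1, 0)) (by simpa using hm)

end DirectionalDerivatives

namespace LiouvilleData

section InvariantMeasure

variable (P : LiouvilleData)

/-- The measure of density `density`, which `flow` preserves. -/
def flowMeasure : Measure Torus2 := volume.withDensity fun z => ENNReal.ofReal (P.density z)

instance isFiniteMeasure_flowMeasure : IsFiniteMeasure P.flowMeasure :=
  isFiniteMeasure_withDensity_ofReal
    (integrable_of_continuous volume P.continuous_density).hasFiniteIntegral

lemma integral_flowMeasure {E : Type*} [NormedAddCommGroup E] [NormedSpace ℝ E]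
    (f : Torus2 → E) : ∫ z, f z ∂P.flowMeasure = ∫ z, P.density z • f z := by
  rw [flowMeasure, integral_withDensity_eq_integral_toReal_smul
    P.continuous_density.measurable.ennreal_ofReal (.of_forall fun _ => ENNReal.ofReal_lt_top)]
  simp only [ENNReal.toReal_ofReal (P.density_pos _).le]

lemma hasDerivAt_shift_vertical (z : Torus2) (h : ℝ) :
    HasDerivAt (fun h => h + P.shift (z + torusProj (0, h)))
      (P.density (z + torusProj (0, h))) h := by
  obtain ⟨w, rfl⟩ := isOpenQuotientMap_torusProj.surjective z
  have hline := ((P.hasDerivAt_add_shift w.1 (w.2 + h)).comp_const_add w.2 h).sub_const w.2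
  have hproj : ∀ k, torusProj w + torusProj (0, k) = torusProj (w.1, w.2 + k) := fun k => by
    rw [← torusProj_add, Prod.add_def, add_zero]
  simp only [hproj]
  refine hline.congr_of_eventuallyEq (.of_forall fun k => ?_)
  ring

lemma shear_add_vertical (z : Torus2) (h : ℝ) : P.shear (z + torusProj (0, h)) =
    z + torusProj (0, h + P.shift (z + torusProj (0, h))) := by
  refine Prod.ext rfl ?_
  simp only [shear, torusProj, Prod.snd_add, AddCircle.coe_add]
  rw [add_assoc]

lemma torusProj_zero_add_one (h : ℝ) : torusProj (0, h + 1) = torusProj (0, h) :=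
  (torusProj_eq_torusProj_iff _ _).2 ⟨0, 1, by simp⟩

/-- On each vertical circle, substitute `u = h + shift (z + (0, h))`. -/
lemma integral_density_mul_comp_shear {f : Torus2 → ℝ} (hf : Continuous f) :
    ∫ z, P.density z * f (P.shear z) = ∫ z, f z := by
  have hγ : Continuous fun h : ℝ => torusProj (0, h) :=
    isOpenQuotientMap_torusProj.continuous.comp (Continuous.prodMk_right 0)
  have hfiber : ∀ z, ∫ h in (0 : ℝ)..1, P.density (z + torusProj (0, h)) *
      f (P.shear (z + torusProj (0, h))) = ∫ u in (0 : ℝ)..1, f (z + torusProj (0, u)) := by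
    intro z
    have hsubst := intervalIntegral.integral_comp_mul_deriv (a := 0) (b := 1)
      (g := fun u => f (z + torusProj (0, u))) (fun h _ => P.hasDerivAt_shift_vertical z h)
      (P.continuous_density.comp (continuous_const.add hγ)).continuousOn
      (hf.comp (continuous_const.add hγ))
    have hper : Function.Periodic (fun u => f (z + torusProj (0, u))) 1 := fun u => by
      simp only [torusProj_zero_add_one]
    have hone : torusProj (0, 1) = torusProj (0, 0) := by simpa using torusProj_zero_add_one 0
    rw [hone, zero_add, add_comm 1, hper.intervalIntegral_add_eq _ 0, zero_add] at hsubst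
    simpa only [Function.comp_apply, shear_add_vertical, mul_comm] using hsubst
  have hleft := integral_intervalIntegral_add_right volume
    (P.continuous_density.mul (hf.comp P.continuous_shear)) hγ 0 1
  have hright := integral_intervalIntegral_add_right volume hf hγ 0 1
  rw [sub_zero, one_smul] at hleft hright
  exact hleft.symm.trans ((integral_congr_ae (.of_forall hfiber)).trans hright)

lemma measurePreserving_shearHomeo :
    MeasurePreserving P.shearHomeo.toMeasurableEquiv P.flowMeasure volume := by
  refine ⟨P.continuous_shear.measurable, ?_⟩
  have : IsFiniteMeasure (P.flowMeasure.map P.shear) := Measure.isFiniteMeasure_map _ _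
  refine ext_of_forall_integral_eq_of_IsFiniteMeasure (μ := P.flowMeasure.map P.shear) fun f => ?_
  rw [integral_map P.continuous_shear.measurable.aemeasurable
    f.continuous.aestronglyMeasurable, integral_flowMeasure]
  exact P.integral_density_mul_comp_shear f.continuous

lemma continuous_flow_orbit (z : Torus2) : Continuous fun t => P.flow t z := by
  simpa only [Function.comp_def] using P.continuous_flow.comp (Continuous.prodMk_right z)

lemma flow_add_line (s u : ℝ) (z : Torus2) :
    P.flow s (z + P.line u) = P.flow (P.clock u z + s) z := by
  rw [flow_add, flow_clock]

/-- Average over the orbit segment from `z` to `z + line 1`, substituting `τ = clock u z + t`. -/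
lemma integral_density_mul_comp_flow_eq {f : Torus2 → ℝ} (hf : Continuous f) (t : ℝ) :
    ∫ z, P.density z * f (P.flow t z) = ∫ z, ∫ τ in t..P.clock 1 z + t, f (P.flow τ z) := by
  have havg := integral_intervalIntegral_add_right volume
    (P.continuous_density.mul (hf.comp (P.continuous_flow_right t))) P.continuous_line 0 1
  rw [sub_zero, one_smul] at havg
  refine havg.symm.trans (integral_congr_ae (.of_forall fun z => ?_))
  have hsubst := intervalIntegral.integral_comp_mul_deriv (a := 0) (b := 1)
    (f := fun u => P.clock u z + t) (g := fun τ => f (P.flow τ z))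
    (fun u _ => (P.hasDerivAt_clock u z).add_const t)
    (P.continuous_density.comp (continuous_const.add P.continuous_line)).continuousOn
    (hf.comp (P.continuous_flow_orbit z))
  simp only [Function.comp_apply, clock_zero, zero_add, ← flow_add_line] at hsubst
  simpa only [Pi.mul_apply, Function.comp_apply, mul_comm] using hsubst

lemma integral_density_mul_comp_flow {f : Torus2 → ℝ} (hf : Continuous f) (t : ℝ) :
    ∫ z, P.density z * f (P.flow t z) = ∫ z, P.density z * f z := by
  have horbit : Continuous fun x : Torus2 × ℝ => f (P.flow x.2 x.1) := hf.comp P.continuous_flow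
  let g : Torus2 → ℝ := fun z => ∫ τ in (0 : ℝ)..t, f (P.flow τ z)
  have hg : Continuous g :=
    intervalIntegral.continuous_parametric_intervalIntegral_of_continuous' horbit 0 t
  have hcoboundary : ∀ z, ∫ τ in t..P.clock 1 z + t, f (P.flow τ z) =
      (∫ τ in (0 : ℝ)..P.clock 1 z, f (P.flow τ z)) + (g (z + P.line 1) - g z) := by
    intro z
    have hint : ∀ a b, IntervalIntegrable (fun τ => f (P.flow τ z)) volume a b := fun a b =>
      (hf.comp (P.continuous_flow_orbit z)).intervalIntegrable a b
    have hend : ∫ τ in P.clock 1 z..P.clock 1 z + t, f (P.flow τ z) = g (z + P.line 1) := by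
      simp only [g, flow_add_line]
      rw [intervalIntegral.integral_comp_add_left (fun τ => f (P.flow τ z)), add_zero]
    rw [← hend, ← intervalIntegral.integral_interval_sub_left (hint 0 _) (hint 0 t),
      ← intervalIntegral.integral_add_adjacent_intervals (hint 0 (P.clock 1 z)) (hint _ _)]
    ring
  have hstart : Continuous fun z => ∫ τ in (0 : ℝ)..P.clock 1 z, f (P.flow τ z) :=
    intervalIntegral.continuous_parametric_intervalIntegral_of_continuous horbit
      (P.continuous_clock.comp (Continuous.prodMk_right 1))
  have hzero := P.integral_density_mul_comp_flow_eq hf 0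
  simp only [flow_zero, add_zero] at hzero
  rw [hzero, integral_density_mul_comp_flow_eq P hf t, integral_congr_ae (.of_forall hcoboundary),
    integral_add (integrable_of_continuous _ hstart)
      (integrable_of_continuous _ (f := fun z => g (z + P.line 1) - g z) (by fun_prop)),
    integral_add_right_sub_self volume hg, add_zero]

lemma measurePreserving_flow (t : ℝ) :
    MeasurePreserving (P.flow t) P.flowMeasure P.flowMeasure := by
  have hflow := P.continuous_flow_right t
  refine ⟨hflow.measurable, ?_⟩
  have : IsFiniteMeasure (P.flowMeasure.map (P.flow t)) := Measure.isFiniteMeasure_map _ _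
  refine ext_of_forall_integral_eq_of_IsFiniteMeasure fun f => ?_
  rw [integral_map hflow.measurable.aemeasurable f.continuous.aestronglyMeasurable,
    integral_flowMeasure, integral_flowMeasure]
  exact P.integral_density_mul_comp_flow f.continuous t

lemma measurePreserving_conjFlow (t : ℝ) : MeasurePreserving (P.conjFlow t) volume volume :=
  P.measurePreserving_shearHomeo.comp ((P.measurePreserving_flow t).comp
    (P.measurePreserving_shearHomeo.symm P.shearHomeo.toMeasurableEquiv))

end InvariantMeasure

end LiouvilleData

section DenseSpans

open Submodule

variable {X Y ι κ : Type*} [TopologicalSpace X] [TopologicalSpace Y]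

lemma continuous_prodMul_left [CompactSpace X] [CompactSpace Y] (g : C(Y, ℂ)) :
    Continuous fun f : C(X, ℂ) => f.prodMul g :=
  (ContinuousMap.continuous_precomp ContinuousMap.fst).mul continuous_const

lemma continuous_prodMul_right [CompactSpace X] [CompactSpace Y] (f : C(X, ℂ)) :
    Continuous fun g : C(Y, ℂ) => f.prodMul g :=
  continuous_const.mul (ContinuousMap.continuous_precomp ContinuousMap.snd)

lemma mem_of_closure_span_eq_top {𝕜 E : Type*} [NontriviallyNormedField 𝕜]
    [NormedAddCommGroup E] [NormedSpace 𝕜 E] {e : ι → E}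
    (he : (span 𝕜 (range e)).topologicalClosure = ⊤) {W : Submodule 𝕜 E}
    (hW : IsClosed (W : Set E)) (h : ∀ i, e i ∈ W) (x : E) : x ∈ W := by
  have hle : (⊤ : Submodule 𝕜 E) ≤ W :=
    he ▸ topologicalClosure_minimal _ (span_le.2 (range_subset_iff.2 h)) hW
  exact hle trivial

lemma exists_continuousMap_apply_ne [CompactSpace X] [T2Space X] {x x' : X} (h : x ≠ x') :
    ∃ f : C(X, ℂ), f x ≠ f x' := by
  obtain ⟨f, hf, hne⟩ := separatesPoints_continuous_of_t35Space h
  exact ⟨⟨fun x => f x, Complex.continuous_ofReal.comp hf⟩, fun heq => hne (by simpa using heq)⟩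

lemma closure_span_range_prodMul_eq_top [CompactSpace X] [T2Space X] [CompactSpace Y]
    [T2Space Y] :
    (span ℂ (range fun p : C(X, ℂ) × C(Y, ℂ) => p.1.prodMul p.2)).topologicalClosure = ⊤ := by
  let M : Submonoid C(X × Y, ℂ) :=
    { carrier := range fun p : C(X, ℂ) × C(Y, ℂ) => p.1.prodMul p.2
      one_mem' := ⟨(1, 1), by ext; simp⟩
      mul_mem' := by
        rintro _ _ ⟨p, rfl⟩ ⟨p', rfl⟩
        exact ⟨(p.1 * p'.1, p.2 * p'.2), by ext; simp [mul_mul_mul_comm]⟩ }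
  have hstar : star (M : Set C(X × Y, ℂ)) ⊆ M := by
    rintro f ⟨p, hp⟩
    refine ⟨(star p.1, star p.2), ?_⟩
    rw [← star_star f, ← hp]
    ext
    simp
  have hspan : Subalgebra.toSubmodule (StarAlgebra.adjoin ℂ (M : Set C(X × Y, ℂ))).toSubalgebra =
      span ℂ (M : Set C(X × Y, ℂ)) := by
    rw [StarAlgebra.adjoin_eq_span, union_eq_self_of_subset_right hstar, Submonoid.closure_eq]
  have hsep : (StarAlgebra.adjoin ℂ (M : Set C(X × Y, ℂ))).SeparatesPoints := by
    intro z z' hne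
    have hmem : ∀ (f : C(X, ℂ)) (g : C(Y, ℂ)),
        f.prodMul g ∈ StarAlgebra.adjoin ℂ (M : Set C(X × Y, ℂ)) :=
      fun f g => StarAlgebra.subset_adjoin ℂ _ ⟨(f, g), rfl⟩
    by_cases hfst : z.1 = z'.1
    · obtain ⟨g, hg⟩ := exists_continuousMap_apply_ne fun hsnd => hne (Prod.ext hfst hsnd)
      exact ⟨_, ⟨_, hmem 1 g, rfl⟩, by simpa using hg⟩
    · obtain ⟨f, hf⟩ := exists_continuousMap_apply_ne hfst
      exact ⟨_, ⟨_, hmem f 1, rfl⟩, by simpa using hf⟩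
  have htop := ContinuousMap.starSubalgebra_topologicalClosure_eq_top_of_separatesPoints _ hsep
  refine eq_top_iff.2 fun f _ => ?_
  have hf : f ∈ (StarAlgebra.adjoin ℂ (M : Set C(X × Y, ℂ))).topologicalClosure := htop ▸ trivial
  change f ∈ closure (span ℂ (M : Set C(X × Y, ℂ)) : Set C(X × Y, ℂ))
  rwa [← hspan]

lemma mem_of_forall_prodMul_mem [CompactSpace X] [T2Space X] [CompactSpace Y] [T2Space Y]
    {e : ι → C(X, ℂ)} {e' : κ → C(Y, ℂ)} (he : (span ℂ (range e)).topologicalClosure = ⊤)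
    (he' : (span ℂ (range e')).topologicalClosure = ⊤) {V : Submodule ℂ C(X × Y, ℂ)}
    (hV : IsClosed (V : Set C(X × Y, ℂ))) (h : ∀ i k, (e i).prodMul (e' k) ∈ V)
    (f : C(X × Y, ℂ)) : f ∈ V := by
  have hcomapl : ∀ k, IsClosed (V.comap (ContinuousMap.prodMul.flip (e' k)) : Set C(X, ℂ)) :=
    fun k => hV.preimage (continuous_prodMul_left (e' k))
  have hcomapr : ∀ f, IsClosed (V.comap (ContinuousMap.prodMul f) : Set C(Y, ℂ)) :=
    fun f => hV.preimage (continuous_prodMul_right f)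
  have hleft : ∀ (f : C(X, ℂ)) k, f.prodMul (e' k) ∈ V := fun f k =>
    mem_of_closure_span_eq_top he (hcomapl k) (fun i => h i k) f
  have hprod : ∀ (f : C(X, ℂ)) g, f.prodMul g ∈ V := fun f g =>
    mem_of_closure_span_eq_top he' (hcomapr f) (hleft f) g
  refine mem_of_closure_span_eq_top (e := fun p : C(X, ℂ) × C(Y, ℂ) => p.1.prodMul p.2)
    ?_ hV (fun p => hprod p.1 p.2) f
  exact closure_span_range_prodMul_eq_top

lemma closure_span_range_prodMul_comp_eq_top [CompactSpace X] [T2Space X] [CompactSpace Y]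
    [T2Space Y] {e : ι → C(X, ℂ)} {e' : κ → C(Y, ℂ)}
    (he : (span ℂ (range e)).topologicalClosure = ⊤)
    (he' : (span ℂ (range e')).topologicalClosure = ⊤) :
    (span ℂ (range fun p : ι × κ => (e p.1).prodMul (e' p.2))).topologicalClosure = ⊤ :=
  eq_top_iff.2 fun f _ => mem_of_forall_prodMul_mem he he' (isClosed_topologicalClosure _)
    (fun i k => le_topologicalClosure _ (subset_span (mem_range_self (i, k)))) f

lemma closure_span_range_torusChar_eq_top :
    (span ℂ (range fun p : ℤ × ℤ => torusChar p.1 p.2)).topologicalClosure = ⊤ := by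
  have hprod : (fun p : ℤ × ℤ => torusChar p.1 p.2) = fun p =>
      ContinuousMap.prodMul (fourier p.1 : C(Torus1, ℂ)) (fourier p.2 : C(Torus1, ℂ)) := by
    ext
    rfl
  rw [hprod]
  exact closure_span_range_prodMul_comp_eq_top span_fourier_closure_eq_top
    span_fourier_closure_eq_top

end DenseSpans

section WeakConvergence

variable {𝕜 E G ι κ : Type*} [RCLike 𝕜] [NormedAddCommGroup E] [NormedSpace 𝕜 E]

lemma tendsto_zero_of_closure_span_eq_top [NormedAddCommGroup G] [NormedSpace 𝕜 G] {e : ι → E}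
    (he : (Submodule.span 𝕜 (range e)).topologicalClosure = ⊤) {A : ℕ → E →L[𝕜] G} {C : ℝ}
    (hA : ∀ j x, ‖A j x‖ ≤ C * ‖x‖) (h : ∀ i, Tendsto (fun j => A j (e i)) atTop (𝓝 0)) (x : E) :
    Tendsto (fun j => A j x) atTop (𝓝 0) := by
  let W : Submodule 𝕜 E :=
    { carrier := {x | Tendsto (fun j => A j x) atTop (𝓝 0)}
      add_mem' := fun hx hy => by simpa using Tendsto.add hx hy
      zero_mem' := by simp
      smul_mem' := fun c x hx => by simpa using Tendsto.const_smul hx c }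
  have hlip : ∀ j, LipschitzWith C.toNNReal (A j) := fun j =>
    AddMonoidHomClass.lipschitz_of_bound (A j) C (hA j)
  have hW : IsClosed (W : Set E) :=
    (LipschitzWith.uniformEquicontinuous _ _ hlip).equicontinuous.isClosed_setOfPred_tendsto
      continuous_const
  exact mem_of_closure_span_eq_top he hW h x

variable {H : Type*} [NormedAddCommGroup H] [InnerProductSpace 𝕜 H]

lemma tendsto_inner_zero_of_closure_span_eq_top {e : ι → E} {e' : κ → H}
    (he : (Submodule.span 𝕜 (range e)).topologicalClosure = ⊤)
    (he' : (Submodule.span 𝕜 (range e')).topologicalClosure = ⊤) {A : ℕ → E →L[𝕜] H} {C : ℝ}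
    (hA : ∀ j x, ‖A j x‖ ≤ C * ‖x‖)
    (h : ∀ i k, Tendsto (fun j => inner 𝕜 (A j (e i)) (e' k)) atTop (𝓝 0)) (x : E) (y : H) :
    Tendsto (fun j => inner 𝕜 (A j x) y) atTop (𝓝 0) := by
  have hleft : ∀ i y, Tendsto (fun j => inner 𝕜 (A j (e i)) y) atTop (𝓝 0) := fun i y =>
    tendsto_zero_of_closure_span_eq_top he' (A := fun j => innerSL 𝕜 (A j (e i)))
      (fun j y => (norm_inner_le_norm _ _).trans
        (mul_le_mul_of_nonneg_right (hA j (e i)) (norm_nonneg y))) (h i) y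
  have hright := tendsto_zero_of_closure_span_eq_top he (A := fun j => innerSL 𝕜 y ∘L A j)
    (C := ‖y‖ * C) (fun j x => ?_) (fun i => ?_) x
  · simpa [inner_conj_symm] using hright.star
  · rw [mul_assoc]
    exact (norm_inner_le_norm _ _).trans (mul_le_mul_of_nonneg_left (hA j x) (norm_nonneg y))
  · simpa [inner_conj_symm] using (hleft i y).star

end WeakConvergence

section KoopmanOperators

variable {X : Type*} [MeasurableSpace X] {μ : Measure X}

/-- The constant function `1` as an element of `L²(μ)`. -/
def oneL2 (μ : Measure X) [IsFiniteMeasure μ] : Lp ℂ 2 μ :=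
  indicatorConstLp 2 MeasurableSet.univ (measure_ne_top μ univ) 1

/-- The map `f ↦ f ∘ S - ∫ f` on `L²(μ)`: the Koopman operator of `S` minus the projection to the
constants. -/
def centeredKoopman [IsProbabilityMeasure μ] {S : X → X} (hS : MeasurePreserving S μ μ) :
    Lp ℂ 2 μ →L[ℂ] Lp ℂ 2 μ :=
  (Lp.compMeasurePreservingₗᵢ ℂ S hS).toContinuousLinearMap -
    (innerSL ℂ (oneL2 μ)).smulRight (oneL2 μ)

variable [IsProbabilityMeasure μ] {S : X → X} (hS : MeasurePreserving S μ μ)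

lemma norm_oneL2 : ‖oneL2 μ‖ = 1 := by
  rw [oneL2, norm_indicatorConstLp two_ne_zero ENNReal.ofNat_ne_top]
  simp

lemma inner_centeredKoopman (x y : Lp ℂ 2 μ) : inner ℂ (centeredKoopman hS x) y =
    inner ℂ (Lp.compMeasurePreserving S hS x) y - inner ℂ x (oneL2 μ) * inner ℂ (oneL2 μ) y := by
  have hinner : inner ℂ (inner ℂ (oneL2 μ) x • oneL2 μ) y =
      inner ℂ x (oneL2 μ) * inner ℂ (oneL2 μ) y := by
    rw [inner_smul_left, inner_conj_symm]
  rw [← hinner, ← inner_sub_left]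
  rfl

lemma norm_centeredKoopman_apply_le (x : Lp ℂ 2 μ) : ‖centeredKoopman hS x‖ ≤ 2 * ‖x‖ := by
  have hinner := norm_inner_le_norm (𝕜 := ℂ) (oneL2 μ) x
  rw [norm_oneL2, one_mul] at hinner
  calc ‖centeredKoopman hS x‖ ≤ ‖Lp.compMeasurePreserving S hS x‖ +
        ‖inner ℂ (oneL2 μ) x • oneL2 μ‖ := norm_sub_le _ _
    _ ≤ 2 * ‖x‖ := by
      rw [Lp.norm_compMeasurePreserving, norm_smul, norm_oneL2]
      linarith

lemma inner_oneL2_toLp [TopologicalSpace X] [CompactSpace X] [BorelSpace X]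
    [SecondCountableTopologyEither X ℂ] (f : C(X, ℂ)) :
    inner ℂ (oneL2 μ) (ContinuousMap.toLp 2 μ ℂ f) = ∫ z, f z ∂μ := by
  rw [oneL2, L2.inner_indicatorConstLp_one, Measure.restrict_univ]
  exact integral_congr_ae (ContinuousMap.coeFn_toLp μ f)

lemma inner_centeredKoopman_toLp [TopologicalSpace X] [CompactSpace X] [BorelSpace X]
    [SecondCountableTopologyEither X ℂ] (f g : C(X, ℂ)) :
    inner ℂ (centeredKoopman hS (ContinuousMap.toLp 2 μ ℂ f)) (ContinuousMap.toLp 2 μ ℂ g) =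
      ∫ z, star f (S z) * g z ∂μ - (∫ z, star f z ∂μ) * ∫ z, g z ∂μ := by
  have hstar : inner ℂ (ContinuousMap.toLp 2 μ ℂ f) (oneL2 μ) = ∫ z, star f z ∂μ := by
    rw [← inner_conj_symm, inner_oneL2_toLp, ← integral_conj]
    rfl
  have hcomp : (Lp.compMeasurePreserving S hS (ContinuousMap.toLp 2 μ ℂ f) : X → ℂ) =ᵐ[μ]
      f ∘ S := (Lp.coeFn_compMeasurePreserving _ hS).trans
    (hS.quasiMeasurePreserving.ae_eq_comp (ContinuousMap.coeFn_toLp μ f))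
  rw [inner_centeredKoopman, inner_oneL2_toLp, hstar, L2.inner_def]
  congr 1
  refine integral_congr_ae ?_
  filter_upwards [hcomp, ContinuousMap.coeFn_toLp (p := 2) (𝕜 := ℂ) μ g] with z hf hg
  rw [hf, hg, RCLike.inner_apply, mul_comm]
  rfl

lemma ergodic_of_tendsto_inner_centeredKoopman {N : ℕ → ℕ}
    (h : ∀ x, Tendsto (fun j => inner ℂ (centeredKoopman (hS.iterate (N j)) x) x) atTop (𝓝 0)) :
    Ergodic S μ := by
  refine ⟨hS, ⟨fun A hA hinv => ?_⟩⟩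
  have hiter : ∀ n, S^[n] ⁻¹' A = A := fun n => by
    rw [preimage_iterate_eq]
    exact Function.iterate_fixed hinv n
  set x : Lp ℂ 2 μ := indicatorConstLp 2 hA (measure_ne_top μ A) 1 with hx
  have hfix : ∀ n, Lp.compMeasurePreserving S^[n] (hS.iterate n) x = x := fun n => by
    simp only [hx, Lp.indicatorConstLp_compMeasurePreserving, hiter]
  have hself : inner ℂ x x = (μ.real A : ℂ) := by
    rw [hx, L2.inner_indicatorConstLp_one_indicatorConstLp_one, inter_self]
    rfl
  have hone : inner ℂ x (oneL2 μ) = (μ.real A : ℂ) := by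
    rw [hx, oneL2, L2.inner_indicatorConstLp_one_indicatorConstLp_one, inter_univ]
    rfl
  have hone' : inner ℂ (oneL2 μ) x = (μ.real A : ℂ) := by
    rw [hx, oneL2, L2.inner_indicatorConstLp_one_indicatorConstLp_one, univ_inter]
    rfl
  have hlim := h x
  simp only [inner_centeredKoopman, hfix, hself, hone, hone'] at hlim
  have hsq : μ.real A - μ.real A * μ.real A = 0 := by
    exact_mod_cast tendsto_nhds_unique tendsto_const_nhds hlim
  rw [eventuallyConst_set']
  rcases mul_eq_zero.1 (show μ.real A * (1 - μ.real A) = 0 by linarith) with h0 | h1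
  · exact .inl (ae_eq_empty.2 ((measureReal_eq_zero_iff (measure_ne_top μ A)).1 h0))
  · refine .inr (ae_eq_univ.2 ?_)
    rw [← measureReal_eq_zero_iff, probReal_compl_eq_one_sub hA, h1]

end KoopmanOperators

section WeakMixingCriterion

variable {X ι : Type*} [MeasurableSpace X] {μ : Measure X} [IsProbabilityMeasure μ]
  [TopologicalSpace X] [CompactSpace X] [SecondCountableTopology X] [T2Space X] [BorelSpace X]

lemma closure_span_toLp_eq_top {e : ι → C(X, ℂ)}
    (he : (Submodule.span ℂ (range e)).topologicalClosure = ⊤) :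
    (Submodule.span ℂ (range fun i => ContinuousMap.toLp 2 μ ℂ (e i))).topologicalClosure = ⊤ := by
  have hdense := ContinuousMap.toLp_denseRange ℂ μ ℂ (p := 2) ENNReal.ofNat_ne_top
  simpa only [Submodule.map_span, ContinuousLinearMap.coe_coe, ← range_comp,
    Function.comp_def] using hdense.topologicalClosure_map_submodule he

lemma ergodic_of_tendsto_integral {S : X → X} (hS : MeasurePreserving S μ μ) {N : ℕ → ℕ}
    {e : ι → C(X, ℂ)} (he : (Submodule.span ℂ (range e)).topologicalClosure = ⊤)
    (h : ∀ i k, Tendsto (fun j => ∫ z, star (e i) (S^[N j] z) * e k z ∂μ) atTop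
      (𝓝 ((∫ z, star (e i) z ∂μ) * ∫ z, e k z ∂μ))) : Ergodic S μ := by
  refine ergodic_of_tendsto_inner_centeredKoopman hS fun x =>
    tendsto_inner_zero_of_closure_span_eq_top (closure_span_toLp_eq_top he)
      (closure_span_toLp_eq_top he) (fun j => norm_centeredKoopman_apply_le (hS.iterate (N j)))
      (fun i k => ?_) x x
  simp only [inner_centeredKoopman_toLp]
  exact tendsto_sub_nhds_zero_iff.2 (h i k)

lemma weaklyMixing_of_tendsto_integral {T : X → X} (hT : MeasurePreserving T μ μ) {N : ℕ → ℕ}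
    (h : ∀ f g : C(X, ℂ), Tendsto (fun j => ∫ z, f (T^[N j] z) * g z ∂μ) atTop
      (𝓝 ((∫ z, f z ∂μ) * ∫ z, g z ∂μ))) : WeaklyMixing T μ := by
  have hiter : ∀ n (z : X × X), (fun p : X × X => (T p.1, T p.2))^[n] z = (T^[n] z.1, T^[n] z.2) :=
    fun n z => by
      induction n with
      | zero => rfl
      | succ n ih => simp only [Function.iterate_succ_apply', ih]
  refine ergodic_of_tendsto_integral (hT.prod hT) (N := N)
    (closure_span_range_prodMul_eq_top (X := X) (Y := X)) fun p p' => ?_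
  have hlim := (h (star p.1) p'.1).mul (h (star p.2) p'.2)
  rw [mul_mul_mul_comm, ← integral_prod_mul, ← integral_prod_mul] at hlim
  simp only [hiter, ContinuousMap.prodMul_apply, ContinuousMap.star_apply, star_mul']
  refine hlim.congr fun j => ?_
  rw [← integral_prod_mul]
  simp only [ContinuousMap.star_apply, mul_mul_mul_comm]

end WeakMixingCriterion

namespace LiouvilleData

section HalfTurnErrors

variable (P : LiouvilleData)

/-- The size, relative to `amp j`, of the contribution of all the resonant characters except the
`j`-th one to the integrals along lines of length at most `1 / δ j`. -/
def relError (j : ℕ) : ℝ :=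
  (∑ i ∈ Finset.range j, P.q i * P.amp i) / P.amp j +
    (∑' i, P.a (i + (j + 1)) * P.q (i + (j + 1))) / P.δ j / P.amp j

/-- A bound for the deviation of `δ j * clockInv (halfTurn j)` from `1 / 2`. -/
def phaseError (j : ℕ) : ℝ := P.δ j + P.a j * (1 + P.relError j)

/-- The error with which `clockInv (halfTurn j)` and the horizontal stretching are described
by the `j`-th resonant character, relative to their size. -/
def halfTurnError (j : ℕ) : ℝ := P.relError j + P.phaseError j

lemma amp_pos (j : ℕ) : 0 < P.amp j := div_pos (P.a_pos j) (P.δ_pos j)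

lemma relError_nonneg (j : ℕ) : 0 ≤ P.relError j :=
  add_nonneg
    (div_nonneg (Finset.sum_nonneg fun i _ => mul_nonneg (Nat.cast_nonneg _) (P.amp_pos i).le)
      (P.amp_pos j).le)
    (div_nonneg (div_nonneg (tsum_nonneg fun _ => mul_nonneg (P.a_pos _).le (Nat.cast_nonneg _))
      (P.δ_pos j).le) (P.amp_pos j).le)

lemma phaseError_nonneg (j : ℕ) : 0 ≤ P.phaseError j :=
  add_nonneg (P.δ_pos j).le
    (mul_nonneg (P.a_pos j).le (add_nonneg zero_le_one (P.relError_nonneg j)))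

lemma tendsto_a : Tendsto P.a atTop (𝓝 0) := by
  simpa only [pow_zero, mul_one] using (P.summable_a_mul_pow 0).tendsto_atTop_zero

lemma tendsto_relError : Tendsto P.relError atTop (𝓝 0) := by
  have h := P.tendsto_lowError.add (P.tendsto_highError.div_atTop P.tendsto_amp)
  rwa [add_zero] at h

lemma tendsto_halfTurnError : Tendsto P.halfTurnError atTop (𝓝 0) := by
  have h := P.tendsto_relError.add
    (P.tendsto_δ.add (P.tendsto_a.mul (P.tendsto_relError.const_add 1)))
  rwa [zero_mul, add_zero, add_zero] at h

lemma amp_mul_relError (j : ℕ) : P.amp j * P.relError j =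
    ∑ i ∈ Finset.range j, P.q i * P.amp i +
      (∑' i, P.a (i + (j + 1)) * P.q (i + (j + 1))) / P.δ j := by
  rw [relError, mul_add, mul_div_cancel₀ _ (P.amp_pos j).ne', mul_div_cancel₀ _ (P.amp_pos j).ne']

end HalfTurnErrors

section HalfTurn

variable {P : LiouvilleData} {c : ℕ → ℂ} {C : ℝ}

lemma abs_ergodicInt_sub_re_le (hc : P.RapidDecay c) (hC : ∀ i, ‖c i‖ ≤ C * (P.q i * P.a i))
    (j : ℕ) {u : ℝ} (hu : |u| ≤ 1 / P.δ j) (z : Torus2) :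
    |P.ergodicInt c u z - (c j * P.χ j z * P.phaseInt j u).re| ≤
      C * P.amp j * P.relError j := by
  have hs := summable_modSeries hc P.isUniformlyLocallyBounded_phaseInt u z
  have hlow : ‖∑ i ∈ Finset.range j, c i * P.χ i z * P.phaseInt i u‖ ≤
      C * ∑ i ∈ Finset.range j, P.q i * P.amp i := by
    rw [Finset.mul_sum]
    refine (norm_sum_le _ _).trans (Finset.sum_le_sum fun i _ => ?_)
    rw [norm_mul, norm_mul_χ]
    calc ‖c i‖ * ‖P.phaseInt i u‖ ≤ C * (P.q i * P.a i) * (1 / P.δ i) :=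
          mul_le_mul (hC i) (P.norm_phaseInt_le_one_div_δ i u) (norm_nonneg _)
            ((norm_nonneg _).trans (hC i))
      _ = C * (P.q i * P.amp i) := by rw [amp]; ring
  have hhigh : ‖∑' i, c (i + (j + 1)) * P.χ (i + (j + 1)) z * P.phaseInt (i + (j + 1)) u‖ ≤
      C * ((∑' i, P.a (i + (j + 1)) * P.q (i + (j + 1))) / P.δ j) := by
    rw [show ∀ s, C * (s / P.δ j) = C / P.δ j * s from fun s => by ring, ← tsum_mul_left]
    have hsum : Summable fun i => P.a (i + (j + 1)) * P.q (i + (j + 1)) := by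
      simpa only [pow_one] using
        (summable_nat_add_iff (f := fun i => P.a i * (P.q i : ℝ) ^ 1) (j + 1)).2
          (P.summable_a_mul_pow 1)
    refine tsum_of_norm_bounded (hsum.mul_left _).hasSum fun i => ?_
    rw [norm_mul, norm_mul_χ]
    calc ‖c (i + (j + 1))‖ * ‖P.phaseInt (i + (j + 1)) u‖
        ≤ C * (P.q (i + (j + 1)) * P.a (i + (j + 1))) * (1 / P.δ j) :=
          mul_le_mul (hC _) ((P.norm_phaseInt_le_abs _ u).trans hu) (norm_nonneg _)
            ((norm_nonneg _).trans (hC _))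
      _ = C / P.δ j * (P.a (i + (j + 1)) * P.q (i + (j + 1))) := by ring
  rw [ergodicInt, modSeries, ← hs.sum_add_tsum_nat_add (j + 1), Finset.sum_range_succ,
    ← Complex.sub_re, add_right_comm, add_sub_cancel_right, mul_assoc, amp_mul_relError, mul_add]
  exact (Complex.abs_re_le_norm _).trans ((norm_add_le _ _).trans (add_le_add hlow hhigh))

variable (P)

lemma halfTurn_le (j : ℕ) : (P.halfTurn j : ℝ) ≤ 1 / (2 * P.δ j) := by
  have := P.δ_pos j
  exact Nat.floor_le (by positivity)

lemma abs_clockInv_halfTurn_le (j : ℕ) (z : Torus2) :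
    |P.clockInv (P.halfTurn j) z| ≤ 1 / P.δ j := by
  calc |P.clockInv (P.halfTurn j) z| ≤ 2 * P.halfTurn j := by
        simpa only [Nat.abs_cast] using P.abs_clockInv_le (P.halfTurn j) z
    _ ≤ 2 * (1 / (2 * P.δ j)) := mul_le_mul_of_nonneg_left (P.halfTurn_le j) zero_le_two
    _ = 1 / P.δ j := by field_simp

lemma norm_coeff_le (i : ℕ) : ‖P.coeff i‖ ≤ 1 * (P.q i * P.a i) := by
  rw [norm_coeff, one_mul]
  exact le_mul_of_one_le_left (P.a_pos i).le (P.one_le_cast_q i)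

lemma clockInv_add_ergodicInt (t : ℝ) (z : Torus2) :
    P.clockInv t z + P.ergodicInt P.coeff (P.clockInv t z) z = t :=
  P.clock_clockInv t z

lemma abs_clockInv_halfTurn_sub_le (j : ℕ) (z : Torus2) :
    |P.clockInv (P.halfTurn j) z - P.halfTurn j| ≤ P.amp j * (1 + P.relError j) := by
  set u := P.clockInv (P.halfTurn j) z
  have hsplit := abs_ergodicInt_sub_re_le P.rapidDecay_coeff P.norm_coeff_le j
    (P.abs_clockInv_halfTurn_le j z) z
  have hmain : |(P.coeff j * P.χ j z * P.phaseInt j u).re| ≤ P.amp j := by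
    refine (Complex.abs_re_le_norm _).trans ?_
    rw [norm_mul, norm_mul_χ, norm_coeff, amp, div_eq_mul_one_div]
    exact mul_le_mul_of_nonneg_left (P.norm_phaseInt_le_one_div_δ j u) (P.a_pos j).le
  have hclock := P.clockInv_add_ergodicInt (P.halfTurn j) z
  rw [show u - P.halfTurn j = -P.ergodicInt P.coeff u z by linarith, abs_neg]
  have := abs_sub_abs_le_abs_sub (P.ergodicInt P.coeff u z)
    (P.coeff j * P.χ j z * P.phaseInt j u).re
  linarith

lemma abs_δ_mul_halfTurn_sub_le (j : ℕ) : |P.δ j * P.halfTurn j - 1 / 2| ≤ P.δ j := by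
  have hδ := P.δ_pos j
  have hhalf : P.δ j * (1 / (2 * P.δ j)) = 1 / 2 := by field_simp
  have hle := mul_le_mul_of_nonneg_left (P.halfTurn_le j) hδ.le
  have hge : P.δ j * (1 / (2 * P.δ j)) ≤ P.δ j * (P.halfTurn j + 1) :=
    mul_le_mul_of_nonneg_left (Nat.lt_floor_add_one _).le hδ.le
  rw [abs_le]
  constructor <;> linarith

lemma abs_δ_mul_clockInv_halfTurn_sub_le (j : ℕ) (z : Torus2) :
    |P.δ j * P.clockInv (P.halfTurn j) z - 1 / 2| ≤ P.phaseError j := by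
  have hδ := P.δ_pos j
  calc |P.δ j * P.clockInv (P.halfTurn j) z - 1 / 2|
      = |(P.δ j * P.halfTurn j - 1 / 2) +
          P.δ j * (P.clockInv (P.halfTurn j) z - P.halfTurn j)| := by congr 1; ring
    _ ≤ P.δ j + P.δ j * (P.amp j * (1 + P.relError j)) := by
      refine (abs_add_le _ _).trans (add_le_add (P.abs_δ_mul_halfTurn_sub_le j) ?_)
      rw [abs_mul, abs_of_pos hδ]
      exact mul_le_mul_of_nonneg_left (P.abs_clockInv_halfTurn_sub_le j z) hδ.le
    _ = P.phaseError j := by rw [phaseError, amp]; field_simp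

/-- The value `I / (π * δ j)` of `phaseInt j` after half a turn of the phase. -/
def halfTurnInt (j : ℕ) : ℂ := Complex.I / (Real.pi * P.δ j : ℝ)

lemma norm_phaseInt_sub_halfTurnInt_le (j : ℕ) (u : ℝ) :
    ‖P.phaseInt j u - P.halfTurnInt j‖ ≤ |P.δ j * u - 1 / 2| / P.δ j := by
  have hδ := P.δ_pos j
  have hδ' : (P.δ j : ℂ) ≠ 0 := by exact_mod_cast hδ.ne'
  have hpi' : (Real.pi : ℂ) ≠ 0 := by exact_mod_cast Real.pi_ne_zero
  have hdiff : P.phaseInt j u - P.halfTurnInt j =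
      (P.phase j u + 1) / (2 * Real.pi * P.δ j * Complex.I) := by
    rw [phaseInt, halfTurnInt]
    push_cast
    field_simp
    linear_combination (-2) * Complex.I_sq
  have hphase : P.phase j u + 1 =
      -(Complex.exp (Complex.I * ((2 * Real.pi * (P.δ j * u - 1 / 2) : ℝ) : ℂ)) - 1) := by
    have harg : Complex.I * ((2 * Real.pi * (P.δ j * u - 1 / 2) : ℝ) : ℂ) =
        2 * Real.pi * P.δ j * Complex.I * u - Real.pi * Complex.I := by push_cast; ring
    rw [harg, Complex.exp_sub, Complex.exp_pi_mul_I, phase]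
    ring
  have hnorm : ‖P.phase j u + 1‖ ≤ 2 * Real.pi * |P.δ j * u - 1 / 2| := by
    rw [hphase, norm_neg]
    refine Real.norm_exp_I_mul_ofReal_sub_one_le.trans_eq ?_
    rw [Real.norm_eq_abs, abs_mul, abs_of_pos Real.two_pi_pos]
  have hden : ‖2 * Real.pi * P.δ j * Complex.I‖ = 2 * Real.pi * P.δ j := by
    simp [abs_of_pos Real.pi_pos, abs_of_pos hδ]
  rw [hdiff, norm_div, hden]
  calc ‖P.phase j u + 1‖ / (2 * Real.pi * P.δ j)
      ≤ 2 * Real.pi * |P.δ j * u - 1 / 2| / (2 * Real.pi * P.δ j) := by gcongr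
    _ = |P.δ j * u - 1 / 2| / P.δ j := mul_div_mul_left _ _ Real.two_pi_pos.ne'

variable {P}

lemma abs_ergodicInt_halfTurn_sub_le (hc : P.RapidDecay c)
    (hC : ∀ i, ‖c i‖ ≤ C * (P.q i * P.a i)) (j : ℕ) (z : Torus2) :
    |P.ergodicInt c (P.clockInv (P.halfTurn j) z) z - (c j * P.χ j z * P.halfTurnInt j).re| ≤
      (C * P.amp j + ‖c j‖ / P.δ j) * P.halfTurnError j := by
  have hδ := P.δ_pos j
  have hC0 : 0 ≤ C := nonneg_of_mul_nonneg_left ((norm_nonneg _).trans (hC 0))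
    (mul_pos (P.cast_q_pos 0) (P.a_pos 0))
  set u := P.clockInv (P.halfTurn j) z
  have hsplit := abs_ergodicInt_sub_re_le hc hC j (P.abs_clockInv_halfTurn_le j z) z
  have hphase : |(c j * P.χ j z * P.phaseInt j u).re - (c j * P.χ j z * P.halfTurnInt j).re| ≤
      ‖c j‖ / P.δ j * P.phaseError j := by
    rw [← Complex.sub_re, ← mul_sub]
    refine (Complex.abs_re_le_norm _).trans ?_
    rw [norm_mul, norm_mul_χ, div_mul_eq_mul_div, mul_div_assoc]
    refine mul_le_mul_of_nonneg_left ((P.norm_phaseInt_sub_halfTurnInt_le j u).trans ?_)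
      (norm_nonneg _)
    exact div_le_div_of_nonneg_right (P.abs_δ_mul_clockInv_halfTurn_sub_le j z) hδ.le
  have hcross : 0 ≤ C * P.amp j * P.phaseError j + ‖c j‖ / P.δ j * P.relError j := by
    have := P.amp_pos j
    have := P.phaseError_nonneg j
    have := P.relError_nonneg j
    positivity
  calc _ ≤ _ := abs_sub_le _ (c j * P.χ j z * P.phaseInt j u).re _
    _ ≤ C * P.amp j * P.relError j + ‖c j‖ / P.δ j * P.phaseError j := add_le_add hsplit hphase
    _ ≤ _ := by rw [halfTurnError]; linarith

variable (P)

lemma abs_ergodicInt_coeffDx_halfTurn_add_le (j : ℕ) (z : Torus2) :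
    |P.ergodicInt (P.coeffDx P.coeff) (P.clockInv (P.halfTurn j) z) z +
        2 * P.q j * P.amp j * (P.χ j z).re| ≤
      4 * Real.pi * P.q j * P.amp j * P.halfTurnError j := by
  have hδ' : (P.δ j : ℂ) ≠ 0 := by exact_mod_cast (P.δ_pos j).ne'
  have hpi' : (Real.pi : ℂ) ≠ 0 := by exact_mod_cast Real.pi_ne_zero
  have hnorm : ∀ i, ‖P.coeffDx P.coeff i‖ = 2 * Real.pi * (P.q i * P.a i) := fun i => by
    rw [norm_coeffDx, norm_coeff, mul_assoc]
  have h := abs_ergodicInt_halfTurn_sub_le P.rapidDecay_coeff.coeffDx (fun i => (hnorm i).le) j z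
  have hmain : P.coeffDx P.coeff j * P.χ j z * P.halfTurnInt j =
      ((-(2 * P.q j * P.amp j) : ℝ) : ℂ) * P.χ j z := by
    rw [coeffDx, coeff, halfTurnInt, amp]
    push_cast
    field_simp
    linear_combination (P.q j : ℂ) * P.a j * P.χ j z * Complex.I_sq
  rw [hmain, Complex.re_ofReal_mul, neg_mul, sub_neg_eq_add] at h
  refine h.trans (mul_le_mul_of_nonneg_right ?_
    (add_nonneg (P.relError_nonneg j) (P.phaseError_nonneg j)))
  have hq : Real.pi * P.amp j * 1 ≤ Real.pi * P.amp j * P.q j :=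
    mul_le_mul_of_nonneg_left (P.one_le_cast_q j) (mul_pos Real.pi_pos (P.amp_pos j)).le
  rw [hnorm, mul_div_assoc, mul_div_assoc, ← amp]
  linarith

lemma abs_clockInv_halfTurn_sub_sub_le (j : ℕ) (z : Torus2) :
    |P.clockInv (P.halfTurn j) z - P.halfTurn j - P.amp j / Real.pi * (P.χ j z).im| ≤
      2 * P.amp j * P.halfTurnError j := by
  have hδ' : (P.δ j : ℂ) ≠ 0 := by exact_mod_cast (P.δ_pos j).ne'
  have hpi' : (Real.pi : ℂ) ≠ 0 := by exact_mod_cast Real.pi_ne_zero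
  have h := abs_ergodicInt_halfTurn_sub_le P.rapidDecay_coeff P.norm_coeff_le j z
  have hmain : P.coeff j * P.χ j z * P.halfTurnInt j =
      ((P.amp j / Real.pi : ℝ) : ℂ) * (P.χ j z * Complex.I) := by
    rw [coeff, halfTurnInt, amp]
    push_cast
    field_simp
  rw [hmain, Complex.re_ofReal_mul, Complex.mul_I_re, norm_coeff, ← amp, abs_sub_comm, one_mul,
    ← two_mul] at h
  convert! h using 2
  linarith [P.clockInv_add_ergodicInt (P.halfTurn j) z]

end HalfTurn

end LiouvilleData

section RegularisedInverse

/-- The function `c ↦ c / (c ^ 2 + κ ^ 2)`, a smooth bounded replacement of `c⁻¹` for small `κ`. -/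
def regInv (κ c : ℝ) : ℝ := c / (c ^ 2 + κ ^ 2)

/-- The derivative of `regInv κ`. -/
def regInvDeriv (κ c : ℝ) : ℝ := (κ ^ 2 - c ^ 2) / (c ^ 2 + κ ^ 2) ^ 2

/-- The defect `1 - c * regInv κ c` of the regularised inverse. -/
def regDefect (κ c : ℝ) : ℝ := κ ^ 2 / (c ^ 2 + κ ^ 2)

lemma regDefect_nonneg (κ c : ℝ) : 0 ≤ regDefect κ c := by
  unfold regDefect
  positivity

variable {κ : ℝ}

lemma sq_add_sq_pos_of_pos (hκ : 0 < κ) (c : ℝ) : 0 < c ^ 2 + κ ^ 2 := by positivity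

lemma regDefect_add_mul_regInv (hκ : 0 < κ) (c : ℝ) : regDefect κ c + c * regInv κ c = 1 := by
  have := (sq_add_sq_pos_of_pos hκ c).ne'
  rw [regDefect, regInv]
  field_simp
  ring

lemma regDefect_le_one (hκ : 0 < κ) (c : ℝ) : regDefect κ c ≤ 1 :=
  (div_le_one (sq_add_sq_pos_of_pos hκ c)).2 (le_add_of_nonneg_left (sq_nonneg c))

lemma hasDerivAt_regInv (hκ : 0 < κ) (c : ℝ) : HasDerivAt (regInv κ) (regInvDeriv κ c) c := by
  refine ((hasDerivAt_id c).div (((hasDerivAt_id c).pow 2).add_const (κ ^ 2))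
    (sq_add_sq_pos_of_pos hκ c).ne').congr_deriv ?_
  rw [regInvDeriv]
  congr 1
  simp only [Pi.pow_apply, id_eq]
  push_cast
  ring

lemma abs_regInv_le (hκ : 0 < κ) (c : ℝ) : |regInv κ c| ≤ 1 / κ := by
  have hc := sq_add_sq_pos_of_pos hκ c
  rw [regInv, abs_div, abs_of_pos hc, div_le_div_iff₀ hc hκ]
  nlinarith [sq_nonneg (|c| - κ), abs_nonneg c, sq_abs c]

lemma abs_regInvDeriv_le (hκ : 0 < κ) (c : ℝ) : |regInvDeriv κ c| ≤ 1 / κ ^ 2 := by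
  have hc := sq_add_sq_pos_of_pos hκ c
  have hnum : |κ ^ 2 - c ^ 2| ≤ c ^ 2 + κ ^ 2 :=
    abs_le.2 ⟨by linarith [sq_nonneg κ], by linarith [sq_nonneg c]⟩
  calc |regInvDeriv κ c| = |κ ^ 2 - c ^ 2| / (c ^ 2 + κ ^ 2) ^ 2 := by
        rw [regInvDeriv, abs_div, abs_of_pos (pow_pos hc 2)]
    _ ≤ (c ^ 2 + κ ^ 2) / (c ^ 2 + κ ^ 2) ^ 2 := by gcongr
    _ = 1 / (c ^ 2 + κ ^ 2) := by field_simp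
    _ ≤ 1 / κ ^ 2 := one_div_le_one_div_of_le (pow_pos hκ 2) (by linarith [sq_nonneg c])

lemma continuous_regInv (hκ : 0 < κ) : Continuous (regInv κ) :=
  continuous_id.div (by fun_prop) fun c => (sq_add_sq_pos_of_pos hκ c).ne'

lemma continuous_regInvDeriv (hκ : 0 < κ) : Continuous (regInvDeriv κ) :=
  .div (by fun_prop) (by fun_prop) fun c => (pow_pos (sq_add_sq_pos_of_pos hκ c) 2).ne'

lemma continuous_regDefect (hκ : 0 < κ) : Continuous (regDefect κ) :=
  continuous_const.div (by fun_prop) fun c => (sq_add_sq_pos_of_pos hκ c).ne'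

lemma tendsto_regDefect {c : ℝ} (hc : c ≠ 0) :
    Tendsto (fun κ => regDefect κ c) (𝓝[>] 0) (𝓝 0) := by
  have hcont : ContinuousAt (fun κ => regDefect κ c) 0 :=
    ContinuousAt.div (by fun_prop) (by fun_prop) (by positivity)
  simpa [regDefect] using hcont.tendsto.mono_left nhdsWithin_le_nhds

lemma norm_add_mul_regInv_div_le (hκ : 0 < κ) {ψ : ℂ} {E c B η : ℝ} (hB : 0 < B)
    (hη : |E + B * c| ≤ B * η) :
    ‖ψ + (E : ℂ) * ψ * (regInv κ c : ℂ) / B‖ ≤ ‖ψ‖ * (regDefect κ c + η / κ) := by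
  have hsum : ψ + (E : ℂ) * ψ * (regInv κ c : ℂ) / B =
      ψ * ((regDefect κ c + (E + B * c) * regInv κ c / B : ℝ) : ℂ) := by
    have hB' : (B : ℂ) ≠ 0 := by exact_mod_cast hB.ne'
    have hone : (regDefect κ c : ℂ) + c * regInv κ c = 1 := by
      exact_mod_cast regDefect_add_mul_regInv hκ c
    push_cast
    field_simp
    linear_combination (-(ψ * B)) * hone
  rw [hsum, norm_mul, Complex.norm_real]
  refine mul_le_mul_of_nonneg_left ?_ (norm_nonneg _)
  refine (abs_add_le _ _).trans (add_le_add (abs_of_nonneg (regDefect_nonneg _ _)).le ?_)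
  rw [abs_div, abs_mul, abs_of_pos hB, div_le_iff₀ hB]
  calc |E + B * c| * |regInv κ c| ≤ B * η * (1 / κ) :=
        mul_le_mul hη (abs_regInv_le hκ c) (abs_nonneg _) ((abs_nonneg _).trans hη)
    _ = η / κ * B := by ring

lemma norm_integral_le_of_regInv {X : Type*} [TopologicalSpace X] [CompactSpace X]
    [MeasurableSpace X] [BorelSpace X] {μ : Measure X} [IsProbabilityMeasure μ]
    (hκ : 0 < κ) {ψ : X → ℂ} {E c : X → ℝ} {B M η : ℝ} (hψ : Continuous ψ) (hE : Continuous E)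
    (hc : Continuous c) (hB : 0 < B) (hM : ∀ x, ‖ψ x‖ ≤ M) (hη0 : 0 ≤ η)
    (hη : ∀ x, |E x + B * c x| ≤ B * η) :
    ‖∫ x, ψ x ∂μ‖ ≤ M * (∫ x, regDefect κ (c x) ∂μ + η / κ) +
      ‖∫ x, (E x : ℂ) * ψ x * (regInv κ (c x) : ℂ) ∂μ‖ / B := by
  have hinv := (continuous_regInv hκ).comp hc
  have hdefect := integrable_of_continuous μ ((continuous_regDefect hκ).comp hc)
  set e : X → ℂ := fun x => (E x : ℂ) * ψ x * (regInv κ (c x) : ℂ)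
  have he : Continuous e := by fun_prop
  have hbound : ∀ x, ‖ψ x + e x / B‖ ≤ M * (regDefect κ (c x) + η / κ) := fun x =>
    (norm_add_mul_regInv_div_le hκ hB (hη x)).trans <| mul_le_mul_of_nonneg_right (hM x) <|
      add_nonneg (regDefect_nonneg _ _) (div_nonneg hη0 hκ.le)
  have hmain : ‖∫ x, (ψ x + e x / B) ∂μ‖ ≤ M * (∫ x, regDefect κ (c x) ∂μ + η / κ) := by
    refine (norm_integral_le_of_norm_le ((hdefect.add (integrable_const _)).const_mul M)
      (.of_forall hbound)).trans_eq ?_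
    rw [integral_const_mul, integral_add' hdefect (integrable_const _), integral_const,
      probReal_univ, one_smul]
    rfl
  calc ‖∫ x, ψ x ∂μ‖ = ‖∫ x, (ψ x + e x / B) ∂μ - (∫ x, e x ∂μ) / B‖ := by
        rw [integral_add (integrable_of_continuous μ hψ)
          (integrable_of_continuous μ (he.div_const (B : ℂ))), integral_div, add_sub_cancel_right]
    _ ≤ ‖∫ x, (ψ x + e x / B) ∂μ‖ + ‖(∫ x, e x ∂μ) / B‖ := norm_sub_le _ _
    _ ≤ _ := by
      rw [norm_div, Complex.norm_of_nonneg hB.le]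
      exact add_le_add_left hmain _

end RegularisedInverse

section CircleDefect

instance nullSingletonClass_volume_torus1 :
    NullSingletonClass (volume : Measure (Torus1)) :=
  ⟨fun x => by rw [← Metric.closedBall_zero, AddCircle.volume_closedBall]; simp⟩

lemma measure_re_fourier_one_eq_zero :
    volume {x : Torus1 | (fourier 1 x : ℂ).re = 0} = 0 := by
  have hinj : Function.Injective fun x : Torus1 => (fourier 1 x : ℂ) := fun x y hxy => by
    simp only [fourier_apply, one_zsmul] at hxy
    exact AddCircle.injective_toCircle one_ne_zero (Subtype.ext hxy)
  have hsub : {x : Torus1 | (fourier 1 x : ℂ).re = 0} ⊆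
      (fun x => (fourier 1 x : ℂ)) ⁻¹' {Complex.I, -Complex.I} := fun x (hx : _ = _) => by
    have him : (fourier 1 x : ℂ).im ^ 2 = 1 ^ 2 := by
      have hnorm : ‖(fourier 1 x : ℂ)‖ = 1 := by rw [fourier_apply, Circle.norm_coe]
      rw [← Complex.sq_norm_sub_sq_re, hx, hnorm]
      ring
    rcases sq_eq_sq_iff_eq_or_eq_neg.1 him with h | h
    · exact .inl (Complex.ext (hx.trans Complex.I_re.symm) (h.trans Complex.I_im.symm))
    · exact .inr (Complex.ext (hx.trans (by simp)) (h.trans (by simp)))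
  exact measure_mono_null hsub
    (((Set.toFinite _).preimage hinj.injOn).measure_zero _)

/-- The mean of `regDefect κ ∘ Re` over the unit circle. -/
def circleDefect (κ : ℝ) : ℝ := ∫ x : Torus1, regDefect κ (fourier 1 x : ℂ).re

lemma tendsto_circleDefect : Tendsto circleDefect (𝓝[>] 0) (𝓝 0) := by
  rw [show 𝓝 (0 : ℝ) = 𝓝 (∫ _ : Torus1, 0) by rw [integral_zero]]
  refine tendsto_integral_filter_of_dominated_convergence (fun _ => 1) ?_ ?_
    (integrable_const _) ?_
  · filter_upwards [self_mem_nhdsWithin] with κ hκ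
    exact ((continuous_regDefect hκ).comp
      (Complex.continuous_re.comp (fourier 1).continuous)).aestronglyMeasurable
  · filter_upwards [self_mem_nhdsWithin] with κ hκ
    refine .of_forall fun x => ?_
    rw [Real.norm_of_nonneg (regDefect_nonneg _ _)]
    exact regDefect_le_one hκ _
  · filter_upwards [measure_eq_zero_iff_ae_notMem.1 measure_re_fourier_one_eq_zero] with x hx
    exact tendsto_regDefect hx

/-- Each resonant character is a homomorphism from the torus onto the circle, hence maps Haar
measure to Haar measure. -/
lemma LiouvilleData.integral_comp_χ (P : LiouvilleData) (j : ℕ) {F : ℂ → ℝ} (hF : Continuous F) :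
    ∫ z, F (P.χ j z) = ∫ x : Torus1, F (fourier 1 x) := by
  let φ : Torus2 →+ Torus1 :=
    (zsmulAddGroupHom (P.q j : ℤ)).comp (AddMonoidHom.fst _ _) +
      (zsmulAddGroupHom (-(P.p j : ℤ))).comp (AddMonoidHom.snd _ _)
  have hφ : ∀ z, φ z = (P.q j : ℤ) • z.1 + (-(P.p j : ℤ)) • z.2 := fun _ => rfl
  have hcont : Continuous φ := by
    change Continuous fun z : Torus2 => (P.q j : ℤ) • z.1 + (-(P.p j : ℤ)) • z.2
    fun_prop
  have hsurj : Function.Surjective φ := fun x => by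
    obtain ⟨y, rfl⟩ := QuotientAddGroup.mk_surjective x
    refine ⟨torusProj (y / P.q j, 0), ?_⟩
    have hq := (P.cast_q_pos j).ne'
    rw [hφ, torusProj, AddCircle.coe_zero, smul_zero, add_zero, ← AddCircle.coe_zsmul,
      zsmul_eq_mul, Int.cast_natCast, mul_div_cancel₀ y hq]
  have hmp : MeasurePreserving φ volume volume :=
    AddMonoidHom.measurePreserving hcont hsurj (by simp only [measure_univ])
  have hχ : ∀ z, P.χ j z = fourier 1 (φ z) := fun z => by
    simp [χ, torusChar, hφ, fourier_apply, AddCircle.toCircle_add]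
  simp only [hχ]
  rw [← hmp.map_eq, integral_map hmp.measurable.aemeasurable]
  exact (hF.comp (fourier 1).continuous).aestronglyMeasurable

end CircleDefect

namespace LiouvilleData

section HorizontalDerivative

variable (P : LiouvilleData) (m n : ℤ) (t : ℝ) (z : Torus2)

/-- The frequency of the character `torusChar m n` along the line of slope `1 / α`. -/
def freq : ℝ := m * P.α + n

/-- The character `torusChar m n`, weighted by the inverse of the density, at time `t` of the
flow. -/
def weightedChar : ℂ := torusChar m n (P.flow t z) / P.density (P.flow t z)

/-- The horizontal derivative of the clock at `z`, evaluated at the line parameter which the orbit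
of `z` reaches at time `t`. -/
def clockDx : ℝ := P.ergodicInt (P.coeffDx P.coeff) (P.clockInv t z) z

variable {m n} in
lemma freq_ne_zero (hmn : (m, n) ≠ 0) : P.freq m n ≠ 0 := by
  intro hfreq
  have hm_mul : ∀ j, (m : ℝ) * P.δ j = ((-(m * P.p j + n * P.q j) : ℤ) : ℝ) := fun j => by
    rw [freq] at hfreq
    push_cast
    linear_combination (-(m : ℝ)) * P.q_mul_α_sub_p j + (P.q j : ℝ) * hfreq
  have hlim : Tendsto (fun j => |(m : ℝ) * P.δ j|) atTop (𝓝 0) := by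
    simpa using (P.tendsto_δ.const_mul (m : ℝ)).abs
  obtain ⟨j, hj⟩ := (hlim.eventually (gt_mem_nhds one_pos)).exists
  have hint : (-(m * P.p j + n * P.q j) : ℤ) = 0 := by
    rw [hm_mul] at hj
    exact Int.abs_lt_one_iff.1 (by exact_mod_cast hj)
  have hm : m = 0 := by
    have := hm_mul j
    rw [hint, Int.cast_zero, mul_eq_zero, or_iff_left (P.δ_pos j).ne'] at this
    exact_mod_cast this
  have hn : n = 0 := by
    rw [freq, hm, Int.cast_zero, zero_mul, zero_add] at hfreq
    exact_mod_cast hfreq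
  exact hmn (Prod.ext hm hn)

lemma torusChar_flow : torusChar m n (P.flow t z) = torusChar m n z *
    Complex.exp (((2 * Real.pi * P.freq m n : ℝ) : ℂ) * Complex.I * P.clockInv t z) := by
  rw [flow, torusChar_add, line, torusChar_torusProj, freq]
  push_cast
  ring_nf

lemma continuous_clockDx : Continuous (P.clockDx t) := by
  unfold clockDx
  simpa only [Function.comp_def, id] using
    (continuous_ergodicInt P.rapidDecay_coeff.coeffDx).comp
      ((P.continuous_clockInv_right t).prodMk continuous_id)

lemma continuous_weightedChar : Continuous (P.weightedChar m n t) :=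
  ((torusChar m n).continuous.comp (P.continuous_flow_right t)).div
    (Complex.continuous_ofReal.comp (P.continuous_density.comp (P.continuous_flow_right t)))
    fun _ => Complex.ofReal_ne_zero.2 (P.density_pos _).ne'

lemma norm_weightedChar_le : ‖P.weightedChar m n t z‖ ≤ 2 := by
  have hpos := P.density_pos (P.flow t z)
  rw [weightedChar, norm_div, norm_torusChar, Complex.norm_of_nonneg hpos.le, div_le_iff₀ hpos]
  linarith [P.half_le_density (P.flow t z)]

lemma hasDerivAt_torusChar_flow_horizontal :
    HasDerivAt (fun h : ℝ => torusChar m n (P.flow t (z + torusProj (h • ((1 : ℝ), (0 : ℝ))))))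
      (((2 * Real.pi * m : ℝ) : ℂ) * Complex.I * torusChar m n (P.flow t z) -
        ((2 * Real.pi * P.freq m n : ℝ) : ℂ) * Complex.I *
          (P.clockDx t z * P.weightedChar m n t z)) 0 := by
  have hclock : HasDerivAt (fun h : ℝ => P.clockInv t (z + torusProj (h • ((1 : ℝ), (0 : ℝ)))))
      (-P.clockDx t z / P.density (P.flow t z)) 0 := by
    simpa only [Prod.smul_mk, smul_eq_mul, mul_one, mul_zero, clockDx] using
      P.hasDerivAt_clockInv_horizontal t z
  have hphase := (hclock.ofReal_comp.const_mul
    (((2 * Real.pi * P.freq m n : ℝ) : ℂ) * Complex.I)).cexp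
  have hprod := (hasDerivAt_torusChar m n (1, 0) z).mul hphase
  have hdens : (P.density (P.flow t z) : ℂ) ≠ 0 := Complex.ofReal_ne_zero.2 (P.density_pos _).ne'
  simp only [torusChar_flow, weightedChar]
  refine hprod.congr_deriv ?_
  simp only [zero_smul, torusProj_zero, add_zero, mul_one, mul_zero]
  push_cast
  field_simp
  ring

end HorizontalDerivative

section IntegrationByParts

variable (P : LiouvilleData)

lemma integral_clockDx_mul_weightedChar_mul (m n : ℤ) (t : ℝ) {Θ Θ' : Torus2 → ℂ}
    (hΘ : Continuous Θ) (hΘ' : Continuous Θ')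
    (hd : ∀ z, HasDerivAt (fun h : ℝ => Θ (z + torusProj (h • ((1 : ℝ), (0 : ℝ))))) (Θ' z) 0) :
    ((2 * Real.pi * P.freq m n : ℝ) : ℂ) * Complex.I *
        ∫ z, P.clockDx t z * P.weightedChar m n t z * Θ z =
      ∫ z, torusChar m n (P.flow t z) *
        (((2 * Real.pi * m : ℝ) : ℂ) * Complex.I * Θ z + Θ' z) := by
  have hchar := (torusChar m n).continuous.comp (P.continuous_flow_right t)
  have hclock := P.continuous_clockDx t
  have hweighted := P.continuous_weightedChar m n t
  simp only [Function.comp_def] at hchar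
  have hzero := integral_eq_zero_of_hasDerivAt (hchar.mul hΘ) (w := (1, 0))
    (f' := fun z => torusChar m n (P.flow t z) *
        (((2 * Real.pi * m : ℝ) : ℂ) * Complex.I * Θ z + Θ' z) -
      ((2 * Real.pi * P.freq m n : ℝ) : ℂ) * Complex.I *
        (P.clockDx t z * P.weightedChar m n t z * Θ z)) (by fun_prop) fun z => by
      refine ((P.hasDerivAt_torusChar_flow_horizontal m n t z).mul (hd z)).congr_deriv ?_
      simp only [zero_smul, torusProj_zero, add_zero]
      ring
  rw [integral_sub (integrable_of_continuous _ (by fun_prop))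
    (integrable_of_continuous _ (by fun_prop)), integral_const_mul, sub_eq_zero] at hzero
  exact hzero.symm

lemma abs_freq_mul_norm_integral_le (m n : ℤ) (t : ℝ) {Θ Θ' : Torus2 → ℂ} {C D : ℝ}
    (hΘ : Continuous Θ) (hΘ' : Continuous Θ')
    (hd : ∀ z, HasDerivAt (fun h : ℝ => Θ (z + torusProj (h • ((1 : ℝ), (0 : ℝ))))) (Θ' z) 0)
    (hC : ∀ z, ‖Θ z‖ ≤ C) (hD : ∀ z, ‖Θ' z‖ ≤ 2 * Real.pi * D) :
    |P.freq m n| * ‖∫ z, P.clockDx t z * P.weightedChar m n t z * Θ z‖ ≤ |(m : ℝ)| * C + D := by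
  have hbound : ∀ z, ‖torusChar m n (P.flow t z) *
      (((2 * Real.pi * m : ℝ) : ℂ) * Complex.I * Θ z + Θ' z)‖ ≤
      2 * Real.pi * (|(m : ℝ)| * C + D) := fun z => by
    rw [norm_mul, norm_torusChar, one_mul]
    refine (norm_add_le _ _).trans ?_
    rw [norm_mul, norm_mul, Complex.norm_I, mul_one, Complex.norm_real, Real.norm_eq_abs, abs_mul,
      abs_of_pos Real.two_pi_pos]
    linarith [hD z, mul_le_mul_of_nonneg_left (hC z)
      (mul_nonneg Real.two_pi_pos.le (abs_nonneg (m : ℝ)))]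
  have hint := norm_integral_le_of_norm_le_const (μ := (volume : Measure Torus2))
    (.of_forall hbound)
  rw [← P.integral_clockDx_mul_weightedChar_mul m n t hΘ hΘ' hd, probReal_univ, mul_one, norm_mul,
    norm_mul, Complex.norm_I, mul_one, Complex.norm_real, Real.norm_eq_abs, abs_mul,
    abs_of_pos Real.two_pi_pos, mul_assoc] at hint
  exact le_of_mul_le_mul_left hint Real.two_pi_pos

end IntegrationByParts

section TestFunction

variable (P : LiouvilleData) {κ : ℝ} (m n : ℤ) (j : ℕ) (z : Torus2)

/-- The character `torusChar m n` times the regularised inverse of the real part of the `j`-th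
resonant character. -/
def regTest (κ : ℝ) : ℂ := torusChar m n z * (regInv κ (P.χ j z).re : ℂ)

/-- The horizontal derivative of `regTest`. -/
def regTestDeriv (κ : ℝ) : ℂ :=
  ((2 * Real.pi * m : ℝ) : ℂ) * Complex.I * torusChar m n z * (regInv κ (P.χ j z).re : ℂ) +
    torusChar m n z * ((regInvDeriv κ (P.χ j z).re *
      (((2 * Real.pi * P.q j : ℝ) : ℂ) * Complex.I * P.χ j z).re : ℝ) : ℂ)

lemma continuous_regTest (hκ : 0 < κ) : Continuous fun z => P.regTest m n j z κ :=
  (torusChar m n).continuous.mul (Complex.continuous_ofReal.comp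
    ((continuous_regInv hκ).comp (Complex.continuous_re.comp (P.χ j).continuous)))

lemma continuous_regTestDeriv (hκ : 0 < κ) : Continuous fun z => P.regTestDeriv m n j z κ := by
  have hre := Complex.continuous_re.comp (P.χ j).continuous
  have hinv := (continuous_regInv hκ).comp hre
  have hinv' := (continuous_regInvDeriv hκ).comp hre
  simp only [Function.comp_def] at hinv hinv'
  unfold regTestDeriv
  fun_prop

lemma norm_regTest_le (hκ : 0 < κ) : ‖P.regTest m n j z κ‖ ≤ 1 / κ := by
  rw [regTest, norm_mul, norm_torusChar, one_mul, Complex.norm_real]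
  exact abs_regInv_le hκ _

lemma norm_regTestDeriv_le (hκ : 0 < κ) :
    ‖P.regTestDeriv m n j z κ‖ ≤ 2 * Real.pi * (|(m : ℝ)| / κ + P.q j / κ ^ 2) := by
  have hchar : ‖((2 * Real.pi * m : ℝ) : ℂ) * Complex.I * torusChar m n z *
      (regInv κ (P.χ j z).re : ℂ)‖ ≤ 2 * Real.pi * |(m : ℝ)| * (1 / κ) := by
    rw [norm_mul, norm_mul, norm_mul, norm_torusChar, Complex.norm_I, Complex.norm_real,
      Complex.norm_real, mul_one, mul_one, Real.norm_eq_abs, abs_mul, abs_of_pos Real.two_pi_pos]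
    exact mul_le_mul_of_nonneg_left (abs_regInv_le hκ _)
      (mul_nonneg Real.two_pi_pos.le (abs_nonneg _))
  have hres : |(((2 * Real.pi * P.q j : ℝ) : ℂ) * Complex.I * P.χ j z).re| ≤
      2 * Real.pi * P.q j := by
    refine (Complex.abs_re_le_norm _).trans_eq ?_
    rw [norm_mul, norm_mul, χ, norm_torusChar, Complex.norm_I, mul_one, mul_one,
      Complex.norm_of_nonneg (mul_nonneg Real.two_pi_pos.le (Nat.cast_nonneg _))]
  refine (norm_add_le _ _).trans ((add_le_add hchar ?_).trans_eq (by ring :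
    _ + 1 / κ ^ 2 * (2 * Real.pi * P.q j) = _))
  rw [norm_mul, norm_torusChar, one_mul, Complex.norm_real, Real.norm_eq_abs, abs_mul]
  exact mul_le_mul (abs_regInvDeriv_le hκ _) hres (abs_nonneg _) (by positivity)

lemma hasDerivAt_regTest (hκ : 0 < κ) :
    HasDerivAt (fun h : ℝ => P.regTest m n j (z + torusProj (h • ((1 : ℝ), (0 : ℝ)))) κ)
      (P.regTestDeriv m n j z κ) 0 := by
  have hre : HasDerivAt (fun h : ℝ => (P.χ j (z + torusProj (h • ((1 : ℝ), (0 : ℝ))))).re)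
      (((2 * Real.pi * P.q j : ℝ) : ℂ) * Complex.I * P.χ j z).re 0 := by
    have := Complex.reCLM.hasFDerivAt.comp_hasDerivAt (0 : ℝ)
      (hasDerivAt_torusChar (P.q j) (-(P.p j)) (1, 0) z)
    refine this.congr_deriv ?_
    simp [χ]
  have hinv : HasDerivAt (regInv κ) (regInvDeriv κ (P.χ j z).re)
      (P.χ j (z + torusProj ((0 : ℝ) • ((1 : ℝ), (0 : ℝ))))).re := by
    rw [zero_smul, torusProj_zero, add_zero]
    exact hasDerivAt_regInv hκ _
  have hcomp := HasDerivAt.comp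
    (h := fun h : ℝ => (P.χ j (z + torusProj (h • ((1 : ℝ), (0 : ℝ))))).re) (0 : ℝ) hinv hre
  refine ((hasDerivAt_torusChar m n (1, 0) z).mul hcomp.ofReal_comp).congr_deriv ?_
  simp only [regTestDeriv, Function.comp_apply, zero_smul, torusProj_zero, add_zero, mul_one,
    mul_zero]

end TestFunction

section Decorrelation

variable (P : LiouvilleData) {m n : ℤ}

lemma norm_integral_clockDx_mul_regTest_div_le (hmn : (m, n) ≠ 0) (m' n' : ℤ) {κ : ℝ}
    (hκ : 0 < κ) (t : ℝ) (j : ℕ) :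
    ‖∫ z, P.clockDx t z * P.weightedChar m n t z * P.regTest m' n' j z κ‖ /
        (2 * P.q j * P.amp j) ≤
      (|(m : ℝ)| / κ + |(m' : ℝ)| / κ + 1 / κ ^ 2) / |P.freq m n| / P.amp j := by
  have hamp := P.amp_pos j
  have hq := P.one_le_cast_q j
  have hfreq : 0 < |P.freq m n| := abs_pos.2 (P.freq_ne_zero hmn)
  have hparts := P.abs_freq_mul_norm_integral_le m n t (P.continuous_regTest m' n' j hκ)
    (P.continuous_regTestDeriv m' n' j hκ) (P.hasDerivAt_regTest m' n' j · hκ)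
    (P.norm_regTest_le m' n' j · hκ) (P.norm_regTestDeriv_le m' n' j · hκ)
  have hfactor : |(m : ℝ)| * (1 / κ) + (|(m' : ℝ)| / κ + P.q j / κ ^ 2) ≤
      2 * P.q j * (|(m : ℝ)| / κ + |(m' : ℝ)| / κ + 1 / κ ^ 2) := by
    have hm : 0 ≤ |(m : ℝ)| / κ := by positivity
    have hm' : 0 ≤ |(m' : ℝ)| / κ := by positivity
    have hκ2 : 0 ≤ 1 / κ ^ 2 := by positivity
    rw [mul_one_div, div_eq_mul_one_div (P.q j : ℝ)]
    nlinarith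
  rw [div_div, div_le_div_iff₀ (by positivity) (by positivity)]
  calc _ = |P.freq m n| * _ * P.amp j := by ring
    _ ≤ 2 * P.q j * (|(m : ℝ)| / κ + |(m' : ℝ)| / κ + 1 / κ ^ 2) * P.amp j :=
      mul_le_mul_of_nonneg_right (hparts.trans hfactor) hamp.le
    _ = _ := by ring

lemma norm_integral_weightedChar_mul_torusChar_le (hmn : (m, n) ≠ 0) (m' n' : ℤ) {κ : ℝ}
    (hκ : 0 < κ) (j : ℕ) :
    ‖∫ z, P.weightedChar m n (P.halfTurn j) z * torusChar m' n' z‖ ≤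
      2 * (circleDefect κ + 2 * Real.pi * P.halfTurnError j / κ) +
        (|(m : ℝ)| / κ + |(m' : ℝ)| / κ + 1 / κ ^ 2) / |P.freq m n| / P.amp j := by
  have hamp := P.amp_pos j
  have hq := P.cast_q_pos j
  have herror : 0 ≤ P.halfTurnError j :=
    add_nonneg (P.relError_nonneg j) (P.phaseError_nonneg j)
  have hdefect := P.integral_comp_χ j ((continuous_regDefect hκ).comp Complex.continuous_re)
  have hreg := norm_integral_le_of_regInv (μ := volume) hκ
    (ψ := fun z => P.weightedChar m n (P.halfTurn j) z * torusChar m' n' z)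
    (E := P.clockDx (P.halfTurn j)) (c := fun z => (P.χ j z).re) (B := 2 * P.q j * P.amp j)
    (M := 2) (η := 2 * Real.pi * P.halfTurnError j)
    ((P.continuous_weightedChar m n _).mul (torusChar m' n').continuous)
    (P.continuous_clockDx _) (Complex.continuous_re.comp (P.χ j).continuous) (by positivity)
    (fun z => by
      rw [norm_mul, norm_torusChar, mul_one]
      exact P.norm_weightedChar_le m n _ z)
    (by positivity)
    (fun z => (P.abs_ergodicInt_coeffDx_halfTurn_add_le j z).trans_eq (by ring))
  have hparts := P.norm_integral_clockDx_mul_regTest_div_le hmn m' n' hκ (P.halfTurn j) j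
  simp only [Function.comp_apply] at hdefect
  simp only [regTest, mul_assoc] at hparts
  rw [hdefect] at hreg
  simp only [mul_assoc] at hreg
  exact hreg.trans (add_le_add (le_of_eq (by rw [circleDefect, mul_assoc])) hparts)

/-- At the times `halfTurn j` the clock is sheared so strongly in the horizontal direction that the
flow decorrelates from every fixed character. -/
lemma tendsto_integral_weightedChar_mul_torusChar (hmn : (m, n) ≠ 0) (m' n' : ℤ) :
    Tendsto (fun j => ∫ z, P.weightedChar m n (P.halfTurn j) z * torusChar m' n' z) atTop
      (𝓝 0) := by
  rw [Metric.tendsto_nhds]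
  intro ε hε
  have hdefect : Tendsto (fun κ => 2 * circleDefect κ) (𝓝[>] 0) (𝓝 0) := by
    simpa using tendsto_circleDefect.const_mul 2
  obtain ⟨κ, hκε, hκ⟩ := ((hdefect.eventually_lt_const hε).and self_mem_nhdsWithin).exists
  have hbound : Tendsto (fun j =>
      2 * (circleDefect κ + 2 * Real.pi * P.halfTurnError j / κ) +
        (|(m : ℝ)| / κ + |(m' : ℝ)| / κ + 1 / κ ^ 2) / |P.freq m n| / P.amp j) atTop
      (𝓝 (2 * circleDefect κ)) := by
    have herror := ((P.tendsto_halfTurnError.const_mul (2 * Real.pi)).div_const κ)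
    simpa [amp] using ((herror.const_add (circleDefect κ)).const_mul 2).add
      (tendsto_const_nhds.div_atTop P.tendsto_amp)
  filter_upwards [hbound.eventually_lt_const hκε] with j hj
  rw [dist_zero_right]
  exact (P.norm_integral_weightedChar_mul_torusChar_le hmn m' n' hκ j).trans_lt hj

end Decorrelation

end LiouvilleData

section Centering

variable {X : Type*} [MeasurableSpace X] (μ : Measure X) [IsProbabilityMeasure μ]
  [TopologicalSpace X] [CompactSpace X] [SecondCountableTopologyEither X ℂ] [BorelSpace X]

/-- The map `f ↦ f - ∫ f` on continuous functions. -/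
def centering : C(X, ℂ) →L[ℂ] C(X, ℂ) :=
  .id ℂ _ - (innerSL ℂ (oneL2 μ) ∘L ContinuousMap.toLp 2 μ ℂ).smulRight 1

lemma centering_apply (f : C(X, ℂ)) (z : X) : centering μ f z = f z - ∫ x, f x ∂μ := by
  simp [centering, inner_oneL2_toLp]

lemma integral_centering (f : C(X, ℂ)) : ∫ z, centering μ f z ∂μ = 0 := by
  simp only [centering_apply]
  rw [integral_sub (integrable_of_continuous μ f.continuous) (integrable_const _),
    integral_const, probReal_univ, one_smul, sub_self]

lemma norm_centering_apply_le (f : C(X, ℂ)) (z : X) : ‖centering μ f z‖ ≤ 2 * ‖f‖ := by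
  have hint := norm_integral_le_of_norm_le_const (μ := μ) (.of_forall f.norm_coe_le_norm)
  rw [probReal_univ, mul_one] at hint
  rw [centering_apply, two_mul]
  exact (norm_sub_le _ _).trans (add_le_add (f.norm_coe_le_norm z) hint)

end Centering

lemma star_torusChar (m n : ℤ) (z : Torus2) : star (torusChar m n z) = torusChar (-m) (-n) z := by
  simp [torusChar]

namespace LiouvilleData

section WeakMixing

variable (P : LiouvilleData)

/-- The map `f ↦ ((f - ∫ f) / density) ∘ flow t` on continuous functions. -/
def weightedFlow (t : ℝ) : C(Torus2, ℂ) →L[ℂ] C(Torus2, ℂ) :=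
  ContinuousMap.compCLM ℂ ℂ ⟨P.flow t, P.continuous_flow_right t⟩ ∘L
    ContinuousLinearMap.mul ℂ C(Torus2, ℂ) ⟨fun z => (P.density z : ℂ)⁻¹,
      (Complex.continuous_ofReal.comp P.continuous_density).inv₀
        fun z => Complex.ofReal_ne_zero.2 (P.density_pos z).ne'⟩ ∘L centering volume

lemma weightedFlow_apply (t : ℝ) (f : C(Torus2, ℂ)) (z : Torus2) :
    P.weightedFlow t f z = centering volume f (P.flow t z) / P.density (P.flow t z) :=
  inv_mul_eq_div _ _

lemma norm_weightedFlow_le (t : ℝ) (f : C(Torus2, ℂ)) : ‖P.weightedFlow t f‖ ≤ 4 * ‖f‖ := by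
  refine (ContinuousMap.norm_le _ (by positivity)).2 fun z => ?_
  have hpos := P.density_pos (P.flow t z)
  rw [weightedFlow_apply, norm_div, Complex.norm_of_nonneg hpos.le, div_le_iff₀ hpos]
  nlinarith [norm_centering_apply_le volume f (P.flow t z), P.half_le_density (P.flow t z),
    norm_nonneg f]

lemma tendsto_integral_weightedFlow_torusChar_mul (m n m' n' : ℤ) :
    Tendsto (fun j => ∫ z, P.weightedFlow (P.halfTurn j) (torusChar m n) z * torusChar m' n' z)
      atTop (𝓝 0) := by
  by_cases hmn : (m, n) = 0
  · obtain ⟨rfl, rfl⟩ := Prod.mk.inj hmn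
    simp [weightedFlow_apply, centering_apply, torusChar]
  · simpa only [weightedFlow_apply, centering_apply, integral_torusChar hmn, sub_zero,
      weightedChar] using
      P.tendsto_integral_weightedChar_mul_torusChar hmn m' n'

lemma tendsto_integral_weightedFlow_mul (f g : C(Torus2, ℂ)) :
    Tendsto (fun j => ∫ z, P.weightedFlow (P.halfTurn j) f z * g z) atTop (𝓝 0) := by
  let ι : C(Torus2, ℂ) →L[ℂ] Lp ℂ 2 (volume : Measure Torus2) := ContinuousMap.toLp 2 volume ℂ
  have hspan := closure_span_range_torusChar_eq_top
  have hspan' := closure_span_toLp_eq_top (μ := (volume : Measure Torus2)) hspan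
  have hlim := tendsto_inner_zero_of_closure_span_eq_top
    (e := fun p : ℤ × ℤ => torusChar p.1 p.2) (e' := fun p : ℤ × ℤ => ι (torusChar p.1 p.2))
    (A := fun j => ι ∘L P.weightedFlow (P.halfTurn j)) (C := ‖ι‖ * 4) hspan hspan'
    (fun j x => ?_) (fun p p' => ?_) f (ι (star g))
  · simpa [ι, ContinuousMap.inner_toLp, ← integral_conj, mul_comm] using hlim.star
  · rw [mul_assoc]
    exact (ι.le_opNorm _).trans
      (mul_le_mul_of_nonneg_left (P.norm_weightedFlow_le _ x) (norm_nonneg _))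
  · have hchar := (P.tendsto_integral_weightedFlow_torusChar_mul p.1 p.2 (-p'.1) (-p'.2)).star
    simpa [ι, ContinuousMap.inner_toLp, ← star_torusChar, ← integral_conj, mul_comm] using hchar

lemma integral_density_smul_comp_shearHomeo (f : Torus2 → ℂ) :
    ∫ z, P.density z • f (P.shearHomeo z) = ∫ z, f z := by
  rw [← integral_flowMeasure P fun z => f (P.shearHomeo z)]
  exact P.measurePreserving_shearHomeo.integral_comp' f

/-- The pullback of `f` by the shear, as a density. -/
def shearPullback (f : C(Torus2, ℂ)) : C(Torus2, ℂ) :=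
  ⟨fun z => P.density z • f (P.shearHomeo z),
    P.continuous_density.smul (f.continuous.comp P.shearHomeo.continuous)⟩

lemma weightedFlow_shearPullback_centering (t : ℝ) (f : C(Torus2, ℂ)) (z : Torus2) :
    P.weightedFlow t (P.shearPullback (centering volume f)) z =
      centering volume f (P.shearHomeo (P.flow t z)) := by
  have hzero : ∫ z, P.shearPullback (centering volume f) z = 0 :=
    (P.integral_density_smul_comp_shearHomeo _).trans (integral_centering volume f)
  rw [weightedFlow_apply, centering_apply, hzero, sub_zero, div_eq_iff
    (Complex.ofReal_ne_zero.2 (P.density_pos _).ne'), mul_comm]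
  exact Complex.real_smul

lemma weaklyMixing_conjFlow : WeaklyMixing (P.conjFlow 1) volume := by
  refine weaklyMixing_of_tendsto_integral (P.measurePreserving_conjFlow 1) (N := P.halfTurn)
    fun f g => ?_
  have hcont := P.continuous_conjFlow
  have hcorr : ∀ t, ∫ z, P.weightedFlow t (P.shearPullback (centering volume f)) z *
      P.shearPullback g z =
        (∫ z, f (P.conjFlow t z) * g z) - (∫ z, f z) * ∫ z, g z := fun t => by
    have hpull : ∀ z, P.weightedFlow t (P.shearPullback (centering volume f)) z *
        P.shearPullback g z = P.density z • (centering volume f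
          (P.conjFlow t (P.shearHomeo z)) * g (P.shearHomeo z)) := fun z => by
      rw [weightedFlow_shearPullback_centering, conjFlow, Homeomorph.symm_apply_apply,
        ← mul_smul_comm]
      rfl
    simp only [hpull]
    rw [P.integral_density_smul_comp_shearHomeo fun z =>
      centering volume f (P.conjFlow t z) * g z]
    simp only [centering_apply, sub_mul]
    rw [integral_sub
      (integrable_of_continuous _ (f := fun z => f (P.conjFlow t z) * g z) (by fun_prop))
      (integrable_of_continuous _ (f := fun z => _ * g z) (by fun_prop)), integral_const_mul]
  have hlim := P.tendsto_integral_weightedFlow_mul (P.shearPullback (centering volume f))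
    (P.shearPullback g)
  simp only [hcorr] at hlim
  simpa only [iterate_conjFlow_one] using tendsto_sub_nhds_zero_iff.1 hlim

end WeakMixing

end LiouvilleData

section BowenMetric

variable {X : Type*} [PseudoMetricSpace X] {T : X → X} {n : ℕ} {ε : ℝ}

lemma bowenDist_lt_iff (hε : 0 < ε) {x y : X} :
    bowenDist T n x y < ε ↔ ∀ i < n, dist (T^[i] x) (T^[i] y) < ε := by
  lift ε to ℝ≥0 using hε.le
  rw [bowenDist, NNReal.coe_lt_coe, Finset.sup_lt_iff (NNReal.coe_pos.1 hε)]
  simp only [Finset.mem_range, ← NNReal.coe_lt_coe, coe_nndist]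

lemma bowenCoverNum_le_card (F : Finset X) (hF : ∀ y, ∃ x ∈ F, bowenDist T n x y < ε) :
    bowenCoverNum T n ε ≤ F.card :=
  Nat.sInf_le ⟨F, rfl, hF⟩

end BowenMetric

lemma dist_torusProj_le (v w : ℝ × ℝ) : dist (torusProj v) (torusProj w) ≤ dist v w := by
  have hcoe (x y : ℝ) : dist (x : Torus1) (y : Torus1) ≤ dist x y := by
    rw [dist_eq_norm, ← AddCircle.coe_sub, dist_eq_norm]
    exact QuotientAddGroup.norm_mk_le_norm
  exact max_le_max (hcoe _ _) (hcoe _ _)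

lemma torusProj_add_horizontal (x s : ℝ) :
    torusProj (x + s, 0) = torusProj (x, 0) + torusProj (s, 0) := by
  rw [← torusProj_add, Prod.mk_add_mk, add_zero]

lemma exists_nat_lt_mul_abs_div_sub_le {L M : ℕ} (hM : 0 < M) {x : ℝ} (h0 : 0 ≤ x) (hL : x < L) :
    ∃ k < L * M, |(k : ℝ) / M - x| ≤ 1 / M := by
  have hM' : (0 : ℝ) < M := Nat.cast_pos.2 hM
  have hle : (⌊x * M⌋₊ : ℝ) ≤ x * M := Nat.floor_le (mul_nonneg h0 hM'.le)
  refine ⟨⌊x * M⌋₊, ?_, ?_⟩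
  · rw [Nat.floor_lt (mul_nonneg h0 hM'.le), Nat.cast_mul]
    exact mul_lt_mul_of_pos_right hL hM'
  · rw [div_sub' hM'.ne', abs_div, Nat.abs_cast, div_le_div_iff_of_pos_right hM', abs_le]
    constructor <;> linarith [Nat.lt_floor_add_one (x * M)]

namespace LiouvilleData

variable (P : LiouvilleData)

lemma abs_ergodicInt_coeffDx_le (n : ℕ) {u : ℝ} (hu : |u| ≤ 2 * n + 4) (z : Torus2) :
    |P.ergodicInt (P.coeffDx P.coeff) u z| ≤ 2 * Real.pi * P.stretch n := by
  calc |P.ergodicInt (P.coeffDx P.coeff) u z|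
      ≤ ∑' i, ‖P.coeffDx P.coeff i‖ * min (2 * (n : ℝ) + 4) (1 / P.δ i) :=
        abs_ergodicInt_le P.rapidDecay_coeff.coeffDx hu z
    _ = 2 * Real.pi * ∑' i, P.q i * P.a i * min (2 * (n : ℝ) + 4) (1 / P.δ i) := by
        simp only [norm_coeffDx, norm_coeff, ← tsum_mul_left, mul_assoc]
    _ ≤ 2 * Real.pi * P.stretch n :=
        mul_le_mul_of_nonneg_left (le_add_of_nonneg_left zero_le_one) Real.two_pi_pos.le

lemma hasDerivAt_clockInv_add_horizontal (t : ℝ) (z : Torus2) (s : ℝ) :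
    HasDerivAt (fun s : ℝ => P.clockInv t (z + torusProj (s, 0)))
      (-P.ergodicInt (P.coeffDx P.coeff) (P.clockInv t (z + torusProj (s, 0)))
        (z + torusProj (s, 0)) / P.density (P.flow t (z + torusProj (s, 0)))) s := by
  have h := HasDerivAt.comp_sub_const
    (f := fun s' => P.clockInv t (z + torusProj (s, 0) + torusProj (s', 0))) s s
    (by rw [sub_self]; exact P.hasDerivAt_clockInv_horizontal t (z + torusProj (s, 0)))
  simpa only [add_assoc z, ← torusProj_add_horizontal, add_sub_cancel] using h

lemma abs_clockInv_add_horizontal_sub_le (n : ℕ) {t : ℝ} (ht : |t| ≤ n + 2) (z : Torus2) (s : ℝ) :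
    |P.clockInv t (z + torusProj (s, 0)) - P.clockInv t z| ≤ 4 * Real.pi * P.stretch n * |s| := by
  have hbound (s : ℝ) : ‖-P.ergodicInt (P.coeffDx P.coeff) (P.clockInv t (z + torusProj (s, 0)))
      (z + torusProj (s, 0)) / P.density (P.flow t (z + torusProj (s, 0)))‖ ≤
      4 * Real.pi * P.stretch n := by
    have hS := P.abs_ergodicInt_coeffDx_le n
      ((P.abs_clockInv_le t (z + torusProj (s, 0))).trans (by linarith)) (z + torusProj (s, 0))
    rw [Real.norm_eq_abs, abs_div, abs_neg, abs_of_pos (P.density_pos _),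
      div_le_iff₀ (P.density_pos _)]
    nlinarith [P.half_le_density (P.flow t (z + torusProj (s, 0))), (abs_nonneg _).trans hS]
  have h := convex_univ.norm_image_sub_le_of_norm_hasDerivWithin_le
    (fun s _ => (P.hasDerivAt_clockInv_add_horizontal t z s).hasDerivWithinAt)
    (fun s _ => hbound s) (mem_univ 0) (mem_univ s)
  rwa [sub_zero, Prod.mk_zero_zero, torusProj_zero, add_zero] at h

lemma dist_flow_add_horizontal_le (t t' : ℝ) (z : Torus2) (s : ℝ) :
    dist (P.flow t' (z + torusProj (s, 0))) (P.flow t z) ≤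
      |s| + |P.clockInv t' (z + torusProj (s, 0)) - P.clockInv t z| := by
  rw [flow, flow, line, line, add_assoc, dist_add_left, ← torusProj_add]
  set u := P.clockInv t z
  set u' := P.clockInv t' (z + torusProj (s, 0))
  have hα : P.α * |u' - u| ≤ |u' - u| := mul_le_of_le_one_left (abs_nonneg _) P.α_le_one
  refine (dist_torusProj_le _ _).trans (max_le ?_ ?_)
  · calc |s + P.α * u' - P.α * u| = |s + P.α * (u' - u)| := by rw [mul_sub, add_sub_assoc]
      _ ≤ |s| + P.α * |u' - u| := by
        simpa only [abs_mul, abs_of_pos P.α_pos] using abs_add_le s (P.α * (u' - u))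
      _ ≤ |s| + |u' - u| := by gcongr
  · calc |0 + u' - u| = |u' - u| := by rw [zero_add]
      _ ≤ |s| + |u' - u| := le_add_of_nonneg_left (abs_nonneg s)

lemma dist_flow_le (n : ℕ) {t : ℝ} (ht : |t| ≤ n + 2) (t' x x' : ℝ) :
    dist (P.flow t' (torusProj (x', 0))) (P.flow t (torusProj (x, 0))) ≤
      14 * P.stretch n * |x' - x| + 2 * |t' - t| := by
  obtain ⟨s, rfl⟩ : ∃ s, x' = x + s := ⟨x' - x, (add_sub_cancel x x').symm⟩
  rw [add_sub_cancel_left, torusProj_add_horizontal]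
  set z := torusProj (x, 0)
  have htime := P.abs_clockInv_sub_le t' t (z + torusProj (s, 0))
  have hspace := P.abs_clockInv_add_horizontal_sub_le n ht z s
  have htri := abs_sub_le (P.clockInv t' (z + torusProj (s, 0)))
    (P.clockInv t (z + torusProj (s, 0))) (P.clockInv t z)
  have hconst : |s| + 4 * Real.pi * P.stretch n * |s| ≤ 14 * P.stretch n * |s| := by
    rw [← one_add_mul]
    exact mul_le_mul_of_nonneg_right (by nlinarith [P.one_le_stretch n, Real.pi_lt_d2])
      (abs_nonneg s)
  linarith [P.dist_flow_add_horizontal_le t t' z s]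

lemma abs_clock_le (u : ℝ) (z : Torus2) : |P.clock u z| ≤ 3 / 2 * |u| := by
  have h := convex_univ.norm_image_sub_le_of_norm_hasDerivWithin_le (C := 3 / 2)
    (fun u _ => (P.hasDerivAt_clock u z).hasDerivWithinAt)
    (fun u _ => (abs_of_pos (P.density_pos (z + P.line u))).trans_le (P.density_le _))
    (mem_univ 0) (mem_univ u)
  simpa only [clock_zero, sub_zero, Real.norm_eq_abs] using h

lemma exists_flow_torusProj_eq (z : Torus2) :
    ∃ s ∈ Icc (-2 : ℝ) 2, ∃ x ∈ Ico (0 : ℝ) 1, P.flow s (torusProj (x, 0)) = z := by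
  obtain ⟨⟨x, y⟩, rfl⟩ := isOpenQuotientMap_torusProj.surjective z
  set y' := Int.fract y with hy'
  set x' := Int.fract (x - P.α * y') with hx'
  refine ⟨P.clock y' (torusProj (x', 0)), abs_le.1 ((P.abs_clock_le _ _).trans ?_), x',
    ⟨Int.fract_nonneg _, Int.fract_lt_one _⟩, ?_⟩
  · rw [abs_of_nonneg (Int.fract_nonneg y)]
    linarith [Int.fract_lt_one y]
  · rw [flow_clock, line, ← torusProj_add, torusProj_eq_torusProj_iff]
    refine ⟨-⌊x - P.α * y'⌋, -⌊y⌋, Prod.ext ?_ ?_⟩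
    · simp only [hx', Int.fract, Prod.fst_add, Int.cast_neg]
      ring
    · simp [hy', Int.fract, sub_eq_add_neg]

lemma bowenCoverNum_conjFlow_le {ε η : ℝ} (hε : 0 < ε)
    (hη : ∀ ⦃z w⦄, dist z w < η → dist (P.shearHomeo z) (P.shearHomeo w) < ε) {n M R : ℕ}
    (hM : 0 < M) (hR : 0 < R) (h : 14 * P.stretch n * (1 / M) + 2 * (1 / R) < η) :
    bowenCoverNum (P.conjFlow 1) n ε ≤ M * (5 * R) := by
  classical
  let center (k : ℕ × ℕ) : Torus2 :=
    P.shearHomeo (P.flow (k.2 / R - 2) (torusProj (k.1 / M, 0)))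
  let F := (Finset.range M ×ˢ Finset.range (5 * R)).image center
  have hcard : F.card ≤ M * (5 * R) := Finset.card_image_le.trans (by simp)
  refine (bowenCoverNum_le_card F fun y => ?_).trans hcard
  obtain ⟨s, hs, x, hx, hflow⟩ := P.exists_flow_torusProj_eq (P.shearHomeo.symm y)
  obtain ⟨k, hk, hkx⟩ := exists_nat_lt_mul_abs_div_sub_le hM (L := 1) hx.1
    (by simpa only [Nat.cast_one] using hx.2)
  obtain ⟨l, hl, hls⟩ := exists_nat_lt_mul_abs_div_sub_le hR (L := 5) (x := s + 2)
    (by linarith [hs.1]) (by norm_num; linarith [hs.2])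
  refine ⟨center (k, l), Finset.mem_image_of_mem center (Finset.mem_product.2
    ⟨Finset.mem_range.2 (by rwa [one_mul] at hk), Finset.mem_range.2 hl⟩), ?_⟩
  refine (bowenDist_lt_iff hε).2 fun i hi => ?_
  rw [iterate_conjFlow_one, conjFlow, conjFlow, Homeomorph.symm_apply_apply, ← hflow, ← flow_add,
    ← flow_add]
  have hin : (i : ℝ) ≤ n := Nat.cast_le.2 hi.le
  have hsi : |s + i| ≤ n + 2 := by
    rw [abs_le]
    constructor <;> linarith [hs.1, hs.2, Nat.cast_nonneg (α := ℝ) i]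
  refine hη ((P.dist_flow_le n hsi _ _ _).trans_lt (lt_of_le_of_lt ?_ h))
  rw [add_sub_add_right_eq_sub, sub_sub, add_comm 2 s]
  have := P.one_le_stretch n
  gcongr

lemma exists_bowenCoverNum_conjFlow_le {ε : ℝ} (hε : 0 < ε) :
    ∃ C : ℝ, ∀ n, (bowenCoverNum (P.conjFlow 1) n ε : ℝ) ≤ C * P.stretch n := by
  obtain ⟨η, hη, hshear⟩ := Metric.uniformContinuous_iff.1
    (CompactSpace.uniformContinuous_of_continuous P.shearHomeo.continuous) ε hε
  obtain ⟨R, hR⟩ := exists_nat_gt (4 / η)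
  have hR0 : (0 : ℝ) < R := (by positivity : 0 < 4 / η).trans hR
  refine ⟨(28 / η + 1) * (5 * R), fun n => ?_⟩
  have hW := P.one_le_stretch n
  set M := ⌊28 * P.stretch n / η⌋₊ + 1
  have hM0 : (0 : ℝ) < M := Nat.cast_pos.2 (Nat.succ_pos _)
  have hM : 28 * P.stretch n / η < M := by
    simpa only [M, Nat.cast_succ] using Nat.lt_floor_add_one (28 * P.stretch n / η)
  have hM' : (M : ℝ) ≤ (28 / η + 1) * P.stretch n := by
    have hfloor := Nat.floor_le (show 0 ≤ 28 * P.stretch n / η by positivity)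
    rw [Nat.cast_succ, add_mul, div_mul_eq_mul_div, one_mul]
    exact add_le_add hfloor hW
  have hspace : 14 * P.stretch n * (1 / M) < η / 2 := by
    rw [div_lt_iff₀ hη] at hM
    rw [mul_one_div, div_lt_iff₀ hM0]
    linarith
  have htime : 2 * (1 / (R : ℝ)) < η / 2 := by
    rw [div_lt_iff₀ hη] at hR
    rw [mul_one_div, div_lt_iff₀ hR0]
    linarith
  calc (bowenCoverNum (P.conjFlow 1) n ε : ℝ) ≤ M * (5 * R) := by
        exact_mod_cast P.bowenCoverNum_conjFlow_le hε hshear (Nat.cast_pos.1 hM0)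
          (Nat.cast_pos.1 hR0) (by linarith)
    _ ≤ (28 / η + 1) * P.stretch n * (5 * R) := by gcongr
    _ = (28 / η + 1) * (5 * R) * P.stretch n := by ring

end LiouvilleData

section BowenCovering

variable {X : Type*} [PseudoMetricSpace X] {T : X → X} {ε : ℝ}

lemma exists_finset_card_eq_bowenCoverNum [CompactSpace X] (hT : Continuous T) (n : ℕ)
    (hε : 0 < ε) :
    ∃ F : Finset X, F.card = bowenCoverNum T n ε ∧ ∀ y, ∃ x ∈ F, bowenDist T n x y < ε := by
  have hnhds (x : X) : {y | bowenDist T n x y < ε} ∈ 𝓝 x := by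
    simp only [bowenDist_lt_iff hε]
    refine ((finite_lt_nat n).eventually_all (p := fun i y => _)).2 fun i _ => ?_
    have hi : Tendsto (fun y => dist (T^[i] x) (T^[i] y)) (𝓝 x) (𝓝 (dist (T^[i] x) (T^[i] x))) :=
      tendsto_const_nhds.dist ((hT.iterate i).tendsto x)
    exact hi.eventually_lt_const (by rwa [dist_self])
  obtain ⟨F, hF⟩ := CompactSpace.elim_nhds_subcover _ hnhds
  have hcover (y : X) : ∃ x ∈ F, bowenDist T n x y < ε := by
    simpa only [mem_iUnion, exists_prop, mem_ofPred_eq] using hF.ge (mem_univ y)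
  exact Nat.sInf_mem (s := {N : ℕ | ∃ F : Finset X, F.card = N ∧
    ∀ y : X, ∃ x ∈ F, bowenDist T n x y < ε}) ⟨F.card, F, rfl, hcover⟩

lemma card_le_bowenCoverNum_of_separated [CompactSpace X] (hT : Continuous T) {n : ℕ}
    (hε : 0 < ε) {ι : Type*} {s : Finset ι} {y : ι → X}
    (hy : ∀ k ∈ s, ∀ l ∈ s, (∀ i < n, dist (T^[i] (y k)) (T^[i] (y l)) < 2 * ε) → k = l) :
    s.card ≤ bowenCoverNum T n ε := by
  obtain ⟨F, hcard, hF⟩ := exists_finset_card_eq_bowenCoverNum hT n hε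
  choose center hmem hdist using hF
  rw [← hcard]
  refine Finset.card_le_card_of_injOn (fun k => center (y k)) (fun k _ => hmem _) ?_
  intro k hk l hl hkl
  refine hy k hk l hl fun i hi => ?_
  have hk' := (bowenDist_lt_iff hε).1 (hdist (y k)) i hi
  have hl' := (bowenDist_lt_iff hε).1 (hdist (y l)) i hi
  rw [← show center (y k) = center (y l) from hkl] at hl'
  linarith [dist_triangle_left (T^[i] (y k)) (T^[i] (y l)) (T^[i] (center (y k)))]

lemma topSlowEntFun_eq {a : ℕ → ℝ → ℝ} {E : ℝ} (hE : 0 < E)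
    (ha : ∀ t, ∀ᶠ n in atTop, 0 < a n t)
    (hlow : ∀ t, 0 < t → t < E → ∃ᶠ n in atTop, a n t ≤ bowenCoverNum T n ε)
    (hup : ∀ t, E < t → Tendsto (fun n => bowenCoverNum T n ε / a n t) atTop (𝓝 0)) :
    topSlowEntFun T a ε = E := by
  have hmem : ∀ t ∈ Ioo 0 E, t ∈ {t : ℝ | 0 < t ∧ 0 < atTop.limsup fun n =>
      (bowenCoverNum T n ε : ℝ≥0∞) / ENNReal.ofReal (a n t)} := by
    refine fun t ht => ⟨ht.1, one_pos.trans_le (le_limsup_of_frequently_le ?_)⟩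
    refine ((hlow t ht.1 ht.2).and_eventually (ha t)).mono fun n hn => ?_
    rw [ENNReal.le_div_iff_mul_le (Or.inl (ENNReal.ofReal_pos.2 hn.2).ne')
      (Or.inl ENNReal.ofReal_ne_top), one_mul, ← ENNReal.ofReal_natCast]
    exact ENNReal.ofReal_le_ofReal hn.1
  refine csSup_eq_of_forall_le_of_forall_lt_exists_gt ⟨E / 2, hmem _ ⟨by linarith, by linarith⟩⟩
    ?_ ?_
  · rintro t ⟨-, hlim⟩
    by_contra! ht
    refine hlim.ne' (Tendsto.limsup_eq ?_)
    have h := ENNReal.tendsto_ofReal (hup t ht)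
    rw [ENNReal.ofReal_zero] at h
    refine h.congr' ((ha t).mono fun n hn => ?_)
    rw [ENNReal.ofReal_div_of_pos hn, ENNReal.ofReal_natCast]
  · intro w hw
    obtain ⟨t, hwt, htE⟩ := exists_between (max_lt hw hE)
    exact ⟨t, hmem t ⟨(le_max_right w 0).trans_lt hwt, htE⟩, (le_max_left w 0).trans_lt hwt⟩

end BowenCovering

namespace LiouvilleData

variable (P : LiouvilleData)

lemma flow_horizontal_snd (t x : ℝ) :
    (P.flow t (torusProj (x, 0))).2 = (P.clockInv t (torusProj (x, 0)) : Torus1) := by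
  rw [flow, line, ← torusProj_add]
  simp only [torusProj, Prod.snd_add, zero_add]

lemma abs_clockInv_sub_lt_of_dist_flow_lt {η : ℝ}
    (hη : ∀ ⦃z w⦄, dist z w < η → dist (P.clockInv 1 z) (P.clockInv 1 w) < 1 / 8) {x x' : ℝ} {N : ℕ}
    (h : ∀ i ≤ N, dist (P.flow i (torusProj (x, 0))) (P.flow i (torusProj (x', 0))) <
      min η (1 / 8)) :
    |P.clockInv N (torusProj (x, 0)) - P.clockInv N (torusProj (x', 0))| < 1 / 8 := by
  set z := torusProj (x, 0)
  set z' := torusProj (x', 0)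
  induction N with
  | zero => simp only [Nat.cast_zero, clockInv_zero, sub_zero, abs_zero]; norm_num
  | succ N ih =>
    have hstep := hη ((h N N.le_succ).trans_le (min_le_left _ _))
    rw [Real.dist_eq] at hstep
    have hquarter : |P.clockInv (N + 1 : ℕ) z - P.clockInv (N + 1 : ℕ) z'| < 1 / 4 := by
      rw [Nat.cast_succ, clockInv_add, clockInv_add, add_sub_add_comm]
      linarith [abs_add_le (P.clockInv N z - P.clockInv N z')
        (P.clockInv 1 (P.flow N z) - P.clockInv 1 (P.flow N z')),
        ih fun i hi => h i (hi.trans N.le_succ)]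
    have hcircle := (le_max_right _ _).trans_lt ((h (N + 1) le_rfl).trans_le (min_le_right _ _))
    rw [P.flow_horizontal_snd, P.flow_horizontal_snd, dist_eq_norm, ← AddCircle.coe_sub,
      (AddCircle.norm_coe_eq_abs_iff 1 one_ne_zero).2 (by rw [abs_one]; linarith)] at hcircle
    exact hcircle

lemma exists_forall_abs_clockInv_sub_lt : ∃ ε > 0, ∀ (N : ℕ) (x x' : ℝ),
    (∀ i < N + 1, dist ((P.conjFlow 1)^[i] (P.shearHomeo (torusProj (x, 0))))
      ((P.conjFlow 1)^[i] (P.shearHomeo (torusProj (x', 0)))) < ε) →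
    |P.clockInv N (torusProj (x, 0)) - P.clockInv N (torusProj (x', 0))| < 1 / 8 := by
  obtain ⟨η, hη, hclock⟩ := Metric.uniformContinuous_iff.1
    (CompactSpace.uniformContinuous_of_continuous (P.continuous_clockInv_right 1)) (1 / 8)
    (by norm_num)
  obtain ⟨ε, hε, hshear⟩ := Metric.uniformContinuous_iff.1
    (CompactSpace.uniformContinuous_of_continuous P.shearHomeo.symm.continuous) (min η (1 / 8))
    (by positivity)
  refine ⟨ε, hε, fun N x x' h => P.abs_clockInv_sub_lt_of_dist_flow_lt hclock fun i hi => ?_⟩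
  simpa only [iterate_conjFlow_one, conjFlow, Homeomorph.symm_apply_apply] using
    hshear (h i (Nat.lt_succ_of_le hi))

-- The points of a horizontal circle whose `clockInv N` takes the values `f x, f x + 1, …` have
-- separated orbits.
lemma exists_forall_clockInv_sub_le_bowenCoverNum : ∃ ε₀ > 0, ∀ ε ∈ Ioc 0 ε₀,
    ∀ (N : ℕ) (x x' : ℝ), P.clockInv N (torusProj (x', 0)) - P.clockInv N (torusProj (x, 0)) ≤
      bowenCoverNum (P.conjFlow 1) (N + 1) ε := by
  obtain ⟨ε₀, hε₀, hsep⟩ := P.exists_forall_abs_clockInv_sub_lt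
  refine ⟨ε₀ / 2, half_pos hε₀, fun ε hε N x x' => ?_⟩
  set f : ℝ → ℝ := fun x => P.clockInv N (torusProj (x, 0))
  have hcont : Continuous f := (P.continuous_clockInv_right N).comp
    (isOpenQuotientMap_torusProj.continuous.comp (Continuous.prodMk_left 0))
  change f x' - f x ≤ _
  rcases lt_or_ge (f x' - f x) 0 with hneg | hnonneg
  · exact hneg.le.trans (Nat.cast_nonneg _)
  have hvalue : ∀ k ∈ Finset.range (⌊f x' - f x⌋₊ + 1), ∃ w, f w = f x + k := fun k hk => by
    have hk' := (Nat.le_floor_iff hnonneg).1 (Finset.mem_range_succ_iff.1 hk)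
    exact mem_range_of_exists_le_of_exists_ge hcont
      ⟨x, le_add_of_nonneg_right (Nat.cast_nonneg k)⟩ ⟨x', by linarith⟩
  choose! w hw using hvalue
  have hcard := card_le_bowenCoverNum_of_separated (P.continuous_conjFlow 1) (n := N + 1) hε.1
    (s := Finset.range (⌊f x' - f x⌋₊ + 1)) (y := fun k => P.shearHomeo (torusProj (w k, 0)))
    fun k hk l hl h => by
      have hlt : |f (w k) - f (w l)| < 1 / 8 :=
        hsep N (w k) (w l) fun i hi => (h i hi).trans_le (by linarith [hε.2])
      rw [hw k hk, hw l hl, add_sub_add_left_eq_sub] at hlt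
      have hone : |(k : ℝ) - l| < 1 := hlt.trans (by norm_num)
      have hint : |(k : ℤ) - l| < 1 := by exact_mod_cast hone
      exact Int.ofNat_inj.1 (sub_eq_zero.1 (Int.abs_lt_one_iff.1 hint))
  rw [Finset.card_range] at hcard
  exact (Nat.lt_floor_add_one _).le.trans (by exact_mod_cast hcard)

lemma χ_horizontal_im (j : ℕ) (s : ℝ) :
    (P.χ j (torusProj (s / P.q j, 0))).im = Real.sin (2 * Real.pi * s) := by
  have hq : (P.q j : ℝ) ≠ 0 := (P.cast_q_pos j).ne'
  rw [χ, torusChar_torusProj, Complex.exp_ofReal_mul_I_im, mul_zero, add_zero, Int.cast_natCast,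
    mul_div_cancel₀ s hq]

lemma eventually_amp_div_four_le_clockInv_sub : ∀ᶠ j in atTop,
    P.amp j / 4 ≤ P.clockInv (P.halfTurn j) (torusProj (1 / 4 / P.q j, 0)) -
      P.clockInv (P.halfTurn j) (torusProj (3 / 4 / P.q j, 0)) := by
  filter_upwards [P.tendsto_halfTurnError.eventually_lt_const
    (show (0 : ℝ) < 1 / 16 by norm_num)] with j hj
  have hcrest := abs_le.1 (P.abs_clockInv_halfTurn_sub_sub_le j (torusProj (1 / 4 / P.q j, 0)))
  have htrough := abs_le.1 (P.abs_clockInv_halfTurn_sub_sub_le j (torusProj (3 / 4 / P.q j, 0)))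
  rw [χ_horizontal_im, show 2 * Real.pi * (1 / 4) = Real.pi / 2 by ring,
    Real.sin_pi_div_two] at hcrest
  rw [χ_horizontal_im, show 2 * Real.pi * (3 / 4) = Real.pi / 2 + Real.pi by ring,
    Real.sin_add_pi, Real.sin_pi_div_two] at htrough
  have hpi : P.amp j / 4 ≤ P.amp j / Real.pi :=
    div_le_div_of_nonneg_left (P.amp_pos j).le Real.pi_pos Real.pi_le_four
  have herr := mul_le_mul_of_nonneg_left hj.le (P.amp_pos j).le
  linarith [hcrest.1, htrough.2]

lemma tendsto_halfTurn : Tendsto P.halfTurn atTop atTop := by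
  refine tendsto_nat_floor_atTop.comp ?_
  have h : Tendsto (fun j => 2 * P.δ j) atTop (𝓝[>] 0) := tendsto_nhdsWithin_iff.2
    ⟨by simpa only [mul_zero] using P.tendsto_δ.const_mul 2,
      Eventually.of_forall fun j => mul_pos two_pos (P.δ_pos j)⟩
  simpa only [one_div, Pi.inv_def] using h.inv_tendsto_nhdsGT_zero

lemma hasUpperTopSlowEntropy_conjFlow {a : ℕ → ℝ → ℝ} {G : ℕ → ℝ}
    (ha : ∀ m ≠ 0, ∀ t, a m t = Real.exp (t * G m))
    (hup : ∀ t > 1, Tendsto (fun n : ℕ => P.stretch n / Real.exp (t * G n)) atTop (𝓝 0))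
    (hlow : ∀ t, 0 < t → t < 1 →
      ∀ᶠ j in atTop, Real.exp (t * G (P.halfTurn j + 1)) ≤ P.amp j / 4) :
    HasUpperTopSlowEntropy (P.conjFlow 1) a 1 := by
  obtain ⟨ε₀, hε₀, hge⟩ := P.exists_forall_clockInv_sub_le_bowenCoverNum
  refine tendsto_const_nhds.congr' ?_
  filter_upwards [Ioc_mem_nhdsGT hε₀] with ε hε
  obtain ⟨C, hle⟩ := P.exists_bowenCoverNum_conjFlow_le hε.1
  have ha' (t : ℝ) : ∀ᶠ n in atTop, a n t = Real.exp (t * G n) :=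
    (eventually_ne_atTop 0).mono fun n hn => ha n hn t
  refine (topSlowEntFun_eq one_pos (fun t => ?_) (fun t ht ht1 => ?_) fun t ht => ?_).symm
  · exact (ha' t).mono fun n hn => hn ▸ Real.exp_pos _
  · refine ((tendsto_add_atTop_nat 1).comp P.tendsto_halfTurn).frequently
      (Eventually.frequently ?_)
    filter_upwards [hlow t ht ht1, P.eventually_amp_div_four_le_clockInv_sub] with j hexp hosc
    exact (ha _ (Nat.succ_ne_zero _) t).trans_le <| (hexp.trans hosc).trans (hge ε hε _ _ _)
  · refine squeeze_zero' ?_ ?_ (by simpa only [mul_zero] using (hup t ht).const_mul C)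
    · filter_upwards [ha' t] with n hn
      exact hn ▸ div_nonneg (Nat.cast_nonneg _) (Real.exp_pos _).le
    · filter_upwards [ha' t] with n hn
      rw [hn, ← mul_div_assoc]
      exact div_le_div_of_nonneg_right (hle n) (Real.exp_pos _).le

end LiouvilleData

end

theorem stmt0_general {r q₁ : ℕ} (hr : 3 ≤ r) (hq₁ : 2 ≤ q₁) :
    ∃ T : Torus2 → Torus2,
      IsCkTorusDiffeo ⊤ T ∧
      MeasurePreserving T (volume : Measure Torus2) volume ∧
      WeaklyMixing T (volume : Measure Torus2) ∧
      HasUpperTopSlowEntropy T (intScale2 r q₁) 1 := by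
  obtain ⟨n₀, hG⟩ := exists_isIntermediateRate_intermediateRate hr hq₁
  obtain ⟨P, hupper, hlower⟩ := hG.exists_liouvilleData
  exact ⟨P.conjFlow 1, P.isCkTorusDiffeo_conjFlow 1, P.measurePreserving_conjFlow 1,
    P.weaklyMixing_conjFlow,
    P.hasUpperTopSlowEntropy_conjFlow (fun _ => intScale2_eq_exp r q₁) hupper hlower⟩

/-- There exist an integer `q₁ ≥ 2` and a weakly mixing `C^∞`
volume-preserving diffeomorphism `T` of `𝕋²` whose upper topological slow entropy with
respect to the intermediate scaling family `a^{int2,8}` (with base `q₁`) equals `1`. -/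
theorem stmt0 :
    ∃ q₁ : ℕ, 2 ≤ q₁ ∧ ∃ T : Torus2 → Torus2,
      IsCkTorusDiffeo ⊤ T ∧
      MeasurePreserving T (volume : Measure Torus2) volume ∧
      WeaklyMixing T (volume : Measure Torus2) ∧
      HasUpperTopSlowEntropy T (intScale2 8 q₁) 1 :=
  ⟨2, le_rfl, stmt0_general (by norm_num) le_rfl⟩
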